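/- Let k ≥ 3 and 1 ≤ j ≤ k−1 be integers and suppose ε = ε(n) satisfies n^{−1/3} ≪ ε ≪ 1 (i.e. ε·n^{1/3} → ∞ and ε → 0). Let p* = (1+ε)/((C(k,j)−1)·C(n,k−j)). Then with high probability H^k(n,p*) has a j-component containing a subset S of j-sets such that every (j−1)-element vertex set is contained in (1 ± o(1))·ε³·n of the j-sets of S. -/

import Mathlib

open Filter Asymptotics

open scoped Classical

noncomputable section

/-- The collection of all `k`-element subsets of the vertex set `Fin n`,
    i.e. all potential edges of a `k`-uniform hypergraph on `n` vertices. -/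
def kSets (n k : ℕ) : Finset (Finset (Fin n)) :=
  Finset.powersetCard k (Finset.univ : Finset (Fin n))

/-- The probability that the binomial random `k`-uniform hypergraph `H^k(n,p)`
    (each `k`-set an edge independently with probability `p`) has property `Q`. -/
def binomProb (n k : ℕ) (p : ℝ) (Q : Finset (Finset (Fin n)) → Prop) : ℝ :=
  ∑ H ∈ (kSets n k).powerset,
    (if Q H then p ^ H.card * (1 - p) ^ ((kSets n k).card - H.card) else 0)

/-- The expectation of a real-valued random variable `X` of `H^k(n,p)`. -/
def binomExp (n k : ℕ) (p : ℝ) (X : Finset (Finset (Fin n)) → ℝ) : ℝ :=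
  ∑ H ∈ (kSets n k).powerset,
    p ^ H.card * (1 - p) ^ ((kSets n k).card - H.card) * X H

/-- The degree of a vertex set `J` in the hypergraph with edge set `H`:
    the number of edges containing `J`. -/
def setDegree {n : ℕ} (H : Finset (Finset (Fin n))) (J : Finset (Fin n)) : ℕ :=
  (H.filter (fun e => J ⊆ e)).card

/-- `J` is isolated in `H`: it is contained in no edge. -/
def IsIsolatedSet {n : ℕ} (H : Finset (Finset (Fin n))) (J : Finset (Fin n)) : Prop :=
  ∀ e ∈ H, ¬ J ⊆ e

/-- Two sets `J1`, `J2` are `j`-connected in the hypergraph with edge set `H`: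
    there is a walk of edges from one to the other in which consecutive edges
    intersect in at least `j` vertices. -/
def JConn {n : ℕ} (j : ℕ) (H : Finset (Finset (Fin n))) (J1 J2 : Finset (Fin n)) : Prop :=
  ∃ e1 ∈ H, ∃ e2 ∈ H, J1 ⊆ e1 ∧ J2 ⊆ e2 ∧
    Relation.ReflTransGen (fun e f => e ∈ H ∧ f ∈ H ∧ j ≤ (e ∩ f).card) e1 e2

/-- The hypergraph with edge set `H` is `j`-connected:
    all `j`-sets lie in a single `j`-component, i.e. are pairwise `j`-connected. -/
def JConnectedHG (n j : ℕ) (H : Finset (Finset (Fin n))) : Prop :=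
  ∀ J1 J2 : Finset (Fin n), J1.card = j → J2.card = j → JConn j H J1 J2

/-- `C` is a `j`-component of `H`: a maximal nonempty set of pairwise `j`-connected `j`-sets. -/
def IsJComponent (n j : ℕ) (H : Finset (Finset (Fin n))) (C : Finset (Finset (Fin n))) : Prop :=
  C.Nonempty ∧ (∀ J ∈ C, J.card = j) ∧ (∀ J1 ∈ C, ∀ J2 ∈ C, JConn j H J1 J2) ∧
    ∀ J : Finset (Fin n), J.card = j → (∃ J' ∈ C, JConn j H J J') → J ∈ C

/-- `D_s`: the number of `j`-sets of degree exactly `s`. -/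
def numDegSets (n j s : ℕ) (H : Finset (Finset (Fin n))) : ℕ :=
  ((Finset.powersetCard j (Finset.univ : Finset (Fin n))).filter
    (fun J => setDegree H J = s)).card

/-- The Poisson probability mass function with mean `lam`. -/
def poissonPMF (lam : ℝ) (i : ℕ) : ℝ := Real.exp (-lam) * lam ^ i / (Nat.factorial i)

/-- Total variation distance between the distribution of `D_s` in `H^k(n,p)`
    and the Poisson distribution with mean `lam`. -/
def dTVpoisson (n k j s : ℕ) (p lam : ℝ) : ℝ :=
  (1 / 2) * ∑' i : ℕ, |binomProb n k p (fun H => numDegSets n j s H = i) - poissonPMF lam i|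

/-- The probability that the uniform random hypergraph `H^k(n,M)` (chosen uniformly among
    all `k`-uniform hypergraphs on `Fin n` with exactly `M` edges) has property `Q`. -/
def uniformProb (n k M : ℕ) (Q : Finset (Finset (Fin n)) → Prop) : ℝ :=
  (((Finset.powersetCard M (kSets n k)).filter Q).card : ℝ) /
    ((Finset.powersetCard M (kSets n k)).card : ℝ)



/-- indicator of a proposition -/
def ind (P : Prop) : ℝ := if P then 1 else 0

lemma ind_nonneg (P : Prop) : 0 ≤ ind P := by unfold ind; split_ifs <;> norm_num
lemma ind_le_one (P : Prop) : ind P ≤ 1 := by unfold ind; split_ifs <;> norm_num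
lemma ind_true {P : Prop} (h : P) : ind P = 1 := by simp [ind, h]
lemma ind_false {P : Prop} (h : ¬ P) : ind P = 0 := by simp [ind, h]
lemma ind_mono {P Q : Prop} (h : P → Q) : ind P ≤ ind Q := by
  by_cases hp : P
  · rw [ind_true hp, ind_true (h hp)]
  · rw [ind_false hp]; exact ind_nonneg _
lemma ind_not (P : Prop) : ind (¬ P) = 1 - ind P := by
  by_cases h : P <;> simp [ind, h]
lemma ind_le_of {P : Prop} {x : ℝ} (h0 : 0 ≤ x) (h : P → 1 ≤ x) : ind P ≤ x := by
  by_cases hp : P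
  · rw [ind_true hp]; exact h hp
  · rw [ind_false hp]; exact h0

/-- Expectation over a random subset of `U` with independent inclusion probabilities. -/
def Ex {α : Type*} [DecidableEq α] (U : Finset α) (π : α → ℝ) (f : Finset α → ℝ) : ℝ :=
  ∑ H ∈ U.powerset, (∏ e ∈ H, π e) * (∏ e ∈ U \ H, (1 - π e)) * f H

section ExLemmas
variable {α : Type*} {β : Type*} [DecidableEq α] [DecidableEq β]

lemma Ex_empty (π : α → ℝ) (f : Finset α → ℝ) : Ex ∅ π f = f ∅ := by
  simp [Ex]

lemma Ex_insert {a : α} {U : Finset α} (ha : a ∉ U) (π : α → ℝ) (f : Finset α → ℝ) :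
    Ex (insert a U) π f = π a * Ex U π (fun H => f (insert a H)) + (1 - π a) * Ex U π f := by
  unfold Ex
  rw [Finset.sum_powerset_insert ha, add_comm, Finset.mul_sum, Finset.mul_sum]
  congr 1
  · apply Finset.sum_congr rfl
    intro H hH
    have hH' := Finset.mem_powerset.1 hH
    have haH : a ∉ H := fun h => ha (hH' h)
    rw [Finset.prod_insert haH]
    have : insert a U \ insert a H = U \ H := by
      ext x; simp only [Finset.mem_sdiff, Finset.mem_insert]
      constructor
      · rintro ⟨h1 | h1, h2⟩
        · exact absurd (Or.inl h1) h2
        · exact ⟨h1, fun h => h2 (Or.inr h)⟩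
      · rintro ⟨h1, h2⟩
        refine ⟨Or.inr h1, ?_⟩
        rintro (h | h)
        · subst h; exact ha h1
        · exact h2 h
    rw [this]; ring
  · apply Finset.sum_congr rfl
    intro H hH
    have hH' := Finset.mem_powerset.1 hH
    have haH : a ∉ H := fun h => ha (hH' h)
    rw [Finset.insert_sdiff_of_notMem _ haH, Finset.prod_insert (by simp [ha])]
    ring

lemma Ex_congr {U : Finset α} {π : α → ℝ} {f g : Finset α → ℝ}
    (h : ∀ H, H ⊆ U → f H = g H) : Ex U π f = Ex U π g := by
  unfold Ex
  exact Finset.sum_congr rfl fun H hH => by rw [h H (Finset.mem_powerset.1 hH)]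

lemma Ex_congr_pi {U : Finset α} {π π' : α → ℝ} {f : Finset α → ℝ}
    (h : ∀ e ∈ U, π e = π' e) : Ex U π f = Ex U π' f := by
  unfold Ex
  refine Finset.sum_congr rfl fun H hH => ?_
  have hH' := Finset.mem_powerset.1 hH
  have h1 : ∏ e ∈ H, π e = ∏ e ∈ H, π' e := Finset.prod_congr rfl fun e he => h e (hH' he)
  have h2 : ∏ e ∈ U \ H, (1 - π e) = ∏ e ∈ U \ H, (1 - π' e) :=
    Finset.prod_congr rfl fun e he => by rw [h e (Finset.mem_sdiff.1 he).1]
  rw [h1, h2]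

lemma Ex_mono {U : Finset α} {π : α → ℝ} {f g : Finset α → ℝ}
    (hπ : ∀ e ∈ U, 0 ≤ π e ∧ π e ≤ 1)
    (h : ∀ H, H ⊆ U → f H ≤ g H) : Ex U π f ≤ Ex U π g := by
  unfold Ex
  refine Finset.sum_le_sum fun H hH => ?_
  have hH' := Finset.mem_powerset.1 hH
  apply mul_le_mul_of_nonneg_left (h H hH')
  apply mul_nonneg
  · exact Finset.prod_nonneg fun e he => (hπ e (hH' he)).1
  · exact Finset.prod_nonneg fun e he => by linarith [(hπ e (Finset.mem_sdiff.1 he).1).2]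

lemma Ex_const (U : Finset α) (π : α → ℝ) (c : ℝ) : Ex U π (fun _ => c) = c := by
  induction U using Finset.induction_on with
  | empty => simp [Ex_empty]
  | insert a U ha ih => rw [Ex_insert ha, ih]; ring

lemma Ex_add (U : Finset α) (π : α → ℝ) (f g : Finset α → ℝ) :
    Ex U π (fun H => f H + g H) = Ex U π f + Ex U π g := by
  unfold Ex; rw [← Finset.sum_add_distrib]
  exact Finset.sum_congr rfl fun _ _ => by ring

lemma Ex_mul_left (U : Finset α) (π : α → ℝ) (c : ℝ) (f : Finset α → ℝ) :
    Ex U π (fun H => c * f H) = c * Ex U π f := by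
  unfold Ex; rw [Finset.mul_sum]
  exact Finset.sum_congr rfl fun _ _ => by ring

lemma Ex_sum {ι : Type*} (s : Finset ι) (U : Finset α) (π : α → ℝ) (f : ι → Finset α → ℝ) :
    Ex U π (fun H => ∑ i ∈ s, f i H) = ∑ i ∈ s, Ex U π (f i) := by
  unfold Ex; rw [Finset.sum_comm]
  exact Finset.sum_congr rfl fun _ _ => by rw [Finset.mul_sum]

lemma Ex_nonneg {U : Finset α} {π : α → ℝ} {f : Finset α → ℝ}
    (hπ : ∀ e ∈ U, 0 ≤ π e ∧ π e ≤ 1)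
    (h : ∀ H, H ⊆ U → 0 ≤ f H) : 0 ≤ Ex U π f := by
  have := Ex_mono (f := fun _ => 0) hπ h
  rwa [Ex_const] at this

lemma Ex_union {U W : Finset α} (hd : Disjoint U W) (π : α → ℝ) (f : Finset α → ℝ) :
    Ex (U ∪ W) π f = Ex U π (fun H => Ex W π (fun H' => f (H ∪ H'))) := by
  induction U using Finset.induction_on generalizing f with
  | empty => simp [Ex_empty]
  | insert a U ha ih =>
    rw [Finset.disjoint_insert_left] at hd
    rw [Finset.insert_union, Ex_insert (by simp [ha, hd.1]), Ex_insert ha, ih hd.2, ih hd.2]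
    simp only [Finset.insert_union]

/-- marginalisation -/
lemma Ex_inter {U W : Finset α} (hW : W ⊆ U) (π : α → ℝ) (f : Finset α → ℝ) :
    Ex U π (fun H => f (H ∩ W)) = Ex W π f := by
  have h : U = W ∪ (U \ W) := by rw [Finset.union_sdiff_of_subset hW]
  rw [h, Ex_union Finset.disjoint_sdiff]
  apply Ex_congr
  intro H hH
  rw [← Ex_const (U \ W) π (f H)]
  apply Ex_congr
  intro H' hH'
  congr 1
  ext x
  simp only [Finset.mem_inter, Finset.mem_union]
  constructor
  · rintro ⟨h1 | h1, h2⟩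
    · exact h1
    · exact absurd h2 (Finset.mem_sdiff.1 (hH' h1)).2
  · exact fun h => ⟨Or.inl h, hH h⟩

lemma Ex_update {U : Finset α} {e : α} (he : e ∈ U) (π : α → ℝ) (q : ℝ) (f : Finset α → ℝ) :
    Ex U (Function.update π e (1 - (1 - q) * (1 - π e))) f =
      q * Ex U π (fun H => f (insert e H)) + (1 - q) * Ex U π f := by
  obtain ⟨W, hW, rfl⟩ : ∃ W, e ∉ W ∧ U = insert e W :=
    ⟨U.erase e, by simp, (Finset.insert_erase he).symm⟩
  rw [Ex_insert hW, Ex_insert hW, Ex_insert hW]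
  have hc : ∀ g : Finset α → ℝ, Ex W (Function.update π e (1 - (1 - q) * (1 - π e))) g = Ex W π g := by
    intro g
    apply Ex_congr_pi
    intro x hx
    rw [Function.update_of_ne]
    rintro rfl; exact hW hx
  rw [hc, hc, Function.update_self]
  simp only [Finset.insert_idem]
  ring

lemma Ex_image (g : β → α) (T : Finset β) (U : Finset α) (hU : ∀ b ∈ T, g b ∈ U)
    (q : β → ℝ) (f : Finset α → ℝ) :
    Ex T q (fun H => f (H.image g)) =
      Ex U (fun e => 1 - ∏ b ∈ T.filter (fun b => g b = e), (1 - q b)) f := by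
  induction T using Finset.induction_on generalizing f with
  | empty =>
    simp only [Ex_empty, Finset.image_empty, Finset.filter_empty, Finset.prod_empty, sub_self]
    have : ∀ (U : Finset α), Ex U (fun _ => (0 : ℝ)) f = f ∅ := by
      intro U
      induction U using Finset.induction_on with
      | empty => simp [Ex_empty]
      | insert a U ha ih => rw [Ex_insert ha, ih]; ring
    rw [this]
  | insert b T hb ih =>
    have hU' : ∀ b ∈ T, g b ∈ U := fun x hx => hU x (Finset.mem_insert_of_mem hx)
    rw [Ex_insert hb]
    simp only [Finset.image_insert]
    rw [ih hU' (fun H => f (insert (g b) H)), ih hU' f,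
      ← Ex_update (hU b (Finset.mem_insert_self _ _))]
    apply Ex_congr_pi
    intro e he
    by_cases h : e = g b
    · subst h
      rw [Function.update_self, Finset.filter_insert, if_pos rfl, Finset.prod_insert (by simp [hb])]
      ring
    · rw [Function.update_of_ne h, Finset.filter_insert, if_neg (Ne.symm h)]

lemma Ex_split (U : Finset α) (π₁ π₂ : α → ℝ) (f : Finset α → ℝ) :
    Ex U π₁ (fun H => Ex U π₂ (fun H' => f (H ∪ H'))) =
      Ex U (fun e => 1 - (1 - π₁ e) * (1 - π₂ e)) f := by
  induction U using Finset.induction_on generalizing f with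
  | empty => simp [Ex_empty]
  | insert a U ha ih =>
    simp only [Ex_insert ha]
    have e1 : ∀ H : Finset α, ∀ H' : Finset α, insert a H ∪ insert a H' = insert a (H ∪ H') := by
      intro H H'; ext x; simp only [Finset.mem_union, Finset.mem_insert]; tauto
    have e2 : ∀ H : Finset α, ∀ H' : Finset α, H ∪ insert a H' = insert a (H ∪ H') := by
      intro H H'; ext x; simp only [Finset.mem_union, Finset.mem_insert]; tauto
    have e3 : ∀ H : Finset α, ∀ H' : Finset α, insert a H ∪ H' = insert a (H ∪ H') := by
      intro H H'; ext x; simp only [Finset.mem_union, Finset.mem_insert]; tauto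
    simp only [e1, e2, e3]
    simp only [Ex_add, Ex_mul_left]
    rw [ih f, ih (fun H => f (insert a H))]
    ring

lemma Ex_mono_pi {U : Finset α} {π π' : α → ℝ} {f : Finset α → ℝ}
    (hπ : ∀ e ∈ U, 0 ≤ π e ∧ π e ≤ π' e ∧ π' e ≤ 1)
    (hf : ∀ H H', H ⊆ H' → f H ≤ f H') : Ex U π f ≤ Ex U π' f := by
  induction U using Finset.induction_on generalizing f with
  | empty => simp [Ex_empty]
  | insert a U ha ih =>
    rw [Ex_insert ha, Ex_insert ha]
    have hU : ∀ e ∈ U, 0 ≤ π e ∧ π e ≤ π' e ∧ π' e ≤ 1 :=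
      fun e he => hπ e (Finset.mem_insert_of_mem he)
    obtain ⟨h0, h1, h2⟩ := hπ a (Finset.mem_insert_self _ _)
    have i1 := ih hU (f := fun H => f (insert a H))
      (fun H H' h => hf _ _ (Finset.insert_subset_insert _ h))
    have i2 := ih hU hf
    have i3 : Ex U π' f ≤ Ex U π' (fun H => f (insert a H)) :=
      Ex_mono (fun e he => ⟨(hU e he).1.trans (hU e he).2.1, (hU e he).2.2⟩)
        (fun H _ => hf _ _ (Finset.subset_insert _ _))
    nlinarith [mul_le_mul_of_nonneg_left i1 h0,
      mul_le_mul_of_nonneg_left i2 (by linarith : 0 ≤ 1 - π a),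
      mul_nonneg (sub_nonneg.2 h1) (sub_nonneg.2 i3)]

lemma Ex_prod (U : Finset α) (π : α → ℝ) (g : α → ℝ) :
    Ex U π (fun H => ∏ e ∈ H, g e) = ∏ e ∈ U, (1 - π e + π e * g e) := by
  induction U using Finset.induction_on with
  | empty => simp [Ex_empty]
  | insert a U ha ih =>
    rw [Ex_insert ha, Finset.prod_insert ha, ← ih]
    have : Ex U π (fun H => ∏ e ∈ insert a H, g e) = g a * Ex U π (fun H => ∏ e ∈ H, g e) := by
      rw [← Ex_mul_left]
      apply Ex_congr
      intro H hH
      rw [Finset.prod_insert (fun h => ha (hH h))]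
    rw [this]; ring

/-- moment generating function bound -/
lemma Ex_exp_le (U T : Finset α) (hT : T ⊆ U) (π : α → ℝ) (hπ : ∀ e ∈ U, 0 ≤ π e ∧ π e ≤ 1) (lam : ℝ) :
    Ex U π (fun H => Real.exp (lam * ((H ∩ T).card : ℝ))) ≤
      Real.exp ((Real.exp lam - 1) * ∑ e ∈ T, π e) := by
  rw [Ex_inter hT π (fun H => Real.exp (lam * (H.card : ℝ)))]
  have : Ex T π (fun H => Real.exp (lam * (H.card : ℝ))) = Ex T π (fun H => ∏ e ∈ H, Real.exp lam) := by
    apply Ex_congr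
    intro H _
    rw [Finset.prod_const, ← Real.exp_nat_mul, mul_comm]
  rw [this, Ex_prod, Finset.mul_sum, Real.exp_sum]
  apply Finset.prod_le_prod
  · intro e he
    have := hπ e (hT he)
    have := Real.exp_pos lam
    nlinarith
  · intro e he
    have := Real.add_one_le_exp ((Real.exp lam - 1) * π e)
    linarith

end ExLemmas

lemma binomProb_eq_Ex (n k : ℕ) (p : ℝ) (Q : Finset (Finset (Fin n)) → Prop) :
    binomProb n k p Q = Ex (kSets n k) (fun _ => p) (fun H => ind (Q H)) := by
  unfold binomProb Ex
  refine Finset.sum_congr rfl fun H hH => ?_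
  have hH' := Finset.mem_powerset.1 hH
  rw [Finset.prod_const, Finset.prod_const, Finset.card_sdiff_of_subset hH']
  by_cases h : Q H
  · simp [h, ind]
  · simp [h, ind]


section BeckFiala
variable {X ι : Type*} [Fintype X] [Fintype ι]

lemma bf_kernel (s : ι → Finset X) (j : ℕ)
    (hdeg : ∀ a, (Finset.univ.filter (fun i => a ∈ s i)).card ≤ j)
    (F : Finset X) (hF : F.Nonempty) :
    ∃ z : X → ℝ, (∀ a, a ∉ F → z a = 0) ∧ (∃ a ∈ F, z a ≠ 0) ∧
      ∀ i, j < (F ∩ s i).card → ∑ a ∈ s i, z a = 0 := by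
  set Act : Finset ι := Finset.univ.filter (fun i => j < (F ∩ s i).card) with hAct
  have hcard : Act.card < F.card := by
    have h1 : Act.card * (j + 1) ≤ ∑ i ∈ Act, (F ∩ s i).card := by
      rw [← smul_eq_mul]
      apply Finset.card_nsmul_le_sum
      intro i hi
      exact (Finset.mem_filter.1 hi).2
    have h2 : ∑ i ∈ Act, (F ∩ s i).card ≤ ∑ i, (F ∩ s i).card :=
      Finset.sum_le_sum_of_subset (Finset.subset_univ _)
    have h3 : ∑ i, (F ∩ s i).card = ∑ a ∈ F, (Finset.univ.filter (fun i => a ∈ s i)).card := by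
      have : ∀ i, (F ∩ s i).card = ∑ a ∈ F, if a ∈ s i then 1 else 0 := by
        intro i
        rw [← Finset.filter_mem_eq_inter, Finset.card_filter]
      simp_rw [this, Finset.card_filter]
      rw [Finset.sum_comm]
    have h4 : ∑ a ∈ F, (Finset.univ.filter (fun i => a ∈ s i)).card ≤ F.card * j := by
      rw [← smul_eq_mul]
      exact Finset.sum_le_card_nsmul _ _ _ (fun a _ => hdeg a)
    have h5 := hF.card_pos
    by_contra hcon
    push Not at hcon
    nlinarith
  let φ : (F → ℝ) →ₗ[ℝ] (Act → ℝ) :=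
    { toFun := fun z i => ∑ a : F, if (a : X) ∈ s i then z a else 0
      map_add' := by
        intro z w; ext i
        simp only [Pi.add_apply]
        rw [← Finset.sum_add_distrib]
        exact Finset.sum_congr rfl fun a _ => by split_ifs <;> simp
      map_smul' := by
        intro c z; ext i
        simp only [Pi.smul_apply, smul_eq_mul, RingHom.id_apply]
        rw [Finset.mul_sum]
        exact Finset.sum_congr rfl fun a _ => by split_ifs <;> simp }
  have hker : LinearMap.ker φ ≠ ⊥ := by
    apply LinearMap.ker_ne_bot_of_finrank_lt
    simpa using hcard
  obtain ⟨w, hw, hw0⟩ := (Submodule.ne_bot_iff _).1 hker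
  refine ⟨fun a => if h : a ∈ F then w ⟨a, h⟩ else 0, ?_, ?_, ?_⟩
  · intro a ha; simp [ha]
  · obtain ⟨a, ha⟩ := Function.ne_iff.1 hw0
    exact ⟨a, a.2, by simpa using ha⟩
  · intro i hi
    have hi' : i ∈ Act := by simp [hAct, hi]
    have := congrFun (LinearMap.mem_ker.1 hw) ⟨i, hi'⟩
    simp only [φ, LinearMap.coe_mk, AddHom.coe_mk, Pi.zero_apply] at this
    refine Eq.trans ?_ this
    have e : ∀ a : F, (if (a : X) ∈ s i then w a else 0) =
      (fun b : X => if b ∈ s i then (if h : b ∈ F then w ⟨b, h⟩ else 0) else 0) a := by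
      intro a; simp
    rw [Finset.sum_congr rfl (fun a _ => e a),
      Finset.sum_coe_sort F (fun b : X => if b ∈ s i then (if h : b ∈ F then w ⟨b, h⟩ else 0) else 0),
      ← Finset.sum_filter, ]
    symm
    apply Finset.sum_subset
    · intro a ha; exact (Finset.mem_filter.1 ha).2
    · intro a ha hna
      have : a ∉ F := fun h => hna (Finset.mem_filter.2 ⟨h, ha⟩)
      simp [this]

lemma bf_move (x z : X → ℝ) (F : Finset X) (hx : ∀ a, 0 ≤ x a ∧ x a ≤ 1)
    (hF : ∀ a, a ∈ F ↔ (x a ≠ 0 ∧ x a ≠ 1)) (hz : ∀ a, a ∉ F → z a = 0)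
    (hne : ∃ a ∈ F, z a ≠ 0) :
    ∃ t : ℝ, (∀ a, 0 ≤ x a + t * z a ∧ x a + t * z a ≤ 1) ∧
      ∃ a ∈ F, x a + t * z a = 0 ∨ x a + t * z a = 1 := by
  let τ : X → ℝ := fun a => if 0 < z a then (1 - x a) / z a else x a / (-z a)
  obtain ⟨a0, ha0, hza0⟩ := hne
  obtain ⟨b, hb, hmin⟩ := Finset.exists_min_image (F.filter (fun a => z a ≠ 0)) τ
    ⟨a0, Finset.mem_filter.2 ⟨ha0, hza0⟩⟩
  obtain ⟨hbF, hzb⟩ := Finset.mem_filter.1 hb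
  have hpos : ∀ a ∈ F, z a ≠ 0 → 0 < τ a := by
    intro a ha hza
    have h1 := (hF a).1 ha
    have h2 := hx a
    simp only [τ]
    split_ifs with h
    · exact div_pos (sub_pos.2 (lt_of_le_of_ne h2.2 h1.2)) h
    · exact div_pos (lt_of_le_of_ne h2.1 (Ne.symm h1.1))
        (neg_pos.2 (lt_of_le_of_ne (not_lt.1 h) hza))
  refine ⟨τ b, ?_, b, hbF, ?_⟩
  · intro a
    by_cases ha : a ∈ F.filter (fun a => z a ≠ 0)
    · have hm := hmin a ha
      obtain ⟨haF, hza⟩ := Finset.mem_filter.1 ha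
      have hp := hpos b hbF hzb
      have h2 := hx a
      by_cases h : 0 < z a
      · simp only [τ, if_pos h] at hm
        have : τ b * z a ≤ 1 - x a := (le_div_iff₀ h).1 hm
        constructor <;> nlinarith [mul_pos hp h]
      · have h' : 0 < - z a := neg_pos.2 (lt_of_le_of_ne (not_lt.1 h) hza)
        have hm' : τ b ≤ x a / (- z a) := by
          have : τ a = x a / (- z a) := by simp only [τ, if_neg h]
          rw [← this]; exact hm
        have : τ b * (- z a) ≤ x a := (le_div_iff₀ h').1 hm'
        constructor <;> nlinarith [mul_pos hp h']
    · have : z a = 0 := by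
        by_cases haF : a ∈ F
        · by_contra hza; exact ha (Finset.mem_filter.2 ⟨haF, hza⟩)
        · exact hz a haF
      rw [this]; simpa using hx a
  · by_cases h : 0 < z b
    · right
      have : τ b = (1 - x b) / z b := by simp only [τ, if_pos h]
      rw [this, div_mul_cancel₀ _ hzb]; ring
    · left
      have : τ b = x b / (- z b) := by simp only [τ, if_neg h]
      rw [this]; field_simp; ring

theorem beck_fiala (s : ι → Finset X) (j : ℕ)
    (hdeg : ∀ a, (Finset.univ.filter (fun i => a ∈ s i)).card ≤ j) (N : ℕ) :
    ∀ (x : X → ℝ), (∀ a, 0 ≤ x a ∧ x a ≤ 1) →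
      (Finset.univ.filter (fun a => x a ≠ 0 ∧ x a ≠ 1)).card ≤ N →
      ∃ y : X → ℝ, (∀ a, y a = 0 ∨ y a = 1) ∧ (∀ a, (x a = 0 ∨ x a = 1) → y a = x a) ∧
        ∀ i, |∑ a ∈ s i, (y a - x a)| ≤ j := by
  induction N with
  | zero =>
    intro x hx hN
    have h0 := Finset.card_eq_zero.1 (Nat.le_zero.1 hN)
    refine ⟨x, ?_, fun _ _ => rfl, ?_⟩
    · intro a
      by_contra h
      push Not at h
      have : a ∈ Finset.univ.filter (fun a => x a ≠ 0 ∧ x a ≠ 1) := by simp [h.1, h.2]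
      rw [h0] at this; simp at this
    · intro i; simp
  | succ N ih =>
    intro x hx hN
    set F := Finset.univ.filter (fun a => x a ≠ 0 ∧ x a ≠ 1) with hFdef
    by_cases hF : F.Nonempty
    swap
    · rw [Finset.not_nonempty_iff_eq_empty] at hF
      exact ih x hx (by rw [← hFdef, hF]; simp)
    obtain ⟨z, hz, hne, hsum⟩ := bf_kernel s j hdeg F hF
    have hFm : ∀ a, a ∈ F ↔ (x a ≠ 0 ∧ x a ≠ 1) := by intro a; simp [hFdef]
    obtain ⟨t, ht, b, hb, hbt⟩ := bf_move x z F hx hFm hz hne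
    set x' : X → ℝ := fun a => x a + t * z a with hx'
    have hint : ∀ a, (x a = 0 ∨ x a = 1) → x' a = x a := by
      intro a ha
      have : a ∉ F := by rw [hFm]; tauto
      simp [hx', hz a this]
    have hsub : Finset.univ.filter (fun a => x' a ≠ 0 ∧ x' a ≠ 1) ⊆ F.erase b := by
      intro a ha
      have ha' := (Finset.mem_filter.1 ha).2
      rw [Finset.mem_erase]
      constructor
      · rintro rfl; exact hbt.elim ha'.1 ha'.2
      · rw [hFm]
        constructor
        · intro h; have := hint a (Or.inl h); rw [h] at this; exact ha'.1 this
        · intro h; have := hint a (Or.inr h); rw [h] at this; exact ha'.2 this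
    have hc := Finset.card_le_card hsub
    rw [Finset.card_erase_of_mem hb] at hc
    obtain ⟨y, hy1, hy2, hy3⟩ := ih x' ht (by omega)
    have hyx : ∀ a, (x a = 0 ∨ x a = 1) → y a = x a := by
      intro a ha
      have h := hint a ha
      rw [← h]; apply hy2; rw [h]; exact ha
    refine ⟨y, hy1, hyx, ?_⟩
    intro i
    by_cases hi : j < (F ∩ s i).card
    · have := hsum i hi
      have e : ∑ a ∈ s i, (y a - x a) = ∑ a ∈ s i, (y a - x' a) := by
        have : ∑ a ∈ s i, (y a - x a) = ∑ a ∈ s i, (y a - x' a) + t * ∑ a ∈ s i, z a := by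
          rw [Finset.mul_sum, ← Finset.sum_add_distrib]
          exact Finset.sum_congr rfl fun a _ => by simp only [hx']; ring
        rw [this, hsum i hi]; ring
      rw [e]; exact hy3 i
    · push Not at hi
      have e : ∑ a ∈ s i, (y a - x a) = ∑ a ∈ F ∩ s i, (y a - x a) := by
        symm
        apply Finset.sum_subset Finset.inter_subset_right
        intro a ha hna
        have : a ∉ F := fun h => hna (Finset.mem_inter.2 ⟨h, ha⟩)
        rw [hFm] at this
        rw [hyx a (by tauto)]; ring
      rw [e]
      calc |∑ a ∈ F ∩ s i, (y a - x a)| ≤ ∑ a ∈ F ∩ s i, |y a - x a| := Finset.abs_sum_le_sum_abs _ _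
        _ ≤ ∑ a ∈ F ∩ s i, (1 : ℝ) := by
            apply Finset.sum_le_sum
            intro a _
            have := hx a
            rw [abs_le]
            rcases hy1 a with h | h <;> rw [h] <;> constructor <;> linarith
        _ ≤ j := by simp; exact_mod_cast hi

end BeckFiala


section Conn
variable {n : ℕ}

lemma JConn.mono {j : ℕ} {H H' : Finset (Finset (Fin n))} (hH : H ⊆ H') {J J' : Finset (Fin n)}
    (h : JConn j H J J') : JConn j H' J J' := by
  obtain ⟨e1, h1, e2, h2, h3, h4, h5⟩ := h
  refine ⟨e1, hH h1, e2, hH h2, h3, h4, ?_⟩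
  exact Relation.ReflTransGen.mono (fun a b hab => ⟨hH hab.1, hH hab.2.1, hab.2.2⟩) _ _ h5

lemma JConn.symm {j : ℕ} {H : Finset (Finset (Fin n))} {J J' : Finset (Fin n)}
    (h : JConn j H J J') : JConn j H J' J := by
  obtain ⟨e1, h1, e2, h2, h3, h4, h5⟩ := h
  refine ⟨e2, h2, e1, h1, h4, h3, ?_⟩
  clear h1 h2 h3 h4
  induction h5 with
  | refl => exact Relation.ReflTransGen.refl
  | tail hab hbc ih =>
    exact Relation.ReflTransGen.head ⟨hbc.2.1, hbc.1, by rw [Finset.inter_comm]; exact hbc.2.2⟩ ih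

lemma JConn.trans {j : ℕ} {H : Finset (Finset (Fin n))} {J J' J'' : Finset (Fin n)}
    (hJ' : J'.card = j) (h : JConn j H J J') (h' : JConn j H J' J'') : JConn j H J J'' := by
  obtain ⟨e1, h1, e2, h2, h3, h4, h5⟩ := h
  obtain ⟨f1, g1, f2, g2, g3, g4, g5⟩ := h'
  refine ⟨e1, h1, f2, g2, h3, g4, h5.trans (Relation.ReflTransGen.head ⟨h2, g1, ?_⟩ g5)⟩
  rw [← hJ']; exact Finset.card_le_card (Finset.subset_inter h4 g3)

lemma JConn.of_edge {j : ℕ} {H : Finset (Finset (Fin n))} {J J' K : Finset (Fin n)}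
    (hK : K ∈ H) (h : J ⊆ K) (h' : J' ⊆ K) : JConn j H J J' :=
  ⟨K, hK, K, hK, h, h', Relation.ReflTransGen.refl⟩

/-- all members of the family are pairwise connected -/
def PairConn (j : ℕ) (H D : Finset (Finset (Fin n))) : Prop :=
  (∀ J ∈ D, J.card = j) ∧ ∀ J ∈ D, ∀ J' ∈ D, JConn j H J J'

lemma PairConn.component {j : ℕ} {H D : Finset (Finset (Fin n))} (h : PairConn j H D)
    (hD : D.Nonempty) : ∃ Comp, IsJComponent n j H Comp ∧ D ⊆ Comp := by
  obtain ⟨J0, hJ0⟩ := hD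
  refine ⟨(Finset.powersetCard j Finset.univ).filter (fun J => JConn j H J J0), ⟨?_, ?_, ?_, ?_⟩, ?_⟩
  · exact ⟨J0, by simp [h.1 J0 hJ0, h.2 J0 hJ0 J0 hJ0]⟩
  · intro J hJ
    simp at hJ; exact hJ.1
  · intro J hJ J' hJ'
    simp at hJ hJ'
    exact hJ.2.trans (h.1 J0 hJ0) hJ'.2.symm
  · rintro J hJ ⟨J', hJ', hc⟩
    simp at hJ'
    simp only [Finset.mem_filter, Finset.mem_powersetCard_univ]
    exact ⟨hJ, hc.trans hJ'.1 hJ'.2⟩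
  · intro J hJ
    simp only [Finset.mem_filter, Finset.mem_powersetCard_univ]
    exact ⟨h.1 J hJ, h.2 J hJ J0 hJ0⟩

/-- the `j`-sets reached from `D` by one edge of `H` -/
def Rch (j : ℕ) (H D : Finset (Finset (Fin n))) : Finset (Finset (Fin n)) :=
  D ∪ (Finset.powersetCard j Finset.univ).filter
    (fun J' => ∃ K ∈ H, J' ⊆ K ∧ ∃ J ∈ D, J ⊆ K)

lemma PairConn.rch {j : ℕ} {H H' D : Finset (Finset (Fin n))} (h : PairConn j H D) :
    PairConn j (H ∪ H') (Rch j H' D) := by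
  have key : ∀ J ∈ Rch j H' D, J.card = j ∧ ∃ J' ∈ D, JConn j (H ∪ H') J J' := by
    intro J hJ
    rcases Finset.mem_union.1 hJ with hJ | hJ
    · exact ⟨h.1 J hJ, J, hJ, (h.2 J hJ J hJ).mono Finset.subset_union_left⟩
    · simp only [Finset.mem_filter, Finset.mem_powersetCard_univ] at hJ
      obtain ⟨h1, K, hK, h2, J', hJ', h3⟩ := hJ
      exact ⟨h1, J', hJ', JConn.of_edge (Finset.mem_union_right _ hK) h2 h3⟩
  refine ⟨fun J hJ => (key J hJ).1, fun J hJ J' hJ' => ?_⟩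
  obtain ⟨_, A, hA, hc⟩ := key J hJ
  obtain ⟨_, A', hA', hc'⟩ := key J' hJ'
  exact (hc.trans (h.1 A hA) ((h.2 A hA A' hA').mono Finset.subset_union_left)).trans (h.1 A' hA') hc'.symm

/-- degree of a set in a family -/
def dg (D : Finset (Finset (Fin n))) (I : Finset (Fin n)) : ℕ := (D.filter (fun J => I ⊆ J)).card

lemma dg_mono {D D' : Finset (Finset (Fin n))} (h : D ⊆ D') (I : Finset (Fin n)) : dg D I ≤ dg D' I :=
  Finset.card_le_card (Finset.filter_subset_filter _ h)

/-- smooth subfamily exists -/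
def Sm (j : ℕ) (m δ : ℝ) (N : Finset (Finset (Fin n))) : Prop :=
  ∃ S ⊆ N, ∀ L : Finset (Fin n), L.card = j - 1 → |(dg S L : ℝ) - m| ≤ δ * m

lemma Sm.mono {j : ℕ} {m δ : ℝ} {N N' : Finset (Finset (Fin n))} (h : Sm j m δ N) (hN : N ⊆ N') :
    Sm j m δ N' := by
  obtain ⟨S, hS, h⟩ := h
  exact ⟨S, hS.trans hN, h⟩

/-- The target event of the second phase. -/
def Tgt (j : ℕ) (m δ : ℝ) (D H : Finset (Finset (Fin n))) : Prop :=
  ∃ N, Sm j m δ N ∧ D ⊆ N ∧ ∀ H1, PairConn j H1 D → PairConn j (H1 ∪ H) N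

lemma Tgt.of_sm {j : ℕ} {m δ : ℝ} {D : Finset (Finset (Fin n))} (h : Sm j m δ D)
    (H : Finset (Finset (Fin n))) : Tgt j m δ D H :=
  ⟨D, h, Finset.Subset.refl _, fun _ hc =>
    ⟨hc.1, fun J hJ J' hJ' => (hc.2 J hJ J' hJ').mono Finset.subset_union_left⟩⟩

lemma Tgt.of_rch {j : ℕ} {m δ : ℝ} {D H H' : Finset (Finset (Fin n))}
    (h : Tgt j m δ (Rch j H D) H') : Tgt j m δ D (H ∪ H') := by
  obtain ⟨N, h1, h2, h3⟩ := h
  refine ⟨N, h1, Finset.subset_union_left.trans h2, fun H1 hc => ?_⟩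
  rw [← Finset.union_assoc]
  exact h3 _ hc.rch

end Conn

section Smooth
variable {n : ℕ}

/-- Beck–Fiala rounding of a family with almost regular degrees. -/
lemma sm_of_regular {j : ℕ} (hj : 1 ≤ j) {μ m δ' : ℝ} (N : Finset (Finset (Fin n)))
    (hN : ∀ J ∈ N, J.card = j) (hm : 0 < m) (hμ : m ≤ μ)
    (h : ∀ L : Finset (Fin n), L.card = j - 1 → |(dg N L : ℝ) - μ| ≤ δ' * μ) :
    Sm j m (δ' + j / m) N := by
  have hμ0 : 0 < μ := hm.trans_le hμ
  let ι := {L : Finset (Fin n) // L.card = j - 1}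
  let s : ι → Finset (Finset (Fin n)) := fun L => N.filter (fun J => L.1 ⊆ J)
  have hdeg : ∀ a, (Finset.univ.filter (fun i => a ∈ s i)).card ≤ j := by
    intro J
    by_cases hJ : J ∈ N
    · have : ((Finset.univ.filter (fun i => J ∈ s i)).image (fun i : ι => i.1)) ⊆ Finset.powersetCard (j-1) J := by
        intro L hL
        obtain ⟨i, hi, rfl⟩ := Finset.mem_image.1 hL
        have := (Finset.mem_filter.1 (Finset.mem_filter.1 hi).2).2
        exact Finset.mem_powersetCard.2 ⟨this, i.2⟩
      have h2 := Finset.card_le_card this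
      rw [Finset.card_image_of_injective _ Subtype.val_injective, Finset.card_powersetCard, hN J hJ] at h2
      have h3 : j.choose (j - 1) = j := by
        obtain ⟨m, rfl⟩ : ∃ m, j = m + 1 := ⟨j - 1, by omega⟩
        simp
      omega
    · have : (Finset.univ.filter (fun i => J ∈ s i)) = ∅ := by
        ext i; simp [s, hJ]
      rw [this]; simp
  let x : Finset (Fin n) → ℝ := fun J => if J ∈ N then m / μ else 0
  have hx : ∀ a, 0 ≤ x a ∧ x a ≤ 1 := by
    intro a
    simp only [x]
    split_ifs
    · exact ⟨by positivity, (div_le_one hμ0).2 hμ⟩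
    · norm_num
  obtain ⟨y, hy1, hy2, hy3⟩ := beck_fiala s j (by intro a; convert hdeg a) _ x hx le_rfl
  refine ⟨N.filter (fun J => y J = 1), Finset.filter_subset _ _, ?_⟩
  intro L hL
  have h1 := hy3 ⟨L, hL⟩
  have hsum : ∑ a ∈ s ⟨L, hL⟩, x a = dg N L * (m / μ) := by
    rw [Finset.sum_congr rfl (g := fun _ => m / μ)]
    · simp [s, dg]
    · intro a ha
      simp [x, (Finset.mem_filter.1 ha).1]
  have hsum2 : ∑ a ∈ s ⟨L, hL⟩, y a = dg (N.filter (fun J => y J = 1)) L := by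
    have e : ∀ a ∈ s ⟨L, hL⟩, y a = if y a = 1 then 1 else 0 := by
      intro a _
      rcases hy1 a with h | h <;> simp [h]
    rw [Finset.sum_congr rfl e, Finset.sum_boole]
    simp only [s, dg]
    congr 2
    ext a; simp only [Finset.mem_filter]; tauto
  rw [Finset.sum_sub_distrib, hsum, hsum2] at h1
  have h2 := h L hL
  have h3 : |(dg N L : ℝ) * (m / μ) - m| ≤ δ' * m := by
    have : (dg N L : ℝ) * (m / μ) - m = ((dg N L : ℝ) - μ) * (m / μ) := by field_simp
    rw [this, abs_mul, abs_of_pos (by positivity : 0 < m / μ)]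
    calc _ ≤ (δ' * μ) * (m / μ) := mul_le_mul_of_nonneg_right h2 (by positivity)
      _ = δ' * m := by field_simp
  have h4 : (δ' + j / m) * m = j + δ' * m := by field_simp; ring
  rw [h4]
  calc _ = |((dg (N.filter (fun J => y J = 1)) L : ℝ) - dg N L * (m / μ)) + (dg N L * (m / μ) - m)| := by ring_nf
    _ ≤ _ := (abs_add_le _ _).trans (add_le_add h1 h3)

end Smooth


section Counting
variable {n : ℕ}

lemma card_supersets {α : Type*} [DecidableEq α] (V X : Finset α) (k : ℕ) (hX : X ⊆ V) (hk : X.card ≤ k) :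
    ((Finset.powersetCard k V).filter (fun K => X ⊆ K)).card = (V.card - X.card).choose (k - X.card) := by
  rw [← Finset.card_sdiff_of_subset hX, ← Finset.card_powersetCard]
  symm
  apply Finset.card_bij (fun Y _ => X ∪ Y)
  · intro Y hY
    obtain ⟨h1, h2⟩ := Finset.mem_powersetCard.1 hY
    have hd : Disjoint X Y := by
      rw [Finset.disjoint_left]; intro a ha hb; exact (Finset.mem_sdiff.1 (h1 hb)).2 ha
    rw [Finset.mem_filter, Finset.mem_powersetCard]
    refine ⟨⟨Finset.union_subset hX (h1.trans Finset.sdiff_subset), ?_⟩, Finset.subset_union_left⟩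
    rw [Finset.card_union_of_disjoint hd]; omega
  · intro Y hY Z hZ h
    have key : ∀ Y ∈ Finset.powersetCard (k - X.card) (V \ X), (X ∪ Y) \ X = Y := by
      intro Y hY
      obtain ⟨h1, h2⟩ := Finset.mem_powersetCard.1 hY
      ext a
      simp only [Finset.mem_sdiff, Finset.mem_union]
      constructor
      · rintro ⟨h | h, h'⟩
        · exact absurd h h'
        · exact h
      · intro h; exact ⟨Or.inr h, (Finset.mem_sdiff.1 (h1 h)).2⟩
    rw [← key Y hY, ← key Z hZ, h]
  · intro K hK
    rw [Finset.mem_filter, Finset.mem_powersetCard] at hK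
    obtain ⟨⟨h1, h2⟩, h3⟩ := hK
    refine ⟨K \ X, ?_, Finset.union_sdiff_of_subset h3⟩
    rw [Finset.mem_powersetCard]
    exact ⟨Finset.sdiff_subset_sdiff h1 (Finset.Subset.refl _), by rw [Finset.card_sdiff_of_subset h3, h2]⟩

/-- number of `k`-sets containing a given set -/
lemma card_supersets_le (hn : 0 < n) (k : ℕ) (X : Finset (Fin n)) (T : Finset (Finset (Fin n)))
    (hT : ∀ K ∈ T, K.card = k ∧ X ⊆ K) :
    (T.card : ℝ) ≤ (n : ℝ) ^ k / (n : ℝ) ^ X.card := by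
  have hn' : (0 : ℝ) < n := by exact_mod_cast hn
  by_cases hk : X.card ≤ k
  · have h1 : T ⊆ (Finset.powersetCard k Finset.univ).filter (fun K => X ⊆ K) := by
      intro K hK
      have := hT K hK
      simp [this.1, this.2]
    have h2 := Finset.card_le_card h1
    rw [card_supersets _ _ _ (Finset.subset_univ _) hk, Finset.card_univ, Fintype.card_fin] at h2
    have h3 : (n - X.card).choose (k - X.card) ≤ n ^ (k - X.card) :=
      (Nat.choose_le_pow _ _).trans (Nat.pow_le_pow_left (Nat.sub_le _ _) _)
    rw [le_div_iff₀ (by positivity)]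
    calc (T.card : ℝ) * (n : ℝ) ^ X.card ≤ (n : ℝ) ^ (k - X.card) * (n : ℝ) ^ X.card := by
          apply mul_le_mul_of_nonneg_right _ (by positivity)
          exact_mod_cast h2.trans h3
      _ = (n : ℝ) ^ k := by rw [← pow_add]; congr 1; omega
  · have : T = ∅ := by
      apply Finset.eq_empty_of_forall_notMem
      intro K hK
      have := hT K hK
      exact hk (this.1 ▸ Finset.card_le_card this.2)
    rw [this]; simp; positivity

lemma choose_succ_ge (a b : ℕ) : a.choose b ≤ (a + 1).choose (b + 1) := by
  rw [Nat.choose_succ_succ]; omega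

lemma count_edges {k j : ℕ} (hjk : j + 1 ≤ k) (hkn : k ≤ n) (E : Finset (Finset (Fin n)))
    (I : Finset (Fin n)) (hE : ∀ J ∈ E, J.card = j ∧ (J ∪ I).card ≤ j + 1) :
    E.card * (n - j - 1).choose (k - j - 1) ≤
      ((kSets n k).filter (fun K => I ⊆ K ∧ ∃ J ∈ E, J ⊆ K)).card * k.choose j := by
  apply Finset.card_mul_le_card_mul (fun J K => J ⊆ K)
  · intro J hJ
    have hJc := hE J hJ
    have hlow : j ≤ (J ∪ I).card := hJc.1 ▸ Finset.card_le_card Finset.subset_union_left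
    have h1 : ((Finset.powersetCard k Finset.univ).filter (fun K => J ∪ I ⊆ K)) ⊆
        Finset.bipartiteAbove (fun J K => J ⊆ K)
          ((kSets n k).filter (fun K => I ⊆ K ∧ ∃ J ∈ E, J ⊆ K)) J := by
      intro K hK
      rw [Finset.mem_filter] at hK
      rw [Finset.bipartiteAbove, Finset.mem_filter, Finset.mem_filter]
      have hJK := Finset.subset_union_left.trans hK.2
      exact ⟨⟨hK.1, Finset.subset_union_right.trans hK.2, J, hJ, hJK⟩, hJK⟩
    refine le_trans ?_ (Finset.card_le_card h1)
    rw [card_supersets _ _ _ (Finset.subset_univ _) (by omega), Finset.card_univ, Fintype.card_fin]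
    rcases Nat.lt_or_ge j (J ∪ I).card with h | h
    · have : (J ∪ I).card = j + 1 := by omega
      rw [this, Nat.sub_sub, Nat.sub_sub]
    · have : (J ∪ I).card = j := by omega
      rw [this]
      have := choose_succ_ge (n - j - 1) (k - j - 1)
      have e1 : n - j - 1 + 1 = n - j := by omega
      have e2 : k - j - 1 + 1 = k - j := by omega
      rwa [e1, e2] at this
  · intro K hK
    have hKc : K.card = k := by
      have := (Finset.mem_filter.1 hK).1
      simpa [kSets] using this
    have : Finset.bipartiteBelow (fun J K => J ⊆ K) E K ⊆ Finset.powersetCard j K := by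
      intro J hJ
      rw [Finset.bipartiteBelow, Finset.mem_filter] at hJ
      exact Finset.mem_powersetCard.2 ⟨hJ.2, (hE J hJ.1).1⟩
    have h := Finset.card_le_card this
    rwa [Finset.card_powersetCard, hKc] at h

end Counting

section Round
variable {n : ℕ}

/-- the set of all `j`-sets -/
def jS (n j : ℕ) : Finset (Finset (Fin n)) := Finset.powersetCard j Finset.univ

lemma mem_jS {j : ℕ} {J : Finset (Fin n)} : J ∈ jS n j ↔ J.card = j := by simp [jS]

/-- edges in `U` linking `J'` to `D` -/
def Lk (U D : Finset (Finset (Fin n))) (J' : Finset (Fin n)) : Finset (Finset (Fin n)) :=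
  U.filter (fun K => J' ⊆ K ∧ ∃ J ∈ D, J ⊆ K)

/-- probability of reaching `J'` -/
def piR (U D : Finset (Finset (Fin n))) (p : ℝ) (J' : Finset (Fin n)) : ℝ :=
  1 - (1 - p) ^ (Lk U D J').card

lemma piR_mem {U D : Finset (Finset (Fin n))} {p : ℝ} (h0 : 0 ≤ p) (h1 : p ≤ 1) (J : Finset (Fin n)) :
    0 ≤ piR U D p J ∧ piR U D p J ≤ 1 := by
  unfold piR
  have := pow_le_one₀ (n := (Lk U D J).card) (by linarith : 0 ≤ 1 - p) (by linarith)
  have := pow_nonneg (by linarith : 0 ≤ 1 - p) (Lk U D J).card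
  constructor <;> linarith

lemma round_lemma {k j : ℕ} {U D : Finset (Finset (Fin n))} (hU : U ⊆ kSets n k) {p : ℝ}
    (h0 : 0 ≤ p) (h1 : p ≤ 1) (G : Finset (Finset (Fin n)) → Prop)
    (hG : ∀ N N', N ⊆ N' → G N → G N') :
    Ex U (fun _ => 1 - (1 - p) ^ (k.choose j)) (fun H => ind (¬ G (Rch j H D))) ≤
      Ex (jS n j) (piR U D p) (fun N => ind (¬ G (D ∪ N))) := by
  set T : Finset (Finset (Fin n) × Finset (Fin n)) :=
    (U ×ˢ jS n j).filter (fun b => b.2 ⊆ b.1) with hT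
  set TD := T.filter (fun b => ∃ J ∈ D, J ⊆ b.1) with hTD
  have e1 : Ex T (fun _ => p) (fun H => (fun H => ind (¬ G (Rch j H D))) (H.image Prod.fst)) =
      Ex U (fun _ => 1 - (1 - p) ^ (k.choose j)) (fun H => ind (¬ G (Rch j H D))) := by
    refine (Ex_image Prod.fst T U ?_ (fun _ => p) (fun H => ind (¬ G (Rch j H D)))).trans ?_
    rotate_left
    · apply Ex_congr_pi
      intro K hK
      rw [Finset.prod_const]
      congr 2
      have hKc : K.card = k := by simpa [kSets] using hU hK
      rw [← hKc, ← Finset.card_powersetCard]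
      symm
      apply Finset.card_bij (fun J _ => (K, J))
      · intro J hJ
        have := Finset.mem_powersetCard.1 hJ
        simp only [hT, Finset.mem_filter, Finset.mem_product, mem_jS, and_true]
        exact ⟨⟨hK, this.2⟩, this.1⟩
      · intro J _ J' _ h
        exact (Prod.mk.inj h).2
      · rintro ⟨a, b⟩ hb
        simp only [hT, Finset.mem_filter, Finset.mem_product, mem_jS] at hb
        obtain ⟨⟨⟨h1, h2⟩, h3⟩, rfl⟩ := hb
        exact ⟨b, Finset.mem_powersetCard.2 ⟨h3, h2⟩, rfl⟩
    · intro b hb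
      exact (Finset.mem_product.1 (Finset.mem_filter.1 hb).1).1
  have e2 : Ex TD (fun _ => p) (fun H => (fun N => ind (¬ G (D ∪ N))) (H.image Prod.snd)) =
      Ex (jS n j) (piR U D p) (fun N => ind (¬ G (D ∪ N))) := by
    refine (Ex_image Prod.snd TD (jS n j) ?_ (fun _ => p) (fun N => ind (¬ G (D ∪ N)))).trans ?_
    rotate_left
    · apply Ex_congr_pi
      intro J hJ
      rw [Finset.prod_const, piR]
      congr 2
      symm
      apply Finset.card_bij (fun K _ => (K, J))
      · intro K hK
        have := Finset.mem_filter.1 hK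
        simp only [hTD, hT, Finset.mem_filter, Finset.mem_product, and_true]
        exact ⟨⟨⟨this.1, hJ⟩, this.2.1⟩, this.2.2⟩
      · intro J _ J' _ h
        exact (Prod.mk.inj h).1
      · rintro ⟨a, b⟩ hb
        simp only [hTD, hT, Finset.mem_filter, Finset.mem_product] at hb
        obtain ⟨⟨⟨⟨h1, h2⟩, h3⟩, h4⟩, rfl⟩ := hb
        exact ⟨a, Finset.mem_filter.2 ⟨h1, h3, h4⟩, rfl⟩
    · intro b hb
      exact (Finset.mem_product.1 (Finset.mem_filter.1 (Finset.mem_filter.1 hb).1).1).2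
  rw [← e1, ← e2, ← Ex_inter (Finset.filter_subset _ _ : TD ⊆ T)]
  apply Ex_mono (fun _ _ => ⟨h0, h1⟩)
  intro H hH
  apply ind_mono
  apply mt
  apply hG
  intro J hJ
  rcases Finset.mem_union.1 hJ with hJ | hJ
  · exact Finset.mem_union_left _ hJ
  · obtain ⟨⟨K, J'⟩, hb, rfl⟩ := Finset.mem_image.1 hJ
    obtain ⟨hb1, hb2⟩ := Finset.mem_inter.1 hb
    simp only [hTD, hT, Finset.mem_filter, Finset.mem_product, mem_jS] at hb2
    apply Finset.mem_union_right
    rw [Finset.mem_filter, Finset.mem_powersetCard_univ]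
    exact ⟨hb2.1.1.2, K, Finset.mem_image.2 ⟨_, hb1, rfl⟩, hb2.1.2, hb2.2⟩

lemma one_sub_pow_ge {p Λ : ℝ} (h0 : 0 ≤ p) (h1 : p ≤ 1) (m : ℕ) (hm : p * m ≤ Λ) :
    p * m / (1 + Λ) ≤ 1 - (1 - p) ^ m := by
  have hu : 0 ≤ p * m := by positivity
  have h2 : (1 - p) ^ m ≤ Real.exp (-(p * m)) := by
    have : 1 - p ≤ Real.exp (-p) := by linarith [Real.add_one_le_exp (-p)]
    calc (1 - p) ^ m ≤ (Real.exp (-p)) ^ m := pow_le_pow_left₀ (by linarith) this m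
      _ = Real.exp (-(p * m)) := by rw [← Real.exp_nat_mul]; congr 1; ring
  have h3 : Real.exp (-(p * m)) ≤ 1 / (1 + p * m) := by
    rw [Real.exp_neg, one_div]
    apply inv_anti₀ (by linarith)
    linarith [Real.add_one_le_exp (p * m)]
  have h4 : p * m / (1 + Λ) ≤ p * m / (1 + p * m) :=
    div_le_div_of_nonneg_left hu (by linarith) (by linarith)
  have h5 : p * m / (1 + p * m) = 1 - 1 / (1 + p * m) := by field_simp; ring
  linarith

/-- Lower bound on the expected number of reached sets. -/
lemma sum_piR_ge {k j : ℕ} (hjk : j + 1 ≤ k) (hkn : k ≤ n) {U D E : Finset (Finset (Fin n))}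
    (hU : U ⊆ kSets n k) {p Λ γ : ℝ} (h0 : 0 ≤ p) (h1 : p ≤ 1)
    (hΛ : p * (n : ℝ) ^ (k - j) ≤ Λ)
    (hγ : γ ≤ p * n * ((n - j - 1).choose (k - j - 1) : ℝ))
    (hED : E ⊆ D) (I : Finset (Fin n)) (hI : I.card ≤ j)
    (hE : ∀ J ∈ E, J.card = j ∧ (J ∪ I).card ≤ j + 1)
    (hEU : ∀ K ∈ kSets n k, ∀ J ∈ E, I ⊆ K → J ⊆ K → K ∈ U) :
    γ / (k.choose j * (1 + Λ)) * (E.card / n) ≤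
      ∑ J ∈ (jS n j).filter (fun J => I ⊆ J), piR U D p J := by
  have hn : 0 < n := by omega
  have hn' : (0 : ℝ) < n := by exact_mod_cast hn
  have hc : (0 : ℝ) < k.choose j := by exact_mod_cast Nat.choose_pos (by omega)
  have hΛ0 : 0 ≤ Λ := le_trans (by positivity) hΛ
  have step1 : ∀ J ∈ (jS n j).filter (fun J => I ⊆ J), p / (1 + Λ) * ((Lk U D J).card : ℝ) ≤ piR U D p J := by
    intro J hJ
    have hJc : J.card = j := mem_jS.1 (Finset.mem_filter.1 hJ).1
    have : ((Lk U D J).card : ℝ) ≤ (n : ℝ) ^ (k - j) := by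
      have := card_supersets_le hn k J (Lk U D J) (by
        intro K hK
        have := Finset.mem_filter.1 hK
        exact ⟨by simpa [kSets] using hU this.1, this.2.1⟩)
      rw [pow_sub₀ _ hn'.ne' (by omega), ← div_eq_mul_inv]
      rw [hJc] at this
      exact this
    have h := one_sub_pow_ge h0 h1 (Lk U D J).card
      ((mul_le_mul_of_nonneg_left this h0).trans hΛ)
    unfold piR
    calc _ = p * ((Lk U D J).card : ℝ) / (1 + Λ) := by ring
      _ ≤ _ := h
  have step2 : ((kSets n k).filter (fun K => I ⊆ K ∧ ∃ J ∈ E, J ⊆ K)).card ≤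
      ∑ J ∈ (jS n j).filter (fun J => I ⊆ J), (Lk U D J).card := by
    have : ((kSets n k).filter (fun K => I ⊆ K ∧ ∃ J ∈ E, J ⊆ K)) ⊆
        ((jS n j).filter (fun J => I ⊆ J)).biUnion (fun J => Lk U D J) := by
      intro K hK
      obtain ⟨hK1, hK2, J, hJ, hJK⟩ := Finset.mem_filter.1 hK
      have hKc : K.card = k := by simpa [kSets] using hK1
      obtain ⟨J', h3, h4, h5⟩ := Finset.exists_subsuperset_card_eq hK2 hI (by omega : j ≤ K.card)
      rw [Finset.mem_biUnion]
      exact ⟨J', Finset.mem_filter.2 ⟨mem_jS.2 h5, h3⟩,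
        Finset.mem_filter.2 ⟨hEU K hK1 J hJ hK2 hJK, h4, J, hED hJ, hJK⟩⟩
    exact (Finset.card_le_card this).trans Finset.card_biUnion_le
  have step3 := count_edges hjk hkn E I hE
  set 𝒦 := ((kSets n k).filter (fun K => I ⊆ K ∧ ∃ J ∈ E, J ⊆ K)).card
  have step3' : (E.card : ℝ) * ((n - j - 1).choose (k - j - 1) : ℝ) ≤ (𝒦 : ℝ) * k.choose j := by
    exact_mod_cast step3
  have step2' : (𝒦 : ℝ) ≤ ∑ J ∈ (jS n j).filter (fun J => I ⊆ J), ((Lk U D J).card : ℝ) := by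
    exact_mod_cast step2
  calc γ / (k.choose j * (1 + Λ)) * (E.card / n)
      ≤ (p * n * ((n - j - 1).choose (k - j - 1) : ℝ)) / (k.choose j * (1 + Λ)) * (E.card / n) := by
        gcongr
    _ = p / (1 + Λ) * ((E.card : ℝ) * ((n - j - 1).choose (k - j - 1) : ℝ) / k.choose j) := by
        field_simp
    _ ≤ p / (1 + Λ) * (𝒦 : ℝ) := by
        apply mul_le_mul_of_nonneg_left _ (by positivity)
        rw [div_le_iff₀ hc]; exact step3'
    _ ≤ p / (1 + Λ) * ∑ J ∈ (jS n j).filter (fun J => I ⊆ J), ((Lk U D J).card : ℝ) :=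
        mul_le_mul_of_nonneg_left step2' (by positivity)
    _ ≤ _ := by
        rw [Finset.mul_sum]
        exact Finset.sum_le_sum step1

lemma chern_low {α : Type*} [DecidableEq α] (U T : Finset α) (hT : T ⊆ U) (π : α → ℝ)
    (hπ : ∀ e ∈ U, 0 ≤ π e ∧ π e ≤ 1) {x : ℝ} (hx : 2 * x ≤ ∑ e ∈ T, π e) :
    Ex U π (fun H => ind (¬ x ≤ ((H ∩ T).card : ℝ))) ≤ Real.exp (-(x / 5)) := by
  have he : Real.exp (-1) ≤ 0.4 := by
    have := Real.exp_one_gt_d9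
    rw [Real.exp_neg]
    rw [inv_le_comm₀ (Real.exp_pos _) (by norm_num)]
    norm_num; linarith
  have hs : 0 ≤ ∑ e ∈ T, π e := Finset.sum_nonneg fun e he => (hπ e (hT he)).1
  calc Ex U π (fun H => ind (¬ x ≤ ((H ∩ T).card : ℝ)))
      ≤ Ex U π (fun H => Real.exp x * Real.exp ((-1) * ((H ∩ T).card : ℝ))) := by
        apply Ex_mono hπ
        intro H _
        apply ind_le_of (by positivity)
        intro h
        rw [← Real.exp_add]
        apply Real.one_le_exp
        linarith
    _ ≤ Real.exp x * Real.exp ((Real.exp (-1) - 1) * ∑ e ∈ T, π e) := by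
        rw [Ex_mul_left]
        exact mul_le_mul_of_nonneg_left (Ex_exp_le U T hT π hπ (-1)) (by positivity)
    _ ≤ _ := by
        rw [← Real.exp_add, Real.exp_le_exp]
        nlinarith

end Round


section Phase2
variable {n : ℕ}

lemma ind_not_forall_le {ι : Type*} (s : Finset ι) (P : ι → Prop) :
    ind (¬ ∀ i ∈ s, P i) ≤ ∑ i ∈ s, ind (¬ P i) := by
  apply ind_le_of (Finset.sum_nonneg fun _ _ => ind_nonneg _)
  intro h
  push Not at h
  obtain ⟨i, hi, hP⟩ := h
  calc (1 : ℝ) = ind (¬ P i) := (ind_true hP).symm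
    _ ≤ _ := Finset.single_le_sum (f := fun i => ind (¬ P i)) (fun _ _ => ind_nonneg _) hi

lemma round_gen {k j : ℕ} {U D : Finset (Finset (Fin n))} (hU : U ⊆ kSets n k) {p x : ℝ}
    (h0 : 0 ≤ p) (h1 : p ≤ 1) (S : Finset (Finset (Fin n)))
    (T : Finset (Fin n) → Finset (Finset (Fin n))) (hT : ∀ I ∈ S, T I ⊆ jS n j)
    (hx : ∀ I ∈ S, 2 * x ≤ ∑ J ∈ T I, piR U D p J) :
    Ex U (fun _ => 1 - (1 - p) ^ (k.choose j))
      (fun H => ind (¬ ∀ I ∈ S, x ≤ ((Rch j H D ∩ T I).card : ℝ))) ≤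
      S.card * Real.exp (-(x / 5)) := by
  refine (round_lemma hU h0 h1 (fun N => ∀ I ∈ S, x ≤ ((N ∩ T I).card : ℝ)) ?_).trans ?_
  · intro N N' hN h I hI
    refine (h I hI).trans ?_
    exact_mod_cast Finset.card_le_card (Finset.inter_subset_inter_right hN)
  · have hpi : ∀ e ∈ jS n j, 0 ≤ piR U D p e ∧ piR U D p e ≤ 1 := fun e _ => piR_mem h0 h1 e
    calc _ ≤ Ex (jS n j) (piR U D p) (fun N => ∑ I ∈ S, ind (¬ x ≤ ((N ∩ T I).card : ℝ))) := by
          apply Ex_mono hpi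
          intro N _
          refine (ind_not_forall_le S _).trans ?_
          apply Finset.sum_le_sum
          intro I _
          apply ind_mono
          apply mt
          intro h
          refine h.trans ?_
          exact_mod_cast Finset.card_le_card (Finset.inter_subset_inter_right Finset.subset_union_right)
      _ = ∑ I ∈ S, Ex (jS n j) (piR U D p) (fun N => ind (¬ x ≤ ((N ∩ T I).card : ℝ))) := Ex_sum _ _ _ _
      _ ≤ ∑ I ∈ S, Real.exp (-(x / 5)) :=
          Finset.sum_le_sum fun I hI => chern_low _ _ (hT I hI) _ hpi (hx I hI)
      _ = _ := by rw [Finset.sum_const, nsmul_eq_mul]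

/-- `j`-sets above `I` -/
def Tup (j : ℕ) (I : Finset (Fin n)) : Finset (Finset (Fin n)) := (jS n j).filter (fun J => I ⊆ J)

lemma mem_Tup {j : ℕ} {I J : Finset (Fin n)} : J ∈ Tup j I ↔ J.card = j ∧ I ⊆ J := by
  simp [Tup, mem_jS]

/-- `j`-sets above `L` through a vertex of `R` -/
def TR (R L : Finset (Fin n)) : Finset (Finset (Fin n)) := (R \ L).image (fun r => insert r L)

lemma card_TR (R L : Finset (Fin n)) : (TR R L).card = (R \ L).card := by
  apply Finset.card_image_of_injOn
  intro a ha b hb h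
  have ha' := Finset.mem_sdiff.1 (Finset.mem_coe.1 ha)
  have : a ∈ insert b L := by
    have h' : insert a L = insert b L := h
    rw [← h']; exact Finset.mem_insert_self _ _
  rcases Finset.mem_insert.1 this with h | h
  · exact h
  · exact absurd h ha'.2

lemma mem_TR {R L J : Finset (Fin n)} (h : J ∈ TR R L) : ∃ r ∈ R, r ∉ L ∧ J = insert r L := by
  obtain ⟨r, hr, rfl⟩ := Finset.mem_image.1 h
  exact ⟨r, (Finset.mem_sdiff.1 hr).1, (Finset.mem_sdiff.1 hr).2, rfl⟩

/-- fresh edges -/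
def UR (n k : ℕ) (R : Finset (Fin n)) : Finset (Finset (Fin n)) :=
  (kSets n k).filter (fun K => (K ∩ R).Nonempty)

lemma mem_UR_of {k : ℕ} {R K : Finset (Fin n)} (hK : K ∈ kSets n k) {r : Fin n} (hr : r ∈ R)
    (hrK : r ∈ K) : K ∈ UR n k R :=
  Finset.mem_filter.2 ⟨hK, r, Finset.mem_inter.2 ⟨hrK, hr⟩⟩

/-- degree conditions -/
def Pd (j : ℕ) (R : Finset (Fin n)) (i : ℕ) (x : ℝ) (D : Finset (Finset (Fin n))) : Prop :=
  ∀ I ∈ jS n i, (i = 0 ∨ (I ∩ R).Nonempty) → x ≤ ((D ∩ Tup j I).card : ℝ)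

/-- degree conditions through `R` -/
def Pr (j : ℕ) (R : Finset (Fin n)) (x : ℝ) (D : Finset (Finset (Fin n))) : Prop :=
  ∀ L ∈ jS n (j - 1), x ≤ ((D ∩ TR R L).card : ℝ)

structure Par (n k j : ℕ) (p Λ γ β : ℝ) : Prop where
  hjk : j + 1 ≤ k
  hj : 1 ≤ j
  hkn : k ≤ n
  h0 : 0 ≤ p
  h1 : p ≤ 1
  hΛ : p * (n : ℝ) ^ (k - j) ≤ Λ
  hγ : γ ≤ p * n * ((n - j - 1).choose (k - j - 1) : ℝ)
  hβ : 2 * β = γ / (k.choose j * (1 + Λ))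
  hβ0 : 0 ≤ β

lemma card_jS_le (i j : ℕ) (hn : 0 < n) (hi : i ≤ j) : ((jS n i).card : ℝ) ≤ (n : ℝ) ^ j := by
  have : (jS n i).card ≤ n ^ j := by
    rw [jS, Finset.card_powersetCard, Finset.card_univ, Fintype.card_fin]
    exact (Nat.choose_le_pow _ _).trans (Nat.pow_le_pow_right hn hi)
  exact_mod_cast this

/-- core lower bound: sets reached above `insert v I'` -/
lemma core_bound {k j : ℕ} {p Λ γ β : ℝ} (P : Par n k j p Λ γ β) {R : Finset (Fin n)}
    {D E : Finset (Finset (Fin n))} (hED : E ⊆ D) (I I' : Finset (Fin n)) (hI : I.card ≤ j)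
    (v : Fin n) (hv : I ⊆ insert v I') (hE : ∀ J ∈ E, J.card = j ∧ I' ⊆ J)
    (hr : ∀ J ∈ E, ∃ r ∈ R, r ∈ I ∪ J) {x : ℝ} (hx : x ≤ E.card) :
    2 * (x * (β / n)) ≤ ∑ J ∈ Tup j I, piR (UR n k R) D p J := by
  have hkn := P.hkn
  have hjk := P.hjk
  have hn : (0 : ℝ) < n := by exact_mod_cast (by omega : 0 < n)
  have h := sum_piR_ge P.hjk P.hkn (Finset.filter_subset _ _ : UR n k R ⊆ kSets n k) P.h0 P.h1
    P.hΛ P.hγ hED I hI (fun J hJ => ⟨(hE J hJ).1, by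
      have : J ∪ I ⊆ insert v J := by
        apply Finset.union_subset (Finset.subset_insert _ _)
        exact hv.trans (Finset.insert_subset_insert _ (hE J hJ).2)
      refine (Finset.card_le_card this).trans ((Finset.card_insert_le _ _).trans ?_)
      rw [(hE J hJ).1]⟩) (by
      intro K hK J hJ hIK hJK
      obtain ⟨r, hr, hr2⟩ := hr J hJ
      exact mem_UR_of hK hr ((Finset.union_subset hIK hJK) hr2))
  refine le_trans ?_ h
  rw [← P.hβ]
  have hb := P.hβ0
  calc 2 * (x * (β / n)) ≤ 2 * (E.card * (β / n)) := by gcongr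
    _ = _ := by ring

lemma step_Pd {k j : ℕ} {p Λ γ β : ℝ} (P : Par n k j p Λ γ β) (R : Finset (Fin n)) (i : ℕ)
    (hi : i + 1 ≤ j) {x : ℝ} {D : Finset (Finset (Fin n))} (hD : Pd j R i x D) :
    Ex (UR n k R) (fun _ => 1 - (1 - p) ^ (k.choose j))
      (fun H => ind (¬ Pd j R (i + 1) (x * (β / n)) (Rch j H D))) ≤
      (n : ℝ) ^ j * Real.exp (-(x * (β / n) / 5)) := by
  have hkn := P.hkn
  have hjk := P.hjk
  set S := (jS n (i + 1)).filter (fun I => (I ∩ R).Nonempty) with hS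
  have h := round_gen (j := j) (D := D) (Finset.filter_subset _ _ : UR n k R ⊆ kSets n k) P.h0 P.h1 S
    (fun I => Tup j I) (fun I _ => Finset.filter_subset _ _) (x := x * (β / n)) (by
      intro I hI
      obtain ⟨hI1, r, hr⟩ := Finset.mem_filter.1 hI
      rw [mem_jS] at hI1
      obtain ⟨hrI, hrR⟩ := Finset.mem_inter.1 hr
      obtain ⟨v, hv, hv2⟩ : ∃ v ∈ I, i = 0 ∨ r ∈ I.erase v := by
        rcases Nat.eq_zero_or_pos i with h | h
        · exact ⟨r, hrI, Or.inl h⟩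
        · have : 0 < (I.erase r).card := by rw [Finset.card_erase_of_mem hrI]; omega
          obtain ⟨v, hv⟩ := Finset.card_pos.1 this
          obtain ⟨hv1, hv2⟩ := Finset.mem_erase.1 hv
          exact ⟨v, hv2, Or.inr (Finset.mem_erase.2 ⟨hv1.symm, hrI⟩)⟩
      have hx := hD (I.erase v) (mem_jS.2 (by rw [Finset.card_erase_of_mem hv]; omega)) (by
        rcases hv2 with h | h
        · exact Or.inl h
        · exact Or.inr ⟨r, Finset.mem_inter.2 ⟨h, hrR⟩⟩)
      apply core_bound P Finset.inter_subset_left I (I.erase v) (by omega) v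
        (by rw [Finset.insert_erase hv]) _ _ hx
      · intro J hJ
        exact mem_Tup.1 (Finset.mem_inter.1 hJ).2
      · intro J hJ
        exact ⟨r, hrR, Finset.mem_union_left _ hrI⟩)
  refine le_trans ?_ (h.trans ?_)
  · apply Ex_mono
    · intro e _
      have := pow_le_one₀ (n := k.choose j) (by linarith [P.h1] : 0 ≤ 1 - p) (by linarith [P.h0])
      have := pow_nonneg (by linarith [P.h1] : 0 ≤ 1 - p) (k.choose j)
      constructor <;> linarith
    · intro H _
      apply ind_mono
      apply mt
      intro h I hI hI2
      exact h I (Finset.mem_filter.2 ⟨hI, hI2.resolve_left (by omega)⟩)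
  · apply mul_le_mul_of_nonneg_right _ (Real.exp_pos _).le
    refine le_trans ?_ (card_jS_le (i + 1) j (by omega) hi)
    exact_mod_cast Finset.card_le_card (Finset.filter_subset _ _)

lemma Tup_self {j : ℕ} {J : Finset (Fin n)} (hJ : J.card = j) : Tup j J = {J} := by
  ext J'
  rw [mem_Tup, Finset.mem_singleton]
  constructor
  · rintro ⟨h1, h2⟩
    exact (Finset.eq_of_subset_of_card_le h2 (by omega)).symm
  · rintro rfl
    exact ⟨hJ, Finset.Subset.refl _⟩

lemma step_Pr {k j : ℕ} {p Λ γ β ρ : ℝ} (P : Par n k j p Λ γ β) (R : Finset (Fin n))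
    (hj : 2 ≤ j) {x : ℝ} (hx0 : 0 ≤ x) {D : Finset (Finset (Fin n))} (hD : Pd j R (j - 1) x D)
    (hρ : ∀ L ∈ jS n (j - 1), ρ ≤ ((R \ L).card : ℝ)) :
    Ex (UR n k R) (fun _ => 1 - (1 - p) ^ (k.choose j))
      (fun H => ind (¬ Pr j R (x * (β / n) * ρ) (Rch j H D))) ≤
      (n : ℝ) ^ j * Real.exp (-(x * (β / n) * ρ / 5)) := by
  have hkn := P.hkn
  have hjk := P.hjk
  have hβ0 := P.hβ0
  have h := round_gen (j := j) (D := D) (Finset.filter_subset _ _ : UR n k R ⊆ kSets n k) P.h0 P.h1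
    (jS n (j - 1)) (fun L => TR R L) (by
      intro L hL J hJ
      obtain ⟨r, _, hr, rfl⟩ := mem_TR hJ
      rw [mem_jS] at hL ⊢
      rw [Finset.card_insert_of_notMem hr]; omega) (x := x * (β / n) * ρ) (by
      intro L hL
      have hLc := mem_jS.1 hL
      have key : ∀ J ∈ TR R L, 2 * (x * (β / n)) ≤ piR (UR n k R) D p J := by
        intro J hJ
        obtain ⟨r, hrR, hr, rfl⟩ := mem_TR hJ
        have hc : (insert r L).card = j := by rw [Finset.card_insert_of_notMem hr]; omega
        obtain ⟨v, hv⟩ := Finset.card_pos.1 (by omega : 0 < L.card)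
        have hvr : v ≠ r := by rintro rfl; exact hr hv
        have hvI : v ∈ insert r L := Finset.mem_insert_of_mem hv
        have hx := hD ((insert r L).erase v) (mem_jS.2 (by rw [Finset.card_erase_of_mem hvI]; omega))
          (Or.inr ⟨r, Finset.mem_inter.2 ⟨Finset.mem_erase.2 ⟨hvr.symm, Finset.mem_insert_self _ _⟩, hrR⟩⟩)
        have := core_bound P (R := R) (D := D) Finset.inter_subset_left (insert r L) ((insert r L).erase v) (by omega) v
          (by rw [Finset.insert_erase hvI])
          (fun J hJ => mem_Tup.1 (Finset.mem_inter.1 hJ).2)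
          (fun J hJ => ⟨r, hrR, Finset.mem_union_left _ (Finset.mem_insert_self _ _)⟩) hx
        rwa [Tup_self hc, Finset.sum_singleton] at this
      have h2 := Finset.card_nsmul_le_sum _ _ _ key
      rw [nsmul_eq_mul, card_TR] at h2
      refine le_trans ?_ h2
      have := mul_le_mul_of_nonneg_left (hρ L hL) (by positivity : 0 ≤ 2 * (x * (β / n)))
      linarith)
  refine le_trans ?_ (h.trans ?_)
  · apply le_of_eq; rfl
  · apply mul_le_mul_of_nonneg_right _ (Real.exp_pos _).le
    exact card_jS_le (j - 1) j (by omega) (by omega)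

/-- two-sided Chernoff -/
lemma chern_two {α : Type*} [DecidableEq α] (U T : Finset α) (hT : T ⊆ U) {q δ : ℝ}
    (hq : 0 ≤ q ∧ q ≤ 1) (hδ : 0 ≤ δ ∧ δ ≤ 1) :
    Ex U (fun _ => q) (fun H => ind (¬ |((H ∩ T).card : ℝ) - q * T.card| ≤ δ * (q * T.card))) ≤
      2 * Real.exp (-(δ ^ 2 * (q * T.card) / 4)) := by
  set μ := q * T.card with hμ
  have hμ0 : 0 ≤ μ := by have := hq.1; positivity
  have hs : ∑ e ∈ T, q = μ := by rw [Finset.sum_const, nsmul_eq_mul, mul_comm]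
  have e1 : ∀ l : ℝ, |l| ≤ 1 / 2 → Real.exp l - 1 ≤ l + l ^ 2 := by
    intro l hl
    have := Real.abs_exp_sub_one_sub_id_le (by linarith : |l| ≤ 1)
    have := (abs_le.1 this).2
    linarith
  have tail : ∀ l : ℝ, |l| = δ / 2 →
      Ex U (fun _ => q) (fun H => Real.exp (-(l * μ + δ / 2 * (δ * μ))) * Real.exp (l * ((H ∩ T).card : ℝ)))
       ≤ Real.exp (-(δ ^ 2 * μ / 4)) := by
    intro l hl
    rw [Ex_mul_left]
    have h1 := Ex_exp_le U T hT (fun _ => q) (fun _ _ => hq) l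
    rw [hs] at h1
    refine (mul_le_mul_of_nonneg_left h1 (Real.exp_pos _).le).trans ?_
    rw [← Real.exp_add, Real.exp_le_exp]
    have h2 := e1 l (by rw [hl]; linarith [hδ.2])
    have h3 : l ^ 2 = δ ^ 2 / 4 := by rw [← sq_abs, hl]; ring
    nlinarith [mul_le_mul_of_nonneg_right h2 hμ0]
  have t1 := tail (δ / 2) (abs_of_nonneg (by linarith [hδ.1]))
  have t2 := tail (-(δ / 2)) (by rw [abs_neg, abs_of_nonneg (by linarith [hδ.1])])
  calc _ ≤ Ex U (fun _ => q) (fun H => Real.exp (-(δ / 2 * μ + δ / 2 * (δ * μ))) * Real.exp (δ / 2 * ((H ∩ T).card : ℝ)) + Real.exp (-(-(δ / 2) * μ + δ / 2 * (δ * μ))) * Real.exp (-(δ / 2) * ((H ∩ T).card : ℝ))) := by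
        apply Ex_mono (fun _ _ => hq)
        intro H _
        apply ind_le_of (by positivity)
        intro h
        rw [abs_le, not_and_or] at h
        rcases h with h | h
        · have : 1 ≤ Real.exp (-(-(δ / 2) * μ + δ / 2 * (δ * μ))) * Real.exp (-(δ / 2) * ((H ∩ T).card : ℝ)) := by
            rw [← Real.exp_add]
            apply Real.one_le_exp
            nlinarith [hδ.1]
          linarith [(by positivity : 0 ≤ Real.exp (-(δ / 2 * μ + δ / 2 * (δ * μ))) * Real.exp (δ / 2 * ((H ∩ T).card : ℝ)))]
        · have : 1 ≤ Real.exp (-(δ / 2 * μ + δ / 2 * (δ * μ))) * Real.exp (δ / 2 * ((H ∩ T).card : ℝ)) := by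
            rw [← Real.exp_add]
            apply Real.one_le_exp
            nlinarith [hδ.1]
          linarith [(by positivity : 0 ≤ Real.exp (-(-(δ / 2) * μ + δ / 2 * (δ * μ))) * Real.exp (-(δ / 2) * ((H ∩ T).card : ℝ)))]
    _ ≤ _ := by
        rw [Ex_add]; linarith

lemma Ex_ind_anti {α : Type*} [DecidableEq α] {U : Finset α} {π π' : α → ℝ}
    (hπ : ∀ e ∈ U, 0 ≤ π e ∧ π e ≤ π' e ∧ π' e ≤ 1) (G : Finset α → Prop)
    (hG : ∀ N N', N ⊆ N' → G N → G N') :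
    Ex U π' (fun N => ind (¬ G N)) ≤ Ex U π (fun N => ind (¬ G N)) := by
  have h := Ex_mono_pi (f := fun N => (-1) * ind (¬ G N)) hπ (by
    intro N N' hN
    have : ind (¬ G N') ≤ ind (¬ G N) := ind_mono (mt (hG N N' hN))
    linarith)
  rw [Ex_mul_left, Ex_mul_left] at h
  linarith

lemma card_Tup {j : ℕ} (hj : 1 ≤ j) (hjn : j ≤ n) {L : Finset (Fin n)} (hL : L.card = j - 1) :
    (Tup j L).card = n - j + 1 := by
  have := card_supersets Finset.univ L j (Finset.subset_univ _) (by omega)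
  rw [Finset.card_univ, Fintype.card_fin, hL] at this
  have e : j - (j - 1) = 1 := by omega
  rw [e, Nat.choose_one_right] at this
  unfold Tup jS
  convert this using 1
  omega

lemma step_final {k j : ℕ} {p Λ γ β q δ' m : ℝ} (P : Par n k j p Λ γ β) (R : Finset (Fin n))
    {x : ℝ} (hx0 : 0 ≤ x) {D : Finset (Finset (Fin n))} (hD : Pr j R x D)
    (hq : q = 2 * (x * (β / n))) (hm : 0 < m) (hmq : m ≤ q * (n - j + 1 : ℕ)) (hδ : 0 ≤ δ' ∧ δ' ≤ 1) :
    Ex (UR n k R) (fun _ => 1 - (1 - p) ^ (k.choose j))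
      (fun H => ind (¬ Sm j m (δ' + j / m) (Rch j H D))) ≤
      (n : ℝ) ^ j * (2 * Real.exp (-(δ' ^ 2 * (q * (n - j + 1 : ℕ)) / 4))) := by
  have hkn := P.hkn
  have hjk := P.hjk
  have hβ0 := P.hβ0
  have hj := P.hj
  have hq0 : 0 ≤ q := by rw [hq]; positivity
  have key : ∀ J ∈ jS n j, q ≤ piR (UR n k R) D p J := by
    intro J hJ
    have hc := mem_jS.1 hJ
    obtain ⟨u, hu⟩ := Finset.card_pos.1 (by omega : 0 < J.card)
    have hx := hD (J.erase u) (mem_jS.2 (by rw [Finset.card_erase_of_mem hu]; omega))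
    have := core_bound P (R := R) (D := D) Finset.inter_subset_left J (J.erase u) (by omega) u
      (by rw [Finset.insert_erase hu])
      (by
        intro J' hJ'
        obtain ⟨r, hr1, hr2, rfl⟩ := mem_TR (Finset.mem_inter.1 hJ').2
        refine ⟨?_, Finset.subset_insert _ _⟩
        rw [Finset.card_insert_of_notMem hr2, Finset.card_erase_of_mem hu]; omega)
      (by
        intro J' hJ'
        obtain ⟨r, hr1, hr2, rfl⟩ := mem_TR (Finset.mem_inter.1 hJ').2
        exact ⟨r, hr1, Finset.mem_union_right _ (Finset.mem_insert_self _ _)⟩) hx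
    rw [Tup_self hc, Finset.sum_singleton] at this
    rw [hq]; exact this
  have hne : (jS n j).Nonempty := by
    rw [jS, Finset.powersetCard_nonempty, Finset.card_univ, Fintype.card_fin]; omega
  have hq1 : q ≤ 1 := by
    obtain ⟨J, hJ⟩ := hne
    exact (key J hJ).trans (piR_mem P.h0 P.h1 J).2
  refine (round_lemma (Finset.filter_subset _ _ : UR n k R ⊆ kSets n k) P.h0 P.h1
    (fun N => Sm j m (δ' + j / m) N) (fun N N' hN h => h.mono hN)).trans ?_
  calc _ ≤ Ex (jS n j) (piR (UR n k R) D p) (fun N => ind (¬ Sm j m (δ' + j / m) N)) := by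
        apply Ex_mono (fun e _ => piR_mem P.h0 P.h1 e)
        intro N _
        exact ind_mono (mt fun h => h.mono Finset.subset_union_right)
    _ ≤ Ex (jS n j) (fun _ => q) (fun N => ind (¬ Sm j m (δ' + j / m) N)) := by
        apply Ex_ind_anti (fun e he => ⟨hq0, key e he, (piR_mem P.h0 P.h1 e).2⟩)
          (fun N => Sm j m (δ' + j / m) N)
        exact fun N N' hN h => h.mono hN
    _ ≤ Ex (jS n j) (fun _ => q) (fun N => ∑ L ∈ jS n (j - 1),
          ind (¬ |((N ∩ Tup j L).card : ℝ) - q * (Tup j L).card| ≤ δ' * (q * (Tup j L).card))) := by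
        apply Ex_mono (fun e _ => ⟨hq0, hq1⟩)
        intro N hN
        refine le_trans (ind_mono ?_) (ind_not_forall_le (jS n (j - 1)) _)
        apply mt
        intro h
        apply sm_of_regular hj N (fun J hJ => mem_jS.1 (hN hJ)) hm hmq
        intro L hL
        have := h L (mem_jS.2 hL)
        rw [card_Tup hj (by omega) hL] at this
        have e : N ∩ Tup j L = N.filter (fun J => L ⊆ J) := by
          ext J
          rw [Finset.mem_inter, Finset.mem_filter, mem_Tup]
          constructor
          · rintro ⟨h1, h2⟩; exact ⟨h1, h2.2⟩
          · rintro ⟨h1, h2⟩; exact ⟨h1, mem_jS.1 (hN h1), h2⟩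
        rw [e] at this
        exact this
    _ = ∑ L ∈ jS n (j - 1), Ex (jS n j) (fun _ => q) (fun N =>
          ind (¬ |((N ∩ Tup j L).card : ℝ) - q * (Tup j L).card| ≤ δ' * (q * (Tup j L).card))) := Ex_sum _ _ _ _
    _ ≤ ∑ L ∈ jS n (j - 1), 2 * Real.exp (-(δ' ^ 2 * (q * (n - j + 1 : ℕ)) / 4)) := by
        apply Finset.sum_le_sum
        intro L hL
        have := chern_two (jS n j) (Tup j L) (Finset.filter_subset _ _) ⟨hq0, hq1⟩ hδ
        rwa [card_Tup hj (by omega) (mem_jS.1 hL)] at this ⊢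
    _ ≤ _ := by
        rw [Finset.sum_const, nsmul_eq_mul]
        apply mul_le_mul_of_nonneg_right _ (by positivity)
        exact card_jS_le _ _ (by omega) (by omega)

lemma comb_round {U : Finset (Finset (Fin n))} {j : ℕ} {m δ p1 p2 e E : ℝ} (hp1 : 0 ≤ p1 ∧ p1 ≤ 1)
    (hp2 : 0 ≤ p2 ∧ p2 ≤ 1)
    (Γ : Finset (Finset (Fin n)) → Prop) (D : Finset (Finset (Fin n)))
    (h1 : Ex U (fun _ => p1) (fun H => ind (¬ Γ (Rch j H D))) ≤ e)
    (h2 : ∀ D, Γ D → Ex U (fun _ => p2) (fun H => ind (¬ Tgt j m δ D H)) ≤ E) (hE : 0 ≤ E) :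
    Ex U (fun _ => 1 - (1 - p1) * (1 - p2)) (fun H => ind (¬ Tgt j m δ D H)) ≤ e + E := by
  rw [← Ex_split U (fun _ => p1) (fun _ => p2)]
  calc _ ≤ Ex U (fun _ => p1) (fun H => ind (¬ Γ (Rch j H D)) + E) := by
        apply Ex_mono (fun _ _ => hp1)
        intro H _
        by_cases hG : Γ (Rch j H D)
        · have : Ex U (fun _ => p2) (fun H' => ind (¬ Tgt j m δ D (H ∪ H'))) ≤
              Ex U (fun _ => p2) (fun H' => ind (¬ Tgt j m δ (Rch j H D) H')) := by
            apply Ex_mono (fun _ _ => hp2)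
            intro H' _
            exact ind_mono (mt Tgt.of_rch)
          linarith [h2 _ hG, ind_nonneg (¬ Γ (Rch j H D))]
        · rw [ind_true hG]
          have : Ex U (fun _ => p2) (fun H' => ind (¬ Tgt j m δ D (H ∪ H'))) ≤ Ex U (fun _ => p2) (fun H' => 1) := by
            apply Ex_mono (fun _ _ => hp2)
            intro H' _
            exact ind_le_one _
          rw [Ex_const] at this
          linarith
    _ ≤ _ := by rw [Ex_add, Ex_const]; linarith

lemma phase2 {k j : ℕ} {p Λ γ β ρ x0 X q δ' m : ℝ} (P : Par n k j p Λ γ β) (R : Finset (Fin n))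
    (hj : 2 ≤ j) (hx0 : 0 ≤ x0) (hρ0 : 0 ≤ ρ)
    (hρ : ∀ L ∈ jS n (j - 1), ρ ≤ ((R \ L).card : ℝ))
    (hX : ∀ i, 1 ≤ i → i < j → X ≤ x0 * (β / n) ^ i) (hX' : X ≤ x0 * (β / n) ^ j * ρ)
    (hq : q = 2 * (x0 * (β / n) ^ j * ρ * (β / n))) (hm : 0 < m) (hmq : m ≤ q * (n - j + 1 : ℕ))
    (hδ : 0 ≤ δ' ∧ δ' ≤ 1) {D : Finset (Finset (Fin n))} (hD : x0 ≤ D.card) (hDj : ∀ J ∈ D, J.card = j) :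
    Ex (UR n k R) (fun _ => 1 - ((1 - p) ^ (k.choose j)) ^ (j + 1))
      (fun H => ind (¬ Tgt j m (δ' + j / m) D H)) ≤
      (j : ℝ) * ((n : ℝ) ^ j * Real.exp (-(X / 5))) +
       (n : ℝ) ^ j * (2 * Real.exp (-(δ' ^ 2 * (q * (n - j + 1 : ℕ)) / 4))) := by
  set E := (n : ℝ) ^ j * Real.exp (-(X / 5)) with hE
  set F := (n : ℝ) ^ j * (2 * Real.exp (-(δ' ^ 2 * (q * (n - j + 1 : ℕ)) / 4))) with hF
  have hE0 : 0 ≤ E := by positivity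
  have hF0 : 0 ≤ F := by positivity
  have hβ0 := P.hβ0
  have hjk := P.hjk
  have hpp : ∀ s, 0 ≤ 1 - ((1 - p) ^ (k.choose j)) ^ s ∧ 1 - ((1 - p) ^ (k.choose j)) ^ s ≤ 1 := by
    intro s
    have a1 := pow_le_one₀ (n := k.choose j) (by linarith [P.h1] : 0 ≤ 1 - p) (by linarith [P.h0])
    have a2 := pow_nonneg (by linarith [P.h1] : 0 ≤ 1 - p) (k.choose j)
    have := pow_le_one₀ (n := s) a2 a1
    have := pow_nonneg a2 s
    constructor <;> linarith
  have hp1 := hpp 1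
  rw [pow_one] at hp1
  have hsplit : ∀ s, 1 - (1 - (1 - (1 - p) ^ (k.choose j))) * (1 - (1 - ((1 - p) ^ (k.choose j)) ^ s)) =
      1 - ((1 - p) ^ (k.choose j)) ^ (s + 1) := by
    intro s; rw [pow_succ]; ring
  have main : ∀ s, s ≤ j → ∀ D, (if s = 0 then Pr j R (x0 * (β / n) ^ j * ρ) D
      else Pd j R (j - s) (x0 * (β / n) ^ (j - s)) D) →
      Ex (UR n k R) (fun _ => 1 - ((1 - p) ^ (k.choose j)) ^ (s + 1))
        (fun H => ind (¬ Tgt j m (δ' + j / m) D H)) ≤ (s : ℝ) * E + F := by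
    intro s
    induction s with
    | zero =>
      intro _ D hD
      rw [if_pos rfl] at hD
      have h := step_final P R (by positivity) hD hq hm hmq hδ
      have h2 := comb_round (E := 0) (p2 := 0) hp1 (by norm_num) (fun D => Sm j m (δ' + j / m) D) D h (by
        intro D hD
        rw [Ex_congr (g := fun _ => 0)]
        · rw [Ex_const]
        · intro H _
          exact ind_false (not_not.2 (Tgt.of_sm hD H))) le_rfl
      have e : (1 : ℝ) - (1 - (1 - (1 - p) ^ (k.choose j))) * (1 - 0) = 1 - ((1 - p) ^ (k.choose j)) ^ (0 + 1) := by ring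
      rw [e] at h2
      push_cast
      linarith
    | succ s ih =>
      intro hs D hD
      rw [if_neg (by omega)] at hD
      have ih' := ih (by omega)
      rw [← hsplit]
      have h1 : ∃ Γ : Finset (Finset (Fin n)) → Prop, (∀ D, Γ D → (if s = 0 then Pr j R (x0 * (β / n) ^ j * ρ) D
          else Pd j R (j - s) (x0 * (β / n) ^ (j - s)) D)) ∧
          Ex (UR n k R) (fun _ => 1 - (1 - p) ^ (k.choose j)) (fun H => ind (¬ Γ (Rch j H D))) ≤ E := by
        by_cases hs0 : s = 0
        · subst hs0
          refine ⟨Pr j R (x0 * (β / n) ^ j * ρ), fun D h => by rw [if_pos rfl]; exact h, ?_⟩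
          have := step_Pr P R hj (x := x0 * (β / n) ^ (j - 1)) (by positivity) hD hρ
          have e : x0 * (β / n) ^ (j - 1) * (β / n) = x0 * (β / n) ^ j := by
            rw [mul_assoc, ← pow_succ, Nat.sub_add_cancel (by omega)]
          rw [e] at this
          refine this.trans ?_
          rw [hE]
          gcongr
        · refine ⟨Pd j R (j - s) (x0 * (β / n) ^ (j - s)), fun D h => by rw [if_neg hs0]; exact h, ?_⟩
          have := step_Pd P R (j - (s + 1)) (by omega) hD
          have e : x0 * (β / n) ^ (j - (s + 1)) * (β / n) = x0 * (β / n) ^ (j - s) := by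
            rw [mul_assoc, ← pow_succ]; congr 2; omega
          have e2 : j - (s + 1) + 1 = j - s := by omega
          rw [e, e2] at this
          refine this.trans ?_
          rw [hE]
          have := hX (j - s) (by omega) (by omega)
          gcongr
      obtain ⟨Γ, hΓ1, hΓ2⟩ := h1
      have := comb_round hp1 (hpp (s + 1)) Γ D hΓ2 (fun D hD => ih' D (hΓ1 D hD)) (by positivity)
      refine this.trans ?_
      push_cast
      linarith
  apply main j le_rfl D
  rw [if_neg (by omega)]
  intro I hI _
  rw [Nat.sub_self] at hI ⊢
  rw [mem_jS, Finset.card_eq_zero] at hI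
  subst hI
  have : D ∩ Tup j ∅ = D := by
    rw [Finset.inter_eq_left]
    intro J hJ
    rw [mem_Tup]
    exact ⟨hDj J hJ, Finset.empty_subset _⟩
  rw [this, pow_zero, mul_one]
  exact hD

end Phase2


section Phase1
variable {n : ℕ}

/-- the number of pairs `(J, K)` with `J ∈ D` not containing `X` and `K ⊇ J ∪ X` -/
lemma cross_count (hn : 0 < n) {k j : ℕ} {D : Finset (Finset (Fin n))} (hD : ∀ J ∈ D, J.card = j)
    (X : Finset (Fin n)) (Z : Finset (Finset (Fin n) × Finset (Fin n)))
    (hZ : ∀ b ∈ Z, b.1 ∈ D ∧ ¬ X ⊆ b.1 ∧ b.1 ⊆ b.2 ∧ X ⊆ b.2 ∧ b.2.card = k) :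
    (Z.card : ℝ) ≤ ∑ I ∈ X.ssubsets, (dg D I : ℝ) * ((n : ℝ) ^ k / (n : ℝ) ^ (j + X.card - I.card)) := by
  have hn' : (0 : ℝ) < n := by exact_mod_cast hn
  have h1 : Z.card = ∑ I ∈ X.ssubsets, (Z.filter (fun b => b.1 ∩ X = I)).card := by
    apply Finset.card_eq_sum_card_fiberwise
    intro b hb
    rw [Finset.mem_coe, Finset.mem_ssubsets, Finset.ssubset_iff_subset_ne]
    refine ⟨Finset.inter_subset_right, ?_⟩
    intro h
    exact (hZ b hb).2.1 (Finset.inter_eq_right.1 h)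
  rw [h1]
  push_cast
  apply Finset.sum_le_sum
  intro I hI
  have h2 : (Z.filter (fun b => b.1 ∩ X = I)).card =
      ∑ J ∈ D.filter (fun J => I ⊆ J), ((Z.filter (fun b => b.1 ∩ X = I)).filter (fun b => b.1 = J)).card := by
    apply Finset.card_eq_sum_card_fiberwise
    intro b hb
    have hb' := Finset.mem_filter.1 (Finset.mem_coe.1 hb)
    rw [Finset.mem_coe, Finset.mem_filter]
    refine ⟨(hZ b hb'.1).1, ?_⟩
    rw [← hb'.2]; exact Finset.inter_subset_left
  rw [h2, dg]
  push_cast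
  rw [← nsmul_eq_mul]
  apply Finset.sum_le_card_nsmul
  intro J hJ
  set Y := ((Z.filter (fun b => b.1 ∩ X = I)).filter (fun b => b.1 = J)) with hY
  have hYm : ∀ b ∈ Y, b ∈ Z ∧ b.1 ∩ X = I ∧ b.1 = J := by
    intro b hb
    have := Finset.mem_filter.1 hb
    have h3 := Finset.mem_filter.1 this.1
    exact ⟨h3.1, h3.2, this.2⟩
  rcases Y.eq_empty_or_nonempty with h | ⟨b0, hb0⟩
  · rw [h]; simp; positivity
  have hb0' := hYm b0 hb0
  have hJX : J ∩ X = I := by rw [← hb0'.2.2]; exact hb0'.2.1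
  have h3 : Y.card = (Y.image Prod.snd).card := by
    symm
    apply Finset.card_image_of_injOn
    intro b hb c hc h
    exact Prod.ext ((hYm b hb).2.2.trans (hYm c hc).2.2.symm) h
  have hJc : J.card = j := hD J (Finset.mem_filter.1 hJ).1
  have h4 := card_supersets_le hn k (J ∪ X) (Y.image Prod.snd) (by
    intro K hK
    obtain ⟨b, hb, rfl⟩ := Finset.mem_image.1 hK
    have h5 := hYm b hb
    have h6 := hZ b h5.1
    refine ⟨h6.2.2.2.2, Finset.union_subset ?_ h6.2.2.2.1⟩
    rw [← h5.2.2]; exact h6.2.2.1)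
  have h5 : (J ∪ X).card = j + X.card - I.card := by
    have := Finset.card_union_add_card_inter J X
    rw [hJX, hJc] at this
    omega
  rw [h3, ← h5]
  exact h4

/-- maximal increment of the degree of `I` -/
def wt (k j : ℕ) (I : Finset (Fin n)) (b : Finset (Fin n) × Finset (Fin n)) : ℝ :=
  if I ⊆ b.2 then (((k - I.card).choose (j - I.card) : ℕ) : ℝ) - (if I ⊆ b.1 then 1 else 0) else 0

lemma choose_shift_le (k j i : ℕ) (hi : 1 ≤ i) (hij : i ≤ j) (hjk : j + 1 ≤ k) :
    (k - i).choose (j - i) + 1 ≤ k.choose j := by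
  have h1 : ∀ t a b : ℕ, a.choose b ≤ (a + t).choose (b + t) := by
    intro t
    induction t with
    | zero => intro a b; simp
    | succ t ih => intro a b; exact (ih a b).trans (choose_succ_ge _ _)
  have h2 := h1 (i - 1) (k - i) (j - i)
  have e1 : k - i + (i - 1) = k - 1 := by omega
  have e2 : j - i + (i - 1) = j - 1 := by omega
  rw [e1, e2] at h2
  have h3 : k.choose j = (k - 1).choose (j - 1) + (k - 1).choose j := by
    obtain ⟨k, rfl⟩ : ∃ k', k = k' + 1 := ⟨k - 1, by omega⟩
    obtain ⟨j, rfl⟩ : ∃ k', j = k' + 1 := ⟨j - 1, by omega⟩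
    rw [Nat.choose_succ_succ]; simp
  have h4 : 0 < (k - 1).choose j := Nat.choose_pos (by omega)
  omega

lemma wt_nonneg {k j : ℕ} (hjk : j + 1 ≤ k) (I : Finset (Fin n)) (b : Finset (Fin n) × Finset (Fin n)) :
    0 ≤ wt k j I b := by
  have h4 : 0 < (k - I.card).choose (j - I.card) := Nat.choose_pos (by omega)
  have h5 : (1 : ℝ) ≤ ((k - I.card).choose (j - I.card) : ℕ) := by exact_mod_cast h4
  unfold wt
  split_ifs <;> linarith

lemma wt_le {k j : ℕ} (hjk : j + 1 ≤ k) (I : Finset (Fin n)) (hI : 1 ≤ I.card) (hI2 : I.card ≤ j)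
    (b : Finset (Fin n) × Finset (Fin n)) : wt k j I b ≤ k.choose j := by
  have h4 := choose_shift_le k j I.card hI hI2 hjk
  have h5 : (((k - I.card).choose (j - I.card) : ℕ) : ℝ) + 1 ≤ k.choose j := by exact_mod_cast h4
  have h6 : (0 : ℝ) ≤ (((k - I.card).choose (j - I.card) : ℕ) : ℝ) := by positivity
  unfold wt
  split_ifs <;> linarith

lemma dg_union_le {k j : ℕ} {D : Finset (Finset (Fin n))} {J K : Finset (Fin n)}
    (hJ : J ∈ D) (hJc : J.card = j) (hJK : J ⊆ K) (hK : K.card = k) (hjk : j ≤ k) (I : Finset (Fin n)) (hI : I.card ≤ j) :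
    (dg (D ∪ Finset.powersetCard j K) I : ℝ) ≤ dg D I + wt k j I (J, K) := by
  unfold wt
  simp only
  by_cases hIK : I ⊆ K
  · rw [if_pos hIK]
    have hc := card_supersets K I j hIK hI
    rw [hK] at hc
    by_cases hIJ : I ⊆ J
    · rw [if_pos hIJ]
      have : (D ∪ Finset.powersetCard j K).filter (fun J => I ⊆ J) ⊆
          D.filter (fun J => I ⊆ J) ∪ ((Finset.powersetCard j K).filter (fun K => I ⊆ K)).erase J := by
        intro A hA
        obtain ⟨h1, h2⟩ := Finset.mem_filter.1 hA
        rw [Finset.mem_union]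
        by_cases hAJ : A = J
        · left; rw [hAJ]; exact Finset.mem_filter.2 ⟨hJ, hIJ⟩
        · rcases Finset.mem_union.1 h1 with h | h
          · left; exact Finset.mem_filter.2 ⟨h, h2⟩
          · right; exact Finset.mem_erase.2 ⟨hAJ, Finset.mem_filter.2 ⟨h, h2⟩⟩
      have h3 := (Finset.card_le_card this).trans (Finset.card_union_le _ _)
      have hm : J ∈ (Finset.powersetCard j K).filter (fun K => I ⊆ K) :=
        Finset.mem_filter.2 ⟨Finset.mem_powersetCard.2 ⟨hJK, hJc⟩, hIJ⟩
      have h4 := Finset.card_erase_add_one hm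
      rw [hc] at h4
      have h5 : dg (D ∪ Finset.powersetCard j K) I + 1 ≤ dg D I + (k - I.card).choose (j - I.card) := by
        unfold dg; omega
      have h6 : (dg (D ∪ Finset.powersetCard j K) I : ℝ) + 1 ≤ dg D I + ((k - I.card).choose (j - I.card) : ℕ) := by
        exact_mod_cast h5
      linarith
    · rw [if_neg hIJ, sub_zero]
      have : dg (D ∪ Finset.powersetCard j K) I ≤ dg D I + (k - I.card).choose (j - I.card) := by
        unfold dg
        rw [Finset.filter_union, ← hc]
        exact Finset.card_union_le _ _
      exact_mod_cast this
  · rw [if_neg hIK, add_zero]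
    have : dg (D ∪ Finset.powersetCard j K) I ≤ dg D I := by
      unfold dg
      apply Finset.card_le_card
      intro A hA
      obtain ⟨h1, h2⟩ := Finset.mem_filter.1 hA
      rcases Finset.mem_union.1 h1 with h | h
      · exact Finset.mem_filter.2 ⟨h, h2⟩
      · exact absurd (h2.trans (Finset.mem_powersetCard.1 h).1) hIK
    exact_mod_cast this

/-- query set hypotheses -/
structure QInv (k j : ℕ) (V : Finset (Fin n)) (D : Finset (Finset (Fin n)))
    (Q : Finset (Finset (Fin n) × Finset (Fin n))) : Prop where
  hD : D ⊆ Finset.powersetCard j V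
  hQ : ∀ b ∈ Q, b.1 ∈ D ∧ b.1 ⊆ b.2 ∧ b.2 ∈ Finset.powersetCard k V
  hinj : Set.InjOn Prod.snd (Q : Set (Finset (Fin n) × Finset (Fin n)))

lemma QInv.wsum (hn : 0 < n) {k j : ℕ} (hjk : j + 1 ≤ k) {V : Finset (Fin n)} {D : Finset (Finset (Fin n))}
    {Q : Finset (Finset (Fin n) × Finset (Fin n))} (h : QInv k j V D Q) (I : Finset (Fin n)) :
    ∑ b ∈ Q, wt k j I b ≤
      ((((k - I.card).choose (j - I.card) : ℕ) : ℝ) - 1) * (((V.card - j).choose (k - j) : ℕ) : ℝ) * dg D I +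
      (((k - I.card).choose (j - I.card) : ℕ) : ℝ) *
        ∑ I' ∈ I.ssubsets, (dg D I' : ℝ) * ((n : ℝ) ^ k / (n : ℝ) ^ (j + I.card - I'.card)) := by
  have hc0 : 0 < (k - I.card).choose (j - I.card) := Nat.choose_pos (by omega)
  have hc : (1 : ℝ) ≤ ((k - I.card).choose (j - I.card) : ℕ) := by exact_mod_cast hc0
  set c : ℝ := (((k - I.card).choose (j - I.card) : ℕ) : ℝ) with hcdef
  have h1 : ∀ b ∈ Q, wt k j I b = (if I ⊆ b.1 then (c - 1) else 0) + (if (¬ I ⊆ b.1 ∧ I ⊆ b.2) then c else 0) := by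
    intro b hb
    have hb2 := (h.hQ b hb).2.1
    unfold wt
    by_cases h1 : I ⊆ b.1
    · have := h1.trans hb2
      simp [h1, this, hcdef]
    · by_cases h2 : I ⊆ b.2 <;> simp [h1, h2, hcdef]
  rw [Finset.sum_congr rfl h1, Finset.sum_add_distrib, ← Finset.sum_filter, ← Finset.sum_filter,
    Finset.sum_const, Finset.sum_const, nsmul_eq_mul, nsmul_eq_mul]
  have hDc : ∀ J ∈ D, J.card = j := fun J hJ => (Finset.mem_powersetCard.1 (h.hD hJ)).2
  have h2 : (Q.filter (fun b => I ⊆ b.1)).card ≤ (V.card - j).choose (k - j) * dg D I := by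
    apply Finset.card_le_mul_card_image_of_maps_to (f := Prod.fst)
    · intro b hb
      have := Finset.mem_filter.1 hb
      exact Finset.mem_filter.2 ⟨(h.hQ b this.1).1, this.2⟩
    · intro J hJ
      have hJD := (Finset.mem_filter.1 hJ).1
      have hJV := Finset.mem_powersetCard.1 (h.hD hJD)
      have := card_supersets V J k hJV.1 (by omega)
      rw [hJV.2] at this
      rw [← this]
      apply Finset.card_le_card_of_injOn Prod.snd
      · intro b hb
        have h3 := Finset.mem_filter.1 (Finset.mem_coe.1 hb)
        have h4 := h.hQ b (Finset.mem_filter.1 h3.1).1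
        rw [Finset.mem_coe, Finset.mem_filter]
        refine ⟨h4.2.2, ?_⟩
        rw [← h3.2]; exact h4.2.1
      · intro a ha b hb hab
        have ha' := (Finset.mem_filter.1 (Finset.mem_filter.1 (Finset.mem_coe.1 ha)).1).1
        have hb' := (Finset.mem_filter.1 (Finset.mem_filter.1 (Finset.mem_coe.1 hb)).1).1
        exact h.hinj ha' hb' hab
  have h3 := cross_count hn (k := k) hDc I (Q.filter (fun b => ¬ I ⊆ b.1 ∧ I ⊆ b.2)) (by
    intro b hb
    obtain ⟨h1, h2, h3⟩ := Finset.mem_filter.1 hb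
    have h4 := h.hQ b h1
    exact ⟨h4.1, h2, h4.2.1, h3, (Finset.mem_powersetCard.1 h4.2.2).2⟩)
  have h2' : ((Q.filter (fun b => I ⊆ b.1)).card : ℝ) ≤ (((V.card - j).choose (k - j) : ℕ) : ℝ) * dg D I := by
    exact_mod_cast h2
  have a1 := mul_le_mul_of_nonneg_right h2' (by linarith : 0 ≤ c - 1)
  have a2 := mul_le_mul_of_nonneg_right h3 (by linarith : 0 ≤ c)
  linarith

end Phase1


section Phase1b
variable {n : ℕ}

/-- numerical hypotheses of the first phase -/
structure H1 (n k j : ℕ) (V : Finset (Fin n)) (p e cap y η lam Γ Λ θ : ℝ) : Prop where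
  hn : 0 < n
  hjk : j + 1 ≤ k
  hj : 1 ≤ j
  hp0 : 0 ≤ p
  hp1 : p ≤ 1
  he0 : 0 < e
  he1 : e ≤ 1
  hcap4 : 4 ≤ cap
  hcapV : cap ≤ (Finset.powersetCard j V).card
  hη0 : 0 ≤ η
  hη1 : η ≤ 1
  hlam0 : 0 < lam
  hlamη : lam * k.choose j ≤ η
  hΛ0 : 0 ≤ Λ
  hΛ : p * ((n : ℝ) ^ k / (n : ℝ) ^ j) ≤ Λ
  hθ0 : 0 < θ
  hθ : (1 + η) * p * (((V.card - j).choose (k - j) : ℕ) : ℝ) * ((k.choose j : ℝ) - 2) ≤ 1 - θ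
  hΓ1 : 1 ≤ Γ
  hΓ : 2 + 2 * k.choose j * Λ * 2 ^ j ≤ θ * Γ
  hy0 : 0 ≤ y
  hy1 : ((k.choose j : ℝ) - 1) * y + 1 ≤ cap / (n : ℝ) ^ (j - 1)
  hbad : 2 ^ j * Γ ^ j * (cap * ((n : ℝ) ^ k / (n : ℝ) ^ (2 * j))) ≤
    e / 8 * (((V.card - j).choose (k - j) : ℕ) : ℝ)
  hsup : 1 + e / 8 ≤ ((k.choose j : ℝ) - 1) * p *
    ((1 - e / 8) * (((V.card - j).choose (k - j) : ℕ) : ℝ)) * (1 - e / 16)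
  hyc : 16 * (((k.choose j : ℝ) - 1) * y) ≤ e * cap

variable {k j : ℕ} {V : Finset (Fin n)} {p e cap y η lam Γ Λ θ : ℝ}

lemma cross_sum_le (hn : 0 < n) {D : Finset (Finset (Fin n))} (X : Finset (Fin n)) {c G : ℝ}
    (hX : X.card ≤ j) (hG : 0 ≤ G)
    (h : ∀ I ∈ X.ssubsets, (dg D I : ℝ) ≤ G * (c / (n : ℝ) ^ I.card)) (hc : 0 ≤ c) :
    ∑ I ∈ X.ssubsets, (dg D I : ℝ) * ((n : ℝ) ^ k / (n : ℝ) ^ (j + X.card - I.card)) ≤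
      2 ^ j * G * (c * ((n : ℝ) ^ k / (n : ℝ) ^ (j + X.card))) := by
  have hn' : (0 : ℝ) < n := by exact_mod_cast hn
  have h1 : ∀ I ∈ X.ssubsets, (dg D I : ℝ) * ((n : ℝ) ^ k / (n : ℝ) ^ (j + X.card - I.card)) ≤
      G * (c * ((n : ℝ) ^ k / (n : ℝ) ^ (j + X.card))) := by
    intro I hI
    have hIc : I.card ≤ X.card := Finset.card_le_card (Finset.mem_ssubsets.1 hI).1
    have e1 : (n : ℝ) ^ (j + X.card) = (n : ℝ) ^ I.card * (n : ℝ) ^ (j + X.card - I.card) := by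
      rw [← pow_add]; congr 1; omega
    calc _ ≤ G * (c / (n : ℝ) ^ I.card) * ((n : ℝ) ^ k / (n : ℝ) ^ (j + X.card - I.card)) := by
          apply mul_le_mul_of_nonneg_right (h I hI) (by positivity)
      _ = _ := by rw [e1]; field_simp
  refine (Finset.sum_le_card_nsmul _ _ _ h1).trans ?_
  rw [nsmul_eq_mul, mul_assoc]
  apply mul_le_mul_of_nonneg_right _ (by positivity)
  have : X.ssubsets.card ≤ 2 ^ j := by
    have h2 : X.ssubsets ⊆ X.powerset := by
      intro I hI
      exact Finset.mem_powerset.2 (Finset.mem_ssubsets.1 hI).1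
    have h3 := Finset.card_le_card h2
    rw [Finset.card_powerset] at h3
    exact h3.trans (Nat.pow_le_pow_right (by norm_num) hX)
  exact_mod_cast this

lemma smooth_bound (P : H1 n k j V p e cap y η lam Γ Λ θ) {D : Finset (Finset (Fin n))}
    {Q : Finset (Finset (Fin n) × Finset (Fin n))} (h : QInv k j V D Q) {r : ℕ}
    (hr : (r : ℝ) ≤ ((k.choose j : ℝ) - 1) * y + 1) (hDc : (D.card : ℝ) ≤ cap)
    (hI : ∀ I : Finset (Fin n), 1 ≤ I.card → I.card + 1 ≤ j →
      (dg D I : ℝ) - r - cap / (n : ℝ) ^ I.card - (1 + η) * p * ∑ b ∈ Q, wt k j I b ≤ 0) :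
    ∀ i, ∀ I : Finset (Fin n), I.card = i → i + 1 ≤ j → (dg D I : ℝ) ≤ Γ ^ i * (cap / (n : ℝ) ^ i) := by
  have hn' : (0 : ℝ) < n := by exact_mod_cast P.hn
  have hn1 : (1 : ℝ) ≤ n := by exact_mod_cast P.hn
  have hcap0 : 0 ≤ cap := by linarith [P.hcap4]
  have hΓ1 := P.hΓ1
  intro i
  induction i using Nat.strong_induction_on with
  | _ i ih =>
  intro I hIc hij
  rcases Nat.eq_zero_or_pos i with h0 | h0
  · subst h0
    rw [Finset.card_eq_zero] at hIc
    subst hIc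
    simpa [dg] using hDc
  · have hw := h.wsum P.hn P.hjk I
    have hcr := cross_sum_le (j := j) (k := k) P.hn (D := D) I (c := cap) (G := Γ ^ (i - 1)) (by omega) (by positivity)
      (by
        intro I' hI'
        have hlt : I'.card < i := by
          rw [← hIc]; exact Finset.card_lt_card (Finset.mem_ssubsets.1 hI')
        refine (ih I'.card hlt I' rfl (by omega)).trans ?_
        apply mul_le_mul_of_nonneg_right _ (by positivity)
        exact pow_le_pow_right₀ hΓ1 (by omega)) hcap0
    have hcc := choose_shift_le k j i h0 (by omega) P.hjk
    have hcc' : (((k - i).choose (j - i) : ℕ) : ℝ) + 1 ≤ k.choose j := by exact_mod_cast hcc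
    have hc0 : 0 < (k - i).choose (j - i) := Nat.choose_pos (by have := P.hjk; omega)
    have hc1 : (1 : ℝ) ≤ (((k - i).choose (j - i) : ℕ) : ℝ) := by exact_mod_cast hc0
    have hI' := hI I (by omega) (by omega)
    rw [hIc] at hw hcr hI'
    set c : ℝ := (((k - i).choose (j - i) : ℕ) : ℝ) with hc
    set M : ℝ := (((V.card - j).choose (k - j) : ℕ) : ℝ) with hM
    have hM0 : 0 ≤ M := by positivity
    set C : ℝ := (k.choose j : ℝ) with hC
    set d : ℝ := (dg D I : ℝ) with hd
    have hd0 : 0 ≤ d := by positivity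
    set Ss := ∑ I' ∈ I.ssubsets, (dg D I' : ℝ) * ((n : ℝ) ^ k / (n : ℝ) ^ (j + i - I'.card))
    set Z := cap / (n : ℝ) ^ i with hZ
    have hZ0 : 0 ≤ Z := by positivity
    have hη0 := P.hη0
    have hp0 := P.hp0
    have hΛ0 := P.hΛ0
    -- r bound
    have hrZ : (r : ℝ) ≤ Z := by
      refine hr.trans (P.hy1.trans ?_)
      apply div_le_div_of_nonneg_left hcap0 (by positivity)
      exact pow_le_pow_right₀ hn1 (by omega)
    have e1 : cap * ((n : ℝ) ^ k / (n : ℝ) ^ (j + i)) = Z * ((n : ℝ) ^ k / (n : ℝ) ^ j) := by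
      rw [hZ, pow_add]; field_simp
    have a1 : (1 + η) * p * ∑ b ∈ Q, wt k j I b ≤ (1 + η) * p * ((c - 1) * M * d + c * Ss) :=
      mul_le_mul_of_nonneg_left hw (by positivity)
    have a2 : (1 + η) * p * ((c - 1) * M * d) ≤ (1 - θ) * d := by
      have h1 : (1 + η) * p * M * (c - 1) ≤ (1 + η) * p * M * (C - 2) :=
        mul_le_mul_of_nonneg_left (by linarith) (by positivity)
      have h2 := mul_le_mul_of_nonneg_right (h1.trans P.hθ) hd0
      linarith
    have a3 : (1 + η) * p * (c * Ss) ≤ 2 * C * Λ * 2 ^ j * Γ ^ (i - 1) * Z := by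
      rw [e1] at hcr
      have hC0 : 0 ≤ C := by positivity
      have h1 : c * Ss ≤ C * (2 ^ j * Γ ^ (i - 1) * (Z * ((n : ℝ) ^ k / (n : ℝ) ^ j))) := by
        calc c * Ss ≤ c * (2 ^ j * Γ ^ (i - 1) * (Z * ((n : ℝ) ^ k / (n : ℝ) ^ j))) :=
              mul_le_mul_of_nonneg_left hcr (by linarith)
          _ ≤ _ := mul_le_mul_of_nonneg_right (by linarith) (by positivity)
      calc (1 + η) * p * (c * Ss) ≤ (1 + η) * p * (C * (2 ^ j * Γ ^ (i - 1) * (Z * ((n : ℝ) ^ k / (n : ℝ) ^ j)))) :=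
            mul_le_mul_of_nonneg_left h1 (by positivity)
        _ = (1 + η) * (C * (2 ^ j * Γ ^ (i - 1) * Z)) * (p * ((n : ℝ) ^ k / (n : ℝ) ^ j)) := by ring
        _ ≤ 2 * (C * (2 ^ j * Γ ^ (i - 1) * Z)) * Λ := by
            apply mul_le_mul _ P.hΛ (by positivity) (by positivity)
            apply mul_le_mul_of_nonneg_right _ (by positivity)
            linarith [P.hη1]
        _ = _ := by ring
    have a4 : θ * d ≤ 2 * Z + 2 * C * Λ * 2 ^ j * Γ ^ (i - 1) * Z := by linarith
    have a5 : 2 * Z ≤ 2 * Γ ^ (i - 1) * Z := by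
      have : 1 ≤ Γ ^ (i - 1) := one_le_pow₀ hΓ1
      nlinarith
    have a6 : θ * d ≤ θ * (Γ ^ i * Z) := by
      calc θ * d ≤ (2 + 2 * C * Λ * 2 ^ j) * (Γ ^ (i - 1) * Z) := by linarith
        _ ≤ (θ * Γ) * (Γ ^ (i - 1) * Z) := mul_le_mul_of_nonneg_right P.hΓ (by positivity)
        _ = θ * (Γ ^ i * Z) := by
            have : Γ ^ i = Γ * Γ ^ (i - 1) := by rw [← pow_succ']; congr 1; omega
            rw [this]; ring
    exact le_of_mul_le_mul_left a6 P.hθ0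

/-- at a root time, many queries have been made -/
lemma root_queries (P : H1 n k j V p e cap y η lam Γ Λ θ) {D : Finset (Finset (Fin n))}
    {Q : Finset (Finset (Fin n) × Finset (Fin n))} (h : QInv k j V D Q)
    (hs : ∀ i, ∀ I : Finset (Fin n), I.card = i → i + 1 ≤ j → (dg D I : ℝ) ≤ Γ ^ i * (cap / (n : ℝ) ^ i))
    (hroot : ∀ J ∈ D, ∀ K ∈ Finset.powersetCard k V, J ⊆ K → K ∈ Q.image Prod.snd ∨ ∃ J' ∈ D, J' ≠ J ∧ J' ⊆ K) :
    (D.card : ℝ) * ((1 - e / 8) * (((V.card - j).choose (k - j) : ℕ) : ℝ)) ≤ Q.card := by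
  have hn' : (0 : ℝ) < n := by exact_mod_cast P.hn
  have hcap0 : 0 ≤ cap := by linarith [P.hcap4]
  have hΓ1 := P.hΓ1
  have hDc : ∀ J ∈ D, J.card = j := fun J hJ => (Finset.mem_powersetCard.1 (h.hD hJ)).2
  have h1 : Q.card = ∑ J ∈ D, (Q.filter (fun b => b.1 = J)).card := by
    apply Finset.card_eq_sum_card_fiberwise
    intro b hb
    exact (h.hQ b hb).1
  rw [h1]
  push_cast
  rw [← nsmul_eq_mul]
  apply Finset.card_nsmul_le_sum
  intro J hJ
  have hJV := Finset.mem_powersetCard.1 (h.hD hJ)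
  have hM := card_supersets V J k hJV.1 (by have := P.hjk; omega)
  rw [hJV.2] at hM
  set All := (Finset.powersetCard k V).filter (fun K => J ⊆ K) with hAll
  set Bad := All.filter (fun K => ∃ J' ∈ D, J' ≠ J ∧ J' ⊆ K) with hBad
  have hb : ∀ K : Finset (Fin n), ∃ J' : Finset (Fin n), K ∈ Bad → J' ∈ D ∧ J' ≠ J ∧ J' ⊆ K := by
    intro K
    by_cases hK : K ∈ Bad
    · obtain ⟨J', h1, h2⟩ := (Finset.mem_filter.1 hK).2
      exact ⟨J', fun _ => ⟨h1, h2⟩⟩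
    · exact ⟨∅, fun h => absurd h hK⟩
  choose f hf using hb
  have hcross := cross_count P.hn (k := k) hDc J (Bad.image (fun K => (f K, K))) (by
    intro b hb
    obtain ⟨K, hK, rfl⟩ := Finset.mem_image.1 hb
    obtain ⟨h1, h2, h3⟩ := hf K hK
    have h4 := Finset.mem_filter.1 (Finset.mem_filter.1 hK).1
    refine ⟨h1, ?_, h3, h4.2, (Finset.mem_powersetCard.1 h4.1).2⟩
    intro hsub
    exact h2 (Finset.eq_of_subset_of_card_le hsub (by rw [hDc _ h1, hDc _ hJ])).symm)
  rw [Finset.card_image_of_injective _ (fun a b hab => (Prod.mk.inj hab).2)] at hcross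
  have hcr := cross_sum_le (j := j) (k := k) P.hn (D := D) J (c := cap) (G := Γ ^ j) (by omega) (by positivity)
      (by
        intro I' hI'
        have hlt : I'.card < j := by
          rw [← hJV.2]; exact Finset.card_lt_card (Finset.mem_ssubsets.1 hI')
        refine (hs I'.card I' rfl (by omega)).trans ?_
        apply mul_le_mul_of_nonneg_right _ (by positivity)
        exact pow_le_pow_right₀ hΓ1 (by omega)) hcap0
  rw [hJV.2, ← two_mul] at hcr
  rw [hJV.2, ← two_mul] at hcross
  have hBadc := hcross.trans (hcr.trans P.hbad)
  have hsub : All \ Bad ⊆ (Q.filter (fun b => b.1 = J)).image Prod.snd := by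
    intro K hK
    obtain ⟨hK1, hK2⟩ := Finset.mem_sdiff.1 hK
    obtain ⟨hK3, hK4⟩ := Finset.mem_filter.1 hK1
    have hno : ¬ ∃ J' ∈ D, J' ≠ J ∧ J' ⊆ K := fun h => hK2 (Finset.mem_filter.2 ⟨hK1, h⟩)
    rcases hroot J hJ K hK3 hK4 with h1 | h1
    · obtain ⟨b, hb, rfl⟩ := Finset.mem_image.1 h1
      refine Finset.mem_image.2 ⟨b, Finset.mem_filter.2 ⟨hb, ?_⟩, rfl⟩
      by_contra hne
      exact hno ⟨b.1, (h.hQ b hb).1, hne, (h.hQ b hb).2.1⟩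
    · exact absurd h1 hno
  have h2 := (Finset.card_le_card hsub).trans Finset.card_image_le
  have h2' := Finset.le_card_sdiff Bad All
  have h3 : All.card ≤ (Q.filter (fun b => b.1 = J)).card + Bad.card := by omega
  have h4 : (All.card : ℝ) ≤ (Q.filter (fun b => b.1 = J)).card + Bad.card := by exact_mod_cast h3
  rw [hM] at h4
  linarith

lemma root_numbers (P : H1 n k j V p e cap y η lam Γ Λ θ) {d q f r : ℝ}
    (hd : d * ((1 - e / 8) * (((V.card - j).choose (k - j) : ℕ) : ℝ)) ≤ q)
    (hr : r + ((k.choose j : ℝ) - 1) * f ≤ d) (hr0 : 0 ≤ r) (hd0 : 0 ≤ d)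
    (hf : (1 - e / 16) * (p * q) - y ≤ f) :
    r ≤ ((k.choose j : ℝ) - 1) * y ∧ 2 * d ≤ cap := by
  have hC : (1 : ℝ) ≤ k.choose j := by
    exact_mod_cast (Nat.choose_pos (by have := P.hjk; omega) : 0 < k.choose j)
  set B := (k.choose j : ℝ) - 1
  set m := (1 - e / 8) * (((V.card - j).choose (k - j) : ℕ) : ℝ)
  have hB : 0 ≤ B := by simp only [B]; linarith
  have he := P.he0
  have he1 := P.he1
  have hp := P.hp0
  have a1 : (1 + e / 8) * d ≤ B * ((1 - e / 16) * (p * q)) := by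
    calc (1 + e / 8) * d ≤ B * p * m * (1 - e / 16) * d := mul_le_mul_of_nonneg_right P.hsup hd0
      _ = B * p * (1 - e / 16) * (d * m) := by ring
      _ ≤ B * p * (1 - e / 16) * q := by
          apply mul_le_mul_of_nonneg_left hd
          have : 0 ≤ 1 - e / 16 := by linarith
          positivity
      _ = _ := by ring
  have a2 := mul_le_mul_of_nonneg_left hf hB
  have a3 : r + e / 8 * d ≤ B * y := by nlinarith
  constructor
  · nlinarith
  · have h1 : e * (2 * d) ≤ e * cap := by
      have := P.hyc
      nlinarith
    exact le_of_mul_le_mul_left h1 he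

end Phase1b


section Phase1c
variable {n : ℕ} {k j : ℕ} {V : Finset (Fin n)} {p e cap y η lam Γ Λ θ : ℝ}

def PZ (e y p : ℝ) (f q : ℕ) : ℝ :=
  Real.exp (-(e / 8) * (y + f) + (1 - Real.exp (-(e / 8))) * (p * q))

def PI1 (k j : ℕ) (lam η p cap : ℝ) (D : Finset (Finset (Fin n)))
    (Q : Finset (Finset (Fin n) × Finset (Fin n))) (r : ℕ) (I : Finset (Fin n)) : ℝ :=
  Real.exp (lam * ((dg D I : ℝ) - r - cap / (n : ℝ) ^ I.card - (1 + η) * p * ∑ b ∈ Q, wt k j I b))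

def Is (n j : ℕ) : Finset (Finset (Fin n)) := Finset.univ.filter (fun I => 1 ≤ I.card ∧ I.card + 1 ≤ j)

def Psi (k j : ℕ) (e y p lam η cap : ℝ) (D : Finset (Finset (Fin n)))
    (Q : Finset (Finset (Fin n) × Finset (Fin n))) (F : Finset (Finset (Fin n))) (r : ℕ) : ℝ :=
  PZ e y p F.card Q.card + ∑ I ∈ Is n j, PI1 k j lam η p cap D Q r I

lemma Psi_nonneg (k j : ℕ) (e y p lam η cap : ℝ) (D : Finset (Finset (Fin n)))
    (Q : Finset (Finset (Fin n) × Finset (Fin n))) (F : Finset (Finset (Fin n))) (r : ℕ) :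
    0 ≤ Psi k j e y p lam η cap D Q F r := by
  unfold Psi PZ PI1
  have : ∀ I ∈ Is n j, 0 ≤ Real.exp (lam * ((dg D I : ℝ) - r - cap / (n : ℝ) ^ I.card - (1 + η) * p * ∑ b ∈ Q, wt k j I b)) :=
    fun I _ => (Real.exp_pos _).le
  have := Finset.sum_nonneg this
  positivity

lemma PZ_step (hp0 : 0 ≤ p) (f q : ℕ) :
    p * PZ e y p (f + 1) (q + 1) + (1 - p) * PZ e y p f (q + 1) ≤ PZ e y p f q := by
  unfold PZ
  set a := 1 - Real.exp (-(e / 8)) with ha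
  have e1 : Real.exp (-(e / 8) * (y + (f + 1 : ℕ)) + a * (p * (q + 1 : ℕ))) =
      Real.exp (-(e / 8) * (y + f) + a * (p * q)) * (Real.exp (a * p) * (1 - a)) := by
    rw [ha, sub_sub_cancel, ← ha, ← Real.exp_add, ← Real.exp_add]; congr 1; push_cast; ring
  have e2 : Real.exp (-(e / 8) * (y + f) + a * (p * (q + 1 : ℕ))) =
      Real.exp (-(e / 8) * (y + f) + a * (p * q)) * Real.exp (a * p) := by
    rw [← Real.exp_add]; congr 1; push_cast; ring
  rw [e1, e2]
  have h1 : (1 - a * p) * Real.exp (a * p) ≤ 1 := by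
    have := Real.add_one_le_exp (-(a * p))
    calc (1 - a * p) * Real.exp (a * p) ≤ Real.exp (-(a * p)) * Real.exp (a * p) :=
          mul_le_mul_of_nonneg_right (by linarith) (Real.exp_pos _).le
      _ = 1 := by rw [← Real.exp_add]; simp
  have h2 := mul_le_mul_of_nonneg_left h1 (Real.exp_pos (-(e / 8) * (y + f) + a * (p * q))).le
  calc _ = Real.exp (-(e / 8) * (y + f) + a * (p * q)) * ((1 - a * p) * Real.exp (a * p)) := by ring
    _ ≤ _ := by linarith

lemma PI_step (hp0 : 0 ≤ p) (hlam : 0 ≤ lam) (hη : η ≤ 1) {D D' : Finset (Finset (Fin n))}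
    {Q : Finset (Finset (Fin n) × Finset (Fin n))} {b : Finset (Fin n) × Finset (Fin n)} (hb : b ∉ Q)
    (r : ℕ) (I : Finset (Fin n)) (hd : (dg D' I : ℝ) ≤ dg D I + wt k j I b) (hw0 : 0 ≤ wt k j I b)
    (hw : lam * wt k j I b ≤ η) :
    p * PI1 k j lam η p cap D' (insert b Q) r I + (1 - p) * PI1 k j lam η p cap D (insert b Q) r I ≤
      PI1 k j lam η p cap D Q r I := by
  unfold PI1
  rw [Finset.sum_insert hb]
  set w := wt k j I b
  set S := ∑ b ∈ Q, wt k j I b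
  set A := lam * ((dg D I : ℝ) - r - cap / (n : ℝ) ^ I.card - (1 + η) * p * S)
  set u := lam * w with hu
  have hu0 : 0 ≤ u := by positivity
  have hη0 : 0 ≤ η := hu0.trans hw
  have e1 : Real.exp (lam * ((dg D' I : ℝ) - r - cap / (n : ℝ) ^ I.card - (1 + η) * p * (w + S))) ≤
      Real.exp A * Real.exp (-((1 + η) * p * u)) * Real.exp u := by
    rw [← Real.exp_add, ← Real.exp_add, Real.exp_le_exp]
    simp only [A, hu]
    nlinarith [mul_le_mul_of_nonneg_left hd hlam]
  have e2 : Real.exp (lam * ((dg D I : ℝ) - r - cap / (n : ℝ) ^ I.card - (1 + η) * p * (w + S))) =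
      Real.exp A * Real.exp (-((1 + η) * p * u)) := by
    rw [← Real.exp_add]
    simp only [A, hu]
    congr 1; ring
  rw [e2]
  have h1 : Real.exp u ≤ 1 + u * (1 + η) := by
    have := Real.abs_exp_sub_one_sub_id_le (by rw [abs_of_nonneg hu0]; linarith : |u| ≤ 1)
    have := (abs_le.1 this).2
    nlinarith
  have h2 : p * Real.exp u + (1 - p) ≤ Real.exp ((1 + η) * p * u) := by
    have := Real.add_one_le_exp ((1 + η) * p * u)
    nlinarith
  have hE := (Real.exp_pos A).le
  have hE2 := (Real.exp_pos (-((1 + η) * p * u))).le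
  calc _ ≤ p * (Real.exp A * Real.exp (-((1 + η) * p * u)) * Real.exp u) +
        (1 - p) * (Real.exp A * Real.exp (-((1 + η) * p * u))) := by
          have := mul_le_mul_of_nonneg_left e1 hp0
          linarith
    _ = Real.exp A * Real.exp (-((1 + η) * p * u)) * (p * Real.exp u + (1 - p)) := by ring
    _ ≤ Real.exp A * Real.exp (-((1 + η) * p * u)) * Real.exp ((1 + η) * p * u) :=
        mul_le_mul_of_nonneg_left h2 (by positivity)
    _ = Real.exp A := by rw [mul_assoc, ← Real.exp_add]; simp

/-- exploration invariant -/
structure EInv (k j : ℕ) (V : Finset (Fin n)) (cap y : ℝ) (D : Finset (Finset (Fin n)))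
    (Q : Finset (Finset (Fin n) × Finset (Fin n))) (F old : Finset (Finset (Fin n))) (r : ℕ) : Prop
    extends QInv k j V D Q where
  hF : F ⊆ Q.image Prod.snd
  hcount : r + (k.choose j - 1) * F.card ≤ D.card
  hold : old ⊆ D
  hold2 : 2 * (old.card : ℝ) ≤ cap
  hr : (r : ℝ) ≤ ((k.choose j : ℝ) - 1) * y + 1
  hconn : ∀ J ∈ D \ old, ∀ J' ∈ D \ old, J = J' ∨ JConn j F J J'
  hdone : ∀ J ∈ old, ∀ K ∈ Finset.powersetCard k V, J ⊆ K →
    K ∈ Q.image Prod.snd ∨ ∃ J' ∈ D, J' ≠ J ∧ J' ⊆ K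

def Large (j : ℕ) (cap : ℝ) (H : Finset (Finset (Fin n))) : Prop :=
  ∃ D, cap / 2 ≤ (D.card : ℝ) ∧ PairConn j H D

lemma large_of_cap (P : H1 n k j V p e cap y η lam Γ Λ θ) {D : Finset (Finset (Fin n))}
    {Q : Finset (Finset (Fin n) × Finset (Fin n))} {F old : Finset (Finset (Fin n))} {r : ℕ}
    (h : EInv k j V cap y D Q F old r) (hD : cap ≤ (D.card : ℝ)) (H : Finset (Finset (Fin n))) :
    Large j cap (F ∪ H) := by
  have hc := Finset.card_sdiff_add_card_eq_card h.hold
  have hc' : ((D \ old).card : ℝ) + old.card = D.card := by exact_mod_cast hc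
  have h1 : cap / 2 ≤ ((D \ old).card : ℝ) := by linarith [h.hold2]
  have h2 : (2 : ℝ) ≤ ((D \ old).card : ℝ) := by linarith [P.hcap4]
  have h3 : 1 < (D \ old).card := by
    have : 2 ≤ (D \ old).card := by exact_mod_cast h2
    omega
  have hcard : ∀ J ∈ D \ old, J.card = j := fun J hJ =>
    (Finset.mem_powersetCard.1 (h.hD (Finset.mem_sdiff.1 hJ).1)).2
  refine ⟨D \ old, h1, hcard, ?_⟩
  intro J hJ J' hJ'
  have : JConn j F J J' := by
    rcases h.hconn J hJ J' hJ' with he | hc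
    · subst he
      obtain ⟨A, hA, hne⟩ := Finset.exists_mem_ne h3 J
      have := (h.hconn J hJ A hA).resolve_left hne.symm
      exact this.trans (hcard A hA) this.symm
    · exact hc
  exact this.mono Finset.subset_union_left

lemma EInv.fail {D : Finset (Finset (Fin n))}
    {Q : Finset (Finset (Fin n) × Finset (Fin n))} {F old : Finset (Finset (Fin n))} {r : ℕ}
    (h : EInv k j V cap y D Q F old r) {J K : Finset (Fin n)} (hJ : J ∈ D) (hJK : J ⊆ K)
    (hK : K ∈ Finset.powersetCard k V) (hKQ : K ∉ Q.image Prod.snd) :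
    EInv k j V cap y D (insert (J, K) Q) F old r where
  hD := h.hD
  hQ := by
    intro b hb
    rcases Finset.mem_insert.1 hb with rfl | hb
    · exact ⟨hJ, hJK, hK⟩
    · exact h.hQ b hb
  hinj := by
    intro a ha b hb hab
    have hK' : ∀ c ∈ Q, c.2 ≠ K := fun c hc hcK => hKQ (Finset.mem_image.2 ⟨c, hc, hcK⟩)
    rcases Finset.mem_insert.1 (Finset.mem_coe.1 ha) with rfl | ha' <;>
      rcases Finset.mem_insert.1 (Finset.mem_coe.1 hb) with rfl | hb'
    · rfl
    · exact absurd hab.symm (hK' b hb')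
    · exact absurd hab (hK' a ha')
    · exact h.hinj ha' hb' hab
  hF := h.hF.trans (Finset.image_subset_image (Finset.subset_insert _ _))
  hcount := h.hcount
  hold := h.hold
  hold2 := h.hold2
  hr := h.hr
  hconn := h.hconn
  hdone := by
    intro A hA K' hK' hAK
    rcases h.hdone A hA K' hK' hAK with h1 | h1
    · exact Or.inl (Finset.image_subset_image (Finset.subset_insert _ _) h1)
    · exact Or.inr h1

lemma EInv.success {D : Finset (Finset (Fin n))}
    {Q : Finset (Finset (Fin n) × Finset (Fin n))} {F old : Finset (Finset (Fin n))} {r : ℕ}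
    (h : EInv k j V cap y D Q F old r) {J K : Finset (Fin n)} (hJ : J ∈ D) (hJold : J ∉ old) (hJK : J ⊆ K)
    (hK : K ∈ Finset.powersetCard k V) (hKQ : K ∉ Q.image Prod.snd)
    (hno : ¬ ∃ J' ∈ D, J' ≠ J ∧ J' ⊆ K) :
    EInv k j V cap y (D ∪ Finset.powersetCard j K) (insert (J, K) Q) (insert K F) old r := by
  have hf := h.fail hJ hJK hK hKQ
  have hKV := Finset.mem_powersetCard.1 hK
  have hJc : J.card = j := (Finset.mem_powersetCard.1 (h.hD hJ)).2
  have hDcard : ∀ A ∈ D, A.card = j := fun A hA => (Finset.mem_powersetCard.1 (h.hD hA)).2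
  exact {
    hD := by
      apply Finset.union_subset h.hD
      intro A hA
      obtain ⟨h1, h2⟩ := Finset.mem_powersetCard.1 hA
      exact Finset.mem_powersetCard.2 ⟨h1.trans hKV.1, h2⟩
    hQ := fun b hb => ⟨Finset.mem_union_left _ (hf.hQ b hb).1, (hf.hQ b hb).2⟩
    hinj := hf.hinj
    hF := by
      intro A hA
      rcases Finset.mem_insert.1 hA with rfl | hA
      · exact Finset.mem_image.2 ⟨(J, A), Finset.mem_insert_self _ _, rfl⟩
      · exact hf.hF hA
    hcount := by
      have hKF : K ∉ F := fun hh => hKQ (h.hF hh)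
      rw [Finset.card_insert_of_notMem hKF]
      have h1 := Finset.card_union_add_card_inter D (Finset.powersetCard j K)
      have h2 : D ∩ Finset.powersetCard j K ⊆ {J} := by
        intro A hA
        obtain ⟨hA1, hA2⟩ := Finset.mem_inter.1 hA
        rw [Finset.mem_singleton]
        by_contra hne
        exact hno ⟨A, hA1, hne, (Finset.mem_powersetCard.1 hA2).1⟩
      have h3 := Finset.card_le_card h2
      rw [Finset.card_singleton] at h3
      rw [Finset.card_powersetCard, hKV.2] at h1
      have h4 := h.hcount
      rw [mul_add, mul_one]
      have hC : 1 ≤ k.choose j := Nat.choose_pos (by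
        have := Finset.card_le_card hJK
        omega)
      generalize (k.choose j - 1) * F.card = a at *
      generalize k.choose j = c at *
      generalize (D ∩ Finset.powersetCard j K).card = b at *
      generalize (D ∪ Finset.powersetCard j K).card = d at *
      omega
    hold := h.hold.trans Finset.subset_union_left
    hold2 := h.hold2
    hr := h.hr
    hconn := by
      have key : ∀ A ∈ (D ∪ Finset.powersetCard j K) \ old, A.card = j ∧ JConn j (insert K F) A J := by
        intro A hA
        obtain ⟨h1, h2⟩ := Finset.mem_sdiff.1 hA
        rcases Finset.mem_union.1 h1 with h3 | h3
        · refine ⟨hDcard A h3, ?_⟩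
          rcases h.hconn A (Finset.mem_sdiff.2 ⟨h3, h2⟩) J (Finset.mem_sdiff.2 ⟨hJ, hJold⟩) with h4 | h4
          · rw [h4]; exact JConn.of_edge (Finset.mem_insert_self _ _) hJK hJK
          · exact h4.mono (Finset.subset_insert _ _)
        · obtain ⟨h4, h5⟩ := Finset.mem_powersetCard.1 h3
          exact ⟨h5, JConn.of_edge (Finset.mem_insert_self _ _) h4 hJK⟩
      intro A hA A' hA'
      exact Or.inr ((key A hA).2.trans hJc (key A' hA').2.symm)
    hdone := by
      intro A hA K' hK' hAK
      rcases hf.hdone A hA K' hK' hAK with h1 | ⟨J', h1, h2⟩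
      · exact Or.inl h1
      · exact Or.inr ⟨J', Finset.mem_union_left _ h1, h2⟩ }

lemma EInv.root {D : Finset (Finset (Fin n))}
    {Q : Finset (Finset (Fin n) × Finset (Fin n))} {F old : Finset (Finset (Fin n))} {r : ℕ}
    (h : EInv k j V cap y D Q F old r) {J : Finset (Fin n)} (hJ : J ∉ D) (hJV : J ∈ Finset.powersetCard j V)
    (hroot : ∀ J ∈ D, ∀ K ∈ Finset.powersetCard k V, J ⊆ K → K ∈ Q.image Prod.snd ∨ ∃ J' ∈ D, J' ≠ J ∧ J' ⊆ K)
    (hr : (r : ℝ) ≤ ((k.choose j : ℝ) - 1) * y) (hD : 2 * (D.card : ℝ) ≤ cap) :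
    EInv k j V cap y (insert J D) Q F D (r + 1) where
  hD := Finset.insert_subset hJV h.hD
  hQ := fun b hb => ⟨Finset.mem_insert_of_mem (h.hQ b hb).1, (h.hQ b hb).2⟩
  hinj := h.hinj
  hF := h.hF
  hcount := by
    rw [Finset.card_insert_of_notMem hJ]
    have := h.hcount
    omega
  hold := Finset.subset_insert _ _
  hold2 := hD
  hr := by push_cast; linarith
  hconn := by
    have key : ∀ A ∈ insert J D \ D, A = J := by
      intro A hA
      obtain ⟨h1, h2⟩ := Finset.mem_sdiff.1 hA
      exact (Finset.mem_insert.1 h1).resolve_right h2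
    intro A hA A' hA'
    exact Or.inl ((key A hA).trans (key A' hA').symm)
  hdone := by
    intro A hA K' hK' hAK
    rcases hroot A hA K' hK' hAK with h1 | ⟨J', h1, h2⟩
    · exact Or.inl h1
    · exact Or.inr ⟨J', Finset.mem_insert_of_mem h1, h2⟩

lemma explore (P : H1 n k j V p e cap y η lam Γ Λ θ) : ∀ N : ℕ, ∀ (D : Finset (Finset (Fin n)))
    (Q : Finset (Finset (Fin n) × Finset (Fin n))) (F old : Finset (Finset (Fin n))) (r : ℕ),
    EInv k j V cap y D Q F old r →
    (Finset.powersetCard k V \ Q.image Prod.snd).card + (Finset.powersetCard j V \ D).card ≤ N →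
    Ex (Finset.powersetCard k V \ Q.image Prod.snd) (fun _ => p) (fun H => ind (¬ Large j cap (F ∪ H))) ≤
      Psi k j e y p lam η cap D Q F r := by
  intro N
  induction N using Nat.strong_induction_on with
  | _ N ih =>
  intro D Q F old r h hN
  have hjk := P.hjk
  have hpp : ∀ e ∈ (Finset.powersetCard k V \ Q.image Prod.snd), 0 ≤ p ∧ p ≤ 1 := fun _ _ => ⟨P.hp0, P.hp1⟩
  by_cases hPsi : 1 ≤ Psi k j e y p lam η cap D Q F r
  · refine le_trans ?_ hPsi
    have := Ex_mono (π := fun _ => p) hpp (f := fun H => ind (¬ Large j cap (F ∪ H))) (g := fun _ => 1)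
      (fun H _ => ind_le_one _)
    rwa [Ex_const] at this
  by_cases hcap : cap ≤ (D.card : ℝ)
  · rw [Ex_congr (g := fun _ => 0)]
    · rw [Ex_const]; exact Psi_nonneg _ _ _ _ _ _ _ _ _ _ _ _
    · intro H _
      exact ind_false (not_not.2 (large_of_cap P h hcap H))
  by_cases hex : ∀ J ∈ D, ∀ K ∈ Finset.powersetCard k V, J ⊆ K → K ∈ Q.image Prod.snd ∨ ∃ J' ∈ D, J' ≠ J ∧ J' ⊆ K
  · -- root time
    push Not at hPsi hcap
    have hsum0 : ∀ I ∈ Is n j, 0 ≤ PI1 k j lam η p cap D Q r I := fun I _ => (Real.exp_pos _).le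
    have hZ0 : 0 ≤ PZ e y p F.card Q.card := (Real.exp_pos _).le
    have hZ1 : PZ e y p F.card Q.card < 1 := by
      have := Finset.sum_nonneg hsum0
      unfold Psi at hPsi
      linarith
    have hI1 : ∀ I : Finset (Fin n), 1 ≤ I.card → I.card + 1 ≤ j →
        (dg D I : ℝ) - r - cap / (n : ℝ) ^ I.card - (1 + η) * p * ∑ b ∈ Q, wt k j I b ≤ 0 := by
      intro I h1 h2
      have hI : I ∈ Is n j := Finset.mem_filter.2 ⟨Finset.mem_univ _, h1, h2⟩
      have h3 := Finset.single_le_sum hsum0 hI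
      have h4 : PI1 k j lam η p cap D Q r I < 1 := by
        unfold Psi at hPsi
        linarith
      unfold PI1 at h4
      rw [Real.exp_lt_one_iff] at h4
      by_contra hcon
      push Not at hcon
      have := mul_pos P.hlam0 hcon
      linarith
    have hs := smooth_bound P h.toQInv h.hr hcap.le hI1
    have hq := root_queries P h.toQInv hs hex
    have hC : 1 ≤ k.choose j := Nat.choose_pos (by omega)
    have hcount : (r : ℝ) + ((k.choose j : ℝ) - 1) * F.card ≤ D.card := by
      have := h.hcount
      have h2 : ((r + (k.choose j - 1) * F.card : ℕ) : ℝ) ≤ D.card := by exact_mod_cast this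
      push_cast [Nat.cast_sub hC] at h2
      exact h2
    have hf : (1 - e / 16) * (p * Q.card) - y ≤ (F.card : ℝ) := by
      unfold PZ at hZ1
      rw [Real.exp_lt_one_iff] at hZ1
      have he := P.he0
      have he1 := P.he1
      have hb : (e / 8) * (1 - e / 16) ≤ 1 - Real.exp (-(e / 8)) := by
        have := Real.quadratic_le_exp_of_nonneg (by linarith : 0 ≤ e / 8)
        have hpos : 0 < 1 + e / 8 + (e / 8) ^ 2 / 2 := by positivity
        have h1 : Real.exp (-(e / 8)) ≤ 1 / (1 + e / 8 + (e / 8) ^ 2 / 2) := by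
          rw [Real.exp_neg, one_div]
          exact inv_anti₀ hpos this
        have h2 : 1 / (1 + e / 8 + (e / 8) ^ 2 / 2) ≤ 1 - (e / 8) * (1 - e / 16) := by
          rw [div_le_iff₀ hpos]
          have : 0 ≤ e ^ 4 := by positivity
          nlinarith
        linarith
      have hpq : 0 ≤ p * (Q.card : ℝ) := by have := P.hp0; positivity
      have h3 := mul_le_mul_of_nonneg_right hb hpq
      have h4 : (e / 8) * ((1 - e / 16) * (p * Q.card) - y) ≤ (e / 8) * (F.card : ℝ) := by nlinarith
      exact le_of_mul_le_mul_left h4 (by linarith)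
    obtain ⟨hr1, hD1⟩ := root_numbers P hq hcount (by positivity) (by positivity) hf
    obtain ⟨J, hJV, hJD⟩ : ∃ J ∈ Finset.powersetCard j V, J ∉ D := by
      apply Finset.exists_mem_notMem_of_card_lt_card
      have := hcap.trans_le P.hcapV
      exact_mod_cast this
    have hnew := h.root hJD hJV hex hr1 hD1
    have hlt : (Finset.powersetCard j V \ insert J D).card < (Finset.powersetCard j V \ D).card := by
      apply Finset.card_lt_card
      rw [Finset.ssubset_iff_of_subset (Finset.sdiff_subset_sdiff (Finset.Subset.refl _) (Finset.subset_insert _ _))]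
      exact ⟨J, Finset.mem_sdiff.2 ⟨hJV, hJD⟩, fun hh => (Finset.mem_sdiff.1 hh).2 (Finset.mem_insert_self _ _)⟩
    have := ih (N - 1) (by omega) _ _ _ _ _ hnew (by omega)
    refine this.trans ?_
    unfold Psi
    apply add_le_add le_rfl
    apply Finset.sum_le_sum
    intro I _
    unfold PI1
    rw [Real.exp_le_exp]
    apply mul_le_mul_of_nonneg_left _ P.hlam0.le
    have : dg (insert J D) I ≤ dg D I + 1 := by
      unfold dg
      rw [Finset.filter_insert]
      split_ifs
      · exact Finset.card_insert_le _ _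
      · omega
    have : (dg (insert J D) I : ℝ) ≤ dg D I + 1 := by exact_mod_cast this
    push_cast
    linarith
  · -- expansion
    push Not at hex
    obtain ⟨J, hJ, K, hK, hJK, hKQ, hno⟩ := hex
    have hno' : ¬ ∃ J' ∈ D, J' ≠ J ∧ J' ⊆ K := by
      rintro ⟨J', h1, h2, h3⟩
      exact hno J' h1 h2 h3
    have hJold : J ∉ old := by
      intro hh
      rcases h.hdone J hh K hK hJK with h1 | h1
      · exact hKQ h1
      · exact hno' h1
    have hf := h.fail hJ hJK hK hKQ
    have hs := h.success hJ hJold hJK hK hKQ hno'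
    have hJc : J.card = j := (Finset.mem_powersetCard.1 (h.hD hJ)).2
    have hKV := Finset.mem_powersetCard.1 hK
    set U' := Finset.powersetCard k V \ (insert (J, K) Q).image Prod.snd with hU'
    have hKU' : K ∉ U' := by
      intro hh
      exact (Finset.mem_sdiff.1 hh).2 (Finset.mem_image.2 ⟨(J, K), Finset.mem_insert_self _ _, rfl⟩)
    have hU : Finset.powersetCard k V \ Q.image Prod.snd = insert K U' := by
      rw [hU', Finset.image_insert]
      ext A
      simp only [Finset.mem_sdiff, Finset.mem_insert]
      constructor
      · rintro ⟨h1, h2⟩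
        by_cases hA : A = K
        · exact Or.inl hA
        · exact Or.inr ⟨h1, by rintro (h3 | h3); exacts [hA h3, h2 h3]⟩
      · rintro (h1 | ⟨h1, h2⟩)
        · subst h1; exact ⟨hK, hKQ⟩
        · exact ⟨h1, fun h3 => h2 (Or.inr h3)⟩
    rw [hU] at hN ⊢
    rw [Finset.card_insert_of_notMem hKU'] at hN
    rw [Ex_insert hKU']
    have hle : (Finset.powersetCard j V \ (D ∪ Finset.powersetCard j K)).card ≤ (Finset.powersetCard j V \ D).card :=
      Finset.card_le_card (Finset.sdiff_subset_sdiff (Finset.Subset.refl _) Finset.subset_union_left)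
    have i1 := ih (N - 1) (by omega) _ _ _ _ _ hs (by rw [← hU']; omega)
    have i2 := ih (N - 1) (by omega) _ _ _ _ _ hf (by rw [← hU']; omega)
    rw [← hU'] at i1 i2
    have e1 : ∀ H : Finset (Finset (Fin n)), F ∪ insert K H = insert K F ∪ H := by
      intro H; rw [Finset.union_insert, Finset.insert_union]
    simp only [e1]
    have j1 := mul_le_mul_of_nonneg_left i1 P.hp0
    have j2 := mul_le_mul_of_nonneg_left i2 (by linarith [P.hp1] : 0 ≤ 1 - p)
    refine (add_le_add j1 j2).trans ?_
    have hbQ : (J, K) ∉ Q := fun hh => hKQ (Finset.mem_image.2 ⟨_, hh, rfl⟩)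
    have hKF : K ∉ F := fun hh => hKQ (h.hF hh)
    unfold Psi
    rw [Finset.card_insert_of_notMem hKF, Finset.card_insert_of_notMem hbQ]
    have k1 := PZ_step (e := e) (y := y) P.hp0 F.card Q.card
    have k2 : ∑ I ∈ Is n j, (p * PI1 k j lam η p cap (D ∪ Finset.powersetCard j K) (insert (J, K) Q) r I +
        (1 - p) * PI1 k j lam η p cap D (insert (J, K) Q) r I) ≤ ∑ I ∈ Is n j, PI1 k j lam η p cap D Q r I := by
      apply Finset.sum_le_sum
      intro I hI
      have hI' := (Finset.mem_filter.1 hI).2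
      apply PI_step P.hp0 P.hlam0.le P.hη1 hbQ r I
      · exact dg_union_le hJ hJc hJK hKV.2 (by omega) I (by omega)
      · exact wt_nonneg hjk I _
      · refine le_trans ?_ P.hlamη
        exact mul_le_mul_of_nonneg_left (wt_le hjk I hI'.1 (by omega) _) P.hlam0.le
    rw [Finset.sum_add_distrib, ← Finset.mul_sum, ← Finset.mul_sum] at k2
    linarith

lemma phase1 (P : H1 n k j V p e cap y η lam Γ Λ θ) (hB : 0 ≤ (k.choose j : ℝ) - 1) :
    Ex (Finset.powersetCard k V) (fun _ => p) (fun H => ind (¬ Large j cap H)) ≤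
      Real.exp (-(e * y / 8)) + j * ((n : ℝ) ^ j * Real.exp (-(lam * (cap / (n : ℝ) ^ (j - 1))))) := by
  have hn1 : (1 : ℝ) ≤ n := by exact_mod_cast P.hn
  have hcap0 : 0 ≤ cap := by linarith [P.hcap4]
  have h0 : EInv k j V cap y ∅ ∅ ∅ ∅ 0 :=
    { hD := Finset.empty_subset _
      hQ := by simp
      hinj := by simp
      hF := by simp
      hcount := by simp
      hold := by simp
      hold2 := by simpa using hcap0
      hr := by
        have := P.hy0
        push_cast
        positivity
      hconn := by simp
      hdone := by simp }
  have h := explore P _ _ _ _ _ _ h0 le_rfl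
  simp only [Finset.image_empty, Finset.sdiff_empty, Finset.empty_union] at h
  refine h.trans ?_
  unfold Psi
  apply add_le_add
  · unfold PZ
    rw [Real.exp_le_exp]
    simp
    linarith
  · have h1 : ∀ I ∈ Is n j, PI1 k j lam η p cap ∅ ∅ 0 I ≤ Real.exp (-(lam * (cap / (n : ℝ) ^ (j - 1)))) := by
      intro I hI
      have hI' := (Finset.mem_filter.1 hI).2
      unfold PI1
      rw [Real.exp_le_exp]
      have : cap / (n : ℝ) ^ (j - 1) ≤ cap / (n : ℝ) ^ I.card := by
        apply div_le_div_of_nonneg_left hcap0 (by positivity)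
        exact pow_le_pow_right₀ hn1 (by omega)
      have := mul_le_mul_of_nonneg_left this P.hlam0.le
      simp [dg]
      linarith
    refine (Finset.sum_le_card_nsmul _ _ _ h1).trans ?_
    rw [nsmul_eq_mul, ← mul_assoc]
    apply mul_le_mul_of_nonneg_right _ (Real.exp_pos _).le
    have h2 : Is n j ⊆ (Finset.range j).biUnion (fun i => jS n i) := by
      intro I hI
      have hI' := (Finset.mem_filter.1 hI).2
      rw [Finset.mem_biUnion]
      exact ⟨I.card, Finset.mem_range.2 (by omega), mem_jS.2 rfl⟩
    have h3 := (Finset.card_le_card h2).trans Finset.card_biUnion_le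
    calc ((Is n j).card : ℝ) ≤ ∑ i ∈ Finset.range j, ((jS n i).card : ℝ) := by exact_mod_cast h3
      _ ≤ ∑ i ∈ Finset.range j, (n : ℝ) ^ j :=
          Finset.sum_le_sum fun i hi => card_jS_le i j P.hn (Finset.mem_range.1 hi).le
      _ = _ := by simp

end Phase1c


/-- the event of the theorem, at fixed `n` -/
def Good {n : ℕ} (j : ℕ) (m δ : ℝ) (H : Finset (Finset (Fin n))) : Prop :=
  ∃ Comp S : Finset (Finset (Fin n)), IsJComponent n j H Comp ∧ S ⊆ Comp ∧
    ∀ L : Finset (Fin n), L.card = j - 1 →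
      |((S.filter (fun J => L ⊆ J)).card : ℝ) - m| ≤ δ * m

lemma kSets_split {n : ℕ} (k : ℕ) (R : Finset (Fin n)) :
    kSets n k = Finset.powersetCard k (Finset.univ \ R) ∪ UR n k R := by
  ext K
  simp only [kSets, UR, Finset.mem_union, Finset.mem_powersetCard, Finset.mem_filter]
  constructor
  · rintro ⟨h1, h2⟩
    by_cases h : (K ∩ R).Nonempty
    · exact Or.inr ⟨⟨h1, h2⟩, h⟩
    · left
      refine ⟨?_, h2⟩
      intro x hx
      refine Finset.mem_sdiff.2 ⟨Finset.mem_univ _, fun hR => h ⟨x, Finset.mem_inter.2 ⟨hx, hR⟩⟩⟩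
  · rintro (⟨_, h2⟩ | ⟨h, _⟩)
    · exact ⟨Finset.subset_univ _, h2⟩
    · exact h

lemma kSets_split_disj {n : ℕ} (k : ℕ) (R : Finset (Fin n)) :
    Disjoint (Finset.powersetCard k (Finset.univ \ R)) (UR n k R) := by
  rw [Finset.disjoint_left]
  intro K hK hK'
  obtain ⟨x, hx⟩ := (Finset.mem_filter.1 hK').2
  obtain ⟨h1, h2⟩ := Finset.mem_inter.1 hx
  exact (Finset.mem_sdiff.1 ((Finset.mem_powersetCard.1 hK).1 h1)).2 h2

lemma combine {n k j : ℕ} (R : Finset (Fin n)) {p cap m δ E1 E2 : ℝ} (hp0 : 0 ≤ p) (hp1 : p ≤ 1)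
    (hcap : 0 < cap) (hE2 : 0 ≤ E2)
    (h1 : Ex (Finset.powersetCard k (Finset.univ \ R)) (fun _ => p) (fun H => ind (¬ Large j cap H)) ≤ E1)
    (h2 : ∀ D : Finset (Finset (Fin n)), cap / 2 ≤ (D.card : ℝ) → (∀ J ∈ D, J.card = j) →
      Ex (UR n k R) (fun _ => p) (fun H => ind (¬ Tgt j m δ D H)) ≤ E2) :
    1 - (E1 + E2) ≤ binomProb n k p (fun H => Good j m δ H) := by
  rw [binomProb_eq_Ex]
  have hπ : ∀ (U : Finset (Finset (Fin n))), ∀ e ∈ U, 0 ≤ (fun _ : Finset (Fin n) => p) e ∧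
      (fun _ : Finset (Fin n) => p) e ≤ 1 := fun U e _ => ⟨hp0, hp1⟩
  have key : Ex (kSets n k) (fun _ => p) (fun H => ind (¬ Good j m δ H)) ≤ E1 + E2 := by
    rw [kSets_split k R, Ex_union (kSets_split_disj k R)]
    calc _ ≤ Ex (Finset.powersetCard k (Finset.univ \ R)) (fun _ => p)
          (fun H => ind (¬ Large j cap H) + E2) := by
          apply Ex_mono (hπ _)
          intro H _
          by_cases hL : Large j cap H
          · obtain ⟨D, hD1, hD2⟩ := hL
            have hDne : D.Nonempty := by
              rw [← Finset.card_pos]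
              have : (0 : ℝ) < D.card := by linarith
              exact_mod_cast this
            refine le_trans ?_ (le_add_of_nonneg_left (ind_nonneg _))
            refine le_trans (Ex_mono (hπ _) ?_) (h2 D hD1 hD2.1)
            intro H' _
            apply ind_mono
            intro hG hT
            apply hG
            obtain ⟨N, ⟨S, hSN, hS⟩, hDN, hN⟩ := hT
            obtain ⟨Comp, hC, hNC⟩ := (hN H hD2).component (hDne.mono hDN)
            exact ⟨Comp, S, hC, hSN.trans hNC, fun L hL => hS L hL⟩
          · rw [ind_true hL]
            refine le_trans (Ex_mono (hπ _) (fun H' _ => ind_le_one _)) ?_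
            rw [Ex_const]; linarith
      _ ≤ _ := by rw [Ex_add, Ex_const]; linarith
  have h3 : Ex (kSets n k) (fun _ => p) (fun H => ind (Good j m δ H)) +
      Ex (kSets n k) (fun _ => p) (fun H => ind (¬ Good j m δ H)) = 1 := by
    rw [← Ex_add, Ex_congr (g := fun _ => 1), Ex_const]
    intro H _
    rw [ind_not]; ring
  linarith

lemma binomProb_le_one {n k : ℕ} {p : ℝ} (hp0 : 0 ≤ p) (hp1 : p ≤ 1) (Q : Finset (Finset (Fin n)) → Prop) :
    binomProb n k p Q ≤ 1 := by
  rw [binomProb_eq_Ex]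
  refine le_trans (Ex_mono (fun _ _ => ⟨hp0, hp1⟩) (fun H' _ => ind_le_one _)) ?_
  rw [Ex_const]

lemma choose_ge {n k r : ℕ} (hk : 1 ≤ k) (hr : r ≤ k) (hkn : k ≤ n) :
    (n : ℝ) ^ r ≤ ((k : ℝ) ^ k) ^ 2 * (n.choose r : ℝ) := by
  rcases Nat.eq_zero_or_pos r with rfl | hr0
  · simp only [pow_zero, Nat.choose_zero_right, Nat.cast_one, mul_one]
    have : 1 ≤ (k ^ k) ^ 2 := Nat.one_le_pow _ _ (Nat.pow_pos (by omega))
    exact_mod_cast this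
  · have h0 : n ≤ r * (n + 1 - r) := by
      obtain ⟨a, rfl⟩ : ∃ a, n = r + a := ⟨n - r, by omega⟩
      obtain ⟨b, rfl⟩ : ∃ b, r = b + 1 := ⟨r - 1, by omega⟩
      rw [show b + 1 + a + 1 - (b + 1) = a + 1 by omega]
      nlinarith [Nat.zero_le (a * b)]
    have h1 : (n + 1 - r) ^ r ≤ n.descFactorial r := Nat.pow_sub_le_descFactorial n r
    rw [Nat.descFactorial_eq_factorial_mul_choose] at h1
    have h2 : r ^ r ≤ k ^ k := (Nat.pow_le_pow_left hr r).trans (Nat.pow_le_pow_right (by omega) hr)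
    have h3 : r.factorial ≤ k ^ k := (Nat.factorial_le_pow r).trans h2
    have : n ^ r ≤ (k ^ k) ^ 2 * n.choose r := by
      calc n ^ r ≤ (r * (n + 1 - r)) ^ r := Nat.pow_le_pow_left h0 r
        _ = r ^ r * (n + 1 - r) ^ r := mul_pow _ _ _
        _ ≤ r ^ r * (r.factorial * n.choose r) := Nat.mul_le_mul_left _ h1
        _ ≤ k ^ k * (k ^ k * n.choose r) := Nat.mul_le_mul h2 (Nat.mul_le_mul_right _ h3)
        _ = _ := by ring
    exact_mod_cast this

lemma choose_drop (n d s : ℕ) (hs : s ≤ n) (hn : 0 < n) :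
    (n.choose d : ℝ) * (1 - (s : ℝ) * d / n) ≤ ((n - s).choose d : ℝ) := by
  have hn' : (0 : ℝ) < n := by exact_mod_cast hn
  rcases Nat.eq_zero_or_pos d with rfl | hd
  · simp
  obtain ⟨d, rfl⟩ : ∃ d', d = d' + 1 := ⟨d - 1, by omega⟩
  have h1 : ∀ s ≤ n, (n.choose (d + 1) : ℝ) - s * ((n - 1).choose d : ℝ) ≤ ((n - s).choose (d + 1) : ℝ) := by
    intro s
    induction s with
    | zero => simp
    | succ s ih =>
      intro hs
      have := ih (by omega)
      obtain ⟨a, ha⟩ : ∃ a, n - s = a + 1 := ⟨n - s - 1, by omega⟩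
      rw [ha, Nat.choose_succ_succ] at this
      have h2 : n - (s + 1) = a := by omega
      rw [h2]
      have h3 : (a.choose d : ℝ) ≤ ((n - 1).choose d : ℝ) := by
        exact_mod_cast Nat.choose_le_choose d (by omega)
      push_cast at this ⊢
      linarith
  have h2 := h1 s hs
  have h3 : (n : ℝ) * ((n - 1).choose d : ℝ) = (n.choose (d + 1) : ℝ) * ((d : ℝ) + 1) := by
    have := Nat.add_one_mul_choose_eq (n - 1) d
    rw [Nat.sub_add_cancel hn] at this
    exact_mod_cast this
  have h4 : ((n - 1).choose d : ℝ) = (n.choose (d + 1) : ℝ) * ((d : ℝ) + 1) / n := by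
    rw [← h3]; field_simp
  rw [h4] at h2
  push_cast
  calc _ = _ := ?_
    _ ≤ _ := h2
  ring

lemma root_exists {p : ℝ} (h0 : 0 ≤ p) (h1 : p ≤ 1) (N : ℕ) (hN : 0 < N) :
    ∃ p', 0 ≤ p' ∧ p' ≤ 1 ∧ p' ≤ p ∧ p ≤ N * p' ∧ (1 - p') ^ N = 1 - p := by
  have hN' : (1 : ℝ) ≤ N := by exact_mod_cast hN
  have hpow : ((1 - p) ^ ((N : ℝ)⁻¹)) ^ N = 1 - p := Real.rpow_inv_natCast_pow (by linarith) (by omega)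
  have ha0 : 0 ≤ (1 - p) ^ ((N : ℝ)⁻¹) := Real.rpow_nonneg (by linarith) _
  have ha1 : (1 - p) ^ ((N : ℝ)⁻¹) ≤ 1 := Real.rpow_le_one (by linarith) (by linarith) (by positivity)
  generalize (1 - p) ^ ((N : ℝ)⁻¹) = a at *
  refine ⟨1 - a, by linarith, by linarith, ?_, ?_, ?_⟩
  · have : a ^ N ≤ a := pow_le_of_le_one ha0 ha1 (by omega)
    linarith
  · have := one_add_mul_le_pow (a := a - 1) (by linarith) N
    rw [show 1 + (a - 1) = a by ring, hpow] at this
    linarith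
  · rw [show 1 - (1 - a) = a by ring, hpow]


lemma num_theta {p M c B e : ℝ} (hp0 : 0 ≤ p) (hB2 : 2 ≤ B) (he2 : 6 * B * e ≤ 1)
    (hpc : p * c * B = 1 + e) (hMle : M ≤ c) :
    (1 + 1 / (6 * B)) * p * M * (B + 1 - 2) ≤ 1 - 1 / (2 * B) := by
  have hB0 : 0 < B := by linarith
  have h1 : p * M ≤ p * c := mul_le_mul_of_nonneg_left hMle hp0
  have h2 : p * c = (1 + e) / B := by rw [← hpc]; field_simp
  have h3 : e ≤ 1 / (6 * B) := by rw [le_div_iff₀ (by positivity)]; linarith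
  obtain ⟨u, hu⟩ : ∃ u, u = 1 / (6 * B) := ⟨_, rfl⟩
  have hu0 : 0 < u := by rw [hu]; positivity
  have hBu : B * u = 1 / 6 := by rw [hu]; field_simp
  have h6 : 1 / (2 * B) = 3 * u := by rw [hu]; field_simp; norm_num
  have h7 : 1 / B = 6 * u := by rw [hu]; field_simp
  have h8 : (1 + e) / B = (1 + e) * (6 * u) := by rw [← h7]; ring
  rw [← hu] at h3
  rw [h6, ← hu]
  have h12 : u ≤ 1 / 12 := by
    rw [hu]
    apply one_div_le_one_div_of_le <;> linarith
  have h9 : p * M * (B + 1 - 2) ≤ (1 + u) * (1 - 6 * u) := by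
    have : p * M * (B + 1 - 2) ≤ (1 + e) * (6 * u) * (B + 1 - 2) :=
      mul_le_mul_of_nonneg_right (by rw [← h8, ← h2]; exact h1) (by linarith)
    have h10 : (1 + e) * (6 * u) * (B + 1 - 2) = (1 + e) * (1 - 6 * u) := by
      linear_combination (1 + e) * 6 * hBu
    have h13 : (1 + e) * (1 - 6 * u) ≤ (1 + u) * (1 - 6 * u) :=
      mul_le_mul_of_nonneg_right (by linarith) (by linarith)
    linarith
  have h10 : (1 + u) * p * M * (B + 1 - 2) = (1 + u) * (p * M * (B + 1 - 2)) := by ring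
  rw [h10]
  have h11 : (1 + u) * (p * M * (B + 1 - 2)) ≤ (1 + u) * ((1 + u) * (1 - 6 * u)) :=
    mul_le_mul_of_nonneg_left h9 (by linarith)
  clear * - h11 hu0
  nlinarith [mul_pos hu0 hu0, mul_pos (mul_pos hu0 hu0) hu0]

lemma num_sup {p M c B e : ℝ} (hp0 : 0 ≤ p) (hB2 : 2 ≤ B) (he0 : 0 < e) (he1 : e ≤ 1 / 16)
    (hpc : p * c * B = 1 + e) (hM2 : c * (1 - 3 * e / 16) ≤ M) :
    1 + e / 8 ≤ (B + 1 - 1) * p * ((1 - e / 8) * M) * (1 - e / 16) := by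
  have h1 : (1 + e) * (1 - 3 * e / 16) ≤ B * p * M := by
    calc (1 + e) * (1 - 3 * e / 16) = B * p * (c * (1 - 3 * e / 16)) := by rw [← hpc]; ring
      _ ≤ _ := mul_le_mul_of_nonneg_left hM2 (by positivity)
  have h2 : (B + 1 - 1) * p * ((1 - e / 8) * M) * (1 - e / 16) =
      (B * p * M) * ((1 - e / 8) * (1 - e / 16)) := by ring
  rw [h2]
  have h3 : (1 + e) * (1 - 3 * e / 16) * ((1 - e / 8) * (1 - e / 16)) ≤
      (B * p * M) * ((1 - e / 8) * (1 - e / 16)) := by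
    apply mul_le_mul_of_nonneg_right h1
    apply mul_nonneg <;> linarith
  refine le_trans ?_ h3
  clear * - he0 he1
  have h4 : 1 + 3 * e / 4 ≤ (1 + e) * (1 - 3 * e / 16) := by nlinarith
  have h5 : 1 - 3 * e / 16 ≤ (1 - e / 8) * (1 - e / 16) := by nlinarith
  calc 1 + e / 8 ≤ (1 + 3 * e / 4) * (1 - 3 * e / 16) := by nlinarith
    _ ≤ _ := mul_le_mul h4 h5 (by linarith) (by nlinarith)

lemma num_half {c e M : ℝ} (hc : 1 ≤ c) (he1 : e ≤ 1 / 16) (hM2 : c * (1 - 3 * e / 16) ≤ M) : c / 2 ≤ M := by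
  have : c * (1 / 2) ≤ c * (1 - 3 * e / 16) := mul_le_mul_of_nonneg_left (by linarith) (by linarith)
  linarith

lemma num_Gam {x B : ℝ} (hx : 0 ≤ x) (hB : 2 ≤ B) : 1 ≤ (2 + x) * (2 * B) := by nlinarith

lemma num_y {t e : ℝ} (ht : 8 ≤ t) (he1 : e ≤ 1 / 16) : t * (e / 16) + 1 ≤ t := by nlinarith

lemma num_pA {p x A c B e : ℝ} (hx : x ≤ A * c) (hp0 : 0 ≤ p) (hB2 : 2 ≤ B) (hc : 1 ≤ c) (hA : 1 ≤ A)
    (he1 : e ≤ 1 / 16) (hpc : p * c * B = 1 + e) : p * x ≤ A := by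
  have h1 : p * x ≤ p * (A * c) := mul_le_mul_of_nonneg_left hx hp0
  have h0 : 0 ≤ p * c := by positivity
  have h2 : p * c ≤ 1 := by
    have : p * c * 2 ≤ p * c * B := mul_le_mul_of_nonneg_left hB2 h0
    linarith
  have h3 : A * (p * c) ≤ A * 1 := mul_le_mul_of_nonneg_left h2 (by linarith)
  linarith [mul_left_comm p A c]

lemma num_drop {s j d k e n : ℝ} (hs : 0 ≤ s) (hj : 0 ≤ j) (hd : d ≤ k) (hjk : j ≤ k) (hk : 3 ≤ k)
    (hR : s * (8 * k) ≤ e * n) (hW : 16 * k ^ 2 ≤ e * n) : (s + j) * d ≤ 3 * e / 16 * n := by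
  have h1 : (s + j) * d ≤ (s + j) * k := mul_le_mul_of_nonneg_left hd (by positivity)
  have h2 : j * k ≤ k * k := mul_le_mul_of_nonneg_right hjk (by linarith)
  linarith [pow_two k, add_mul s j k]

lemma num_drop2 {s j k e n : ℝ} (hs : 0 ≤ s) (hjk : j ≤ k) (hk : 3 ≤ k) (hn : 0 ≤ n) (he : e ≤ 1 / 16)
    (hR : s * (8 * k) ≤ e * n) : s * j ≤ 1 / 2 * n := by
  have h1 : s * j ≤ s * k := mul_le_mul_of_nonneg_left hjk hs
  have h2 : e * n ≤ 1 / 16 * n := mul_le_mul_of_nonneg_right he hn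
  linarith

lemma num_sj {s j k e n : ℝ} (hs : 0 ≤ s) (hjk : j ≤ k) (hk : 3 ≤ k) (hn : 16 * k ^ 2 ≤ n) (he : e ≤ 1 / 16)
    (hR : s * (8 * k) ≤ e * n) : s + j ≤ n := by
  have h1 : s * 1 ≤ s * (8 * k) := mul_le_mul_of_nonneg_left (by linarith) hs
  have hn0 : 0 ≤ n := by nlinarith
  have h2 : e * n ≤ 1 / 16 * n := mul_le_mul_of_nonneg_right he hn0
  have h3 : k * 3 ≤ k * k := mul_le_mul_of_nonneg_left hk (by linarith)
  linarith [pow_two k]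

lemma H1_build {k j n : ℕ} {V : Finset (Fin n)} {e p A B Γ c0 c M : ℝ} (hj : 1 ≤ j) (hjk : j + 1 ≤ k)
    (hC : (k.choose j : ℝ) = B + 1) (hB2 : 2 ≤ B) (hA1 : 1 ≤ A)
    (hΓ : Γ = (2 + 2 * (k.choose j : ℝ) * A * 2 ^ j) * (2 * B))
    (hc0 : 0 < c0) (hc1 : c0 * (16 * A * (2 * Γ) ^ j) ≤ 1)
    (he0 : 0 < e) (he1 : e ≤ 1 / 16) (he2 : 6 * B * e ≤ 1) (hn : 0 < n) (hW2 : 8 ≤ c0 * e * n)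
    (hp0 : 0 ≤ p) (hp1 : p ≤ 1) (hpA : p * (n : ℝ) ^ (k - j) ≤ A) (hc' : 1 ≤ c)
    (hpc : p * c * B = 1 + e) (hge : (n : ℝ) ^ (k - j) ≤ A * c)
    (hM2 : c * (1 - 3 * e / 16) ≤ M) (hMle : M ≤ c) (hMdef : (((V.card - j).choose (k - j) : ℕ) : ℝ) = M)
    (hcapV : c0 * e * (n : ℝ) ^ j ≤ (Finset.powersetCard j V).card) :
    H1 n k j V p e (c0 * e * (n : ℝ) ^ j) (c0 / (16 * B) * e ^ 2 * n) (1 / (6 * B))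
      (1 / (6 * B) / (B + 1)) Γ A (1 / (2 * B)) := by
  have hB0 : 0 < B := by linarith
  have hn0 : (0 : ℝ) < n := by exact_mod_cast hn
  have hn1' : (1 : ℝ) ≤ n := by exact_mod_cast hn
  have hΓ1 : 1 ≤ Γ := by
    rw [hΓ]
    exact num_Gam (by positivity) hB2
  have hnj : (n : ℝ) ≤ (n : ℝ) ^ j := by
    calc (n : ℝ) = (n : ℝ) ^ 1 := (pow_one _).symm
      _ ≤ _ := pow_le_pow_right₀ hn1' hj
  have hcapn : c0 * e * n ≤ c0 * e * (n : ℝ) ^ j := mul_le_mul_of_nonneg_left hnj (by positivity)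
  have hM0 : c / 2 ≤ M := num_half hc' he1 hM2
  have hkj : (n : ℝ) ^ k = (n : ℝ) ^ (k - j) * (n : ℝ) ^ j := by
    rw [← pow_add]; congr 1; omega
  exact {
    hn := hn
    hjk := hjk
    hj := hj
    hp0 := hp0
    hp1 := hp1
    he0 := he0
    he1 := by linarith
    hcap4 := by linarith
    hcapV := hcapV
    hη0 := by positivity
    hη1 := by rw [div_le_one (by positivity)]; linarith
    hlam0 := by positivity
    hlamη := by rw [hC]; exact le_of_eq (by field_simp)
    hΛ0 := by linarith
    hΛ := by
      rw [hkj, mul_div_assoc, div_self (by positivity), mul_one]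
      exact hpA
    hθ0 := by positivity
    hθ := by rw [hMdef, hC]; exact num_theta hp0 hB2 he2 hpc hMle
    hΓ1 := hΓ1
    hΓ := by
      rw [hΓ]
      exact le_of_eq (by field_simp)
    hy0 := by positivity
    hy1 := by
      rw [hC]
      have h1 : c0 * e * (n : ℝ) ^ j / (n : ℝ) ^ (j - 1) = c0 * e * n := by
        obtain ⟨i, rfl⟩ : ∃ i, j = i + 1 := ⟨j - 1, by omega⟩
        rw [Nat.add_sub_cancel, pow_succ]
        field_simp
      rw [h1]
      have h2 : (B + 1 - 1) * (c0 / (16 * B) * e ^ 2 * n) = c0 * e * n * (e / 16) := by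
        field_simp
        ring
      rw [h2]
      exact num_y hW2 he1
    hbad := by
      rw [hMdef, hkj]
      have h1 : c0 * e * (n : ℝ) ^ j * ((n : ℝ) ^ (k - j) * (n : ℝ) ^ j / (n : ℝ) ^ (2 * j)) =
          c0 * e * (n : ℝ) ^ (k - j) := by
        rw [two_mul, pow_add]
        field_simp
      rw [h1, ← mul_pow]
      have h2 : (2 * Γ) ^ j * (c0 * e * (n : ℝ) ^ (k - j)) ≤ (2 * Γ) ^ j * (c0 * e * (A * c)) := by
        gcongr
      have h3 : (2 * Γ) ^ j * (c0 * e * (A * c)) = (c0 * (16 * A * (2 * Γ) ^ j)) * (e * c / 16) := by ring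
      have h4 : (c0 * (16 * A * (2 * Γ) ^ j)) * (e * c / 16) ≤ 1 * (e * c / 16) :=
        mul_le_mul_of_nonneg_right hc1 (by positivity)
      have h5 : e * (c / 2) ≤ e * M := mul_le_mul_of_nonneg_left hM0 he0.le
      linarith
    hsup := by rw [hMdef, hC]; exact num_sup hp0 hB2 he0 he1 hpc hM2
    hyc := by
      rw [hC]
      have h2 : 16 * ((B + 1 - 1) * (c0 / (16 * B) * e ^ 2 * n)) = e * (c0 * e * n) := by
        field_simp
        ring
      rw [h2]
      exact mul_le_mul_of_nonneg_left hcapn he0.le }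


lemma H1_holds {k j n : ℕ} {e p A B Γ c0 : ℝ} (hk : 3 ≤ k) (hj : 1 ≤ j) (hjk : j + 1 ≤ k)
    (hB : B = (k.choose j : ℝ) - 1) (hB2 : 2 ≤ B) (hA : A = ((k : ℝ) ^ k) ^ 2) (hA1 : 1 ≤ A)
    (hΓ : Γ = (2 + 2 * (k.choose j : ℝ) * A * 2 ^ j) * (2 * B))
    (hc0 : 0 < c0) (hc1 : c0 * (16 * A * (2 * Γ) ^ j) ≤ 1) (hc2 : 2 * A * c0 ≤ 1)
    (he0 : 0 < e) (he1 : e ≤ 1 / 16) (he2 : 6 * B * e ≤ 1)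
    (hW1 : 16 * (k : ℝ) ^ 2 ≤ e * n) (hW2 : 8 ≤ c0 * e * n)
    (hp : p = (1 + e) / (B * (n.choose (k - j) : ℝ))) (R : Finset (Fin n))
    (hR : (R.card : ℝ) * (8 * k) ≤ e * n) :
    0 ≤ p ∧ p ≤ 1 ∧ p * (n : ℝ) ^ (k - j) ≤ A ∧ 1 / (B * (n : ℝ) ^ (k - j)) ≤ p ∧
    H1 n k j (Finset.univ \ R) p e (c0 * e * (n : ℝ) ^ j) (c0 / (16 * B) * e ^ 2 * n) (1 / (6 * B))
      (1 / (6 * B) / (B + 1)) Γ A (1 / (2 * B)) := by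
  have hk' : (3 : ℝ) ≤ k := by exact_mod_cast hk
  have hn1 : 16 * (k : ℝ) ^ 2 ≤ n := by
    have h0 : (0 : ℝ) ≤ n := Nat.cast_nonneg _
    clear * - he1 hW1 h0
    nlinarith
  have hkn' : (k : ℝ) ≤ n := by clear * - hk' hn1; nlinarith
  have hkn : k ≤ n := by exact_mod_cast hkn'
  have hn : 0 < n := by omega
  have hn0 : (0 : ℝ) < n := by exact_mod_cast hn
  have hn1' : (1 : ℝ) ≤ n := by exact_mod_cast hn
  have hB0 : 0 < B := by linarith
  have hC : (k.choose j : ℝ) = B + 1 := by linarith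
  set d := k - j with hd
  have hdk : d ≤ k := by omega
  have hjk' : (j : ℝ) ≤ k := by exact_mod_cast (by omega : j ≤ k)
  have hj' : (1 : ℝ) ≤ j := by exact_mod_cast hj
  have hdk' : (d : ℝ) ≤ k := by exact_mod_cast hdk
  have hc : 1 ≤ n.choose d := Nat.choose_pos (hdk.trans hkn)
  have hc' : (1 : ℝ) ≤ (n.choose d : ℝ) := by exact_mod_cast hc
  have hge := choose_ge (n := n) (k := k) (r := d) (by omega) hdk hkn
  rw [← hA] at hge
  have hgej := choose_ge (n := n) (k := k) (r := j) (by omega) (by omega) hkn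
  rw [← hA] at hgej
  have hle : (n.choose d : ℝ) ≤ (n : ℝ) ^ d := by exact_mod_cast Nat.choose_le_pow n d
  have hV : (Finset.univ \ R).card = n - R.card := by
    rw [Finset.card_sdiff_of_subset (Finset.subset_univ _), Finset.card_univ, Fintype.card_fin]
  generalize R.card = s at hR hV
  have hs0 : (0 : ℝ) ≤ s := Nat.cast_nonneg _
  have hR1 : (s : ℝ) + j ≤ n := num_sj hs0 hjk' hk' hn1 he1 hR
  have hR2 : s + j ≤ n := by exact_mod_cast hR1
  have hM1 := choose_drop n d (s + j) hR2 hn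
  have hVj : (Finset.univ \ R).card - j = n - (s + j) := by rw [hV]; omega
  have hMle : ((n - (s + j)).choose d : ℝ) ≤ (n.choose d : ℝ) := by
    exact_mod_cast Nat.choose_le_choose d (by omega)
  have hdrop : ((s + j : ℕ) : ℝ) * d / n ≤ 3 * e / 16 := by
    rw [div_le_iff₀ hn0]
    push_cast
    exact num_drop hs0 (by linarith) hdk' hjk' hk' hR hW1
  have hVc := choose_drop n j s (by omega) hn
  have hdropj : (s : ℝ) * j / n ≤ 1 / 2 := by
    rw [div_le_iff₀ hn0]
    exact num_drop2 hs0 hjk' hk' hn0.le he1 hR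
  set c : ℝ := (n.choose d : ℝ) with hcdef
  have hM2 : c * (1 - 3 * e / 16) ≤ ((n - (s + j)).choose d : ℝ) :=
    le_trans (mul_le_mul_of_nonneg_left (by linarith) (by linarith)) hM1
  have hpc : p * c * B = 1 + e := by rw [hp]; field_simp
  have hp0 : 0 ≤ p := by rw [hp]; positivity
  have hp1 : p ≤ 1 := by
    rw [hp, div_le_one (by positivity)]
    have : 2 * 1 ≤ B * c := mul_le_mul hB2 hc' (by norm_num) hB0.le
    linarith
  have hpA : p * (n : ℝ) ^ d ≤ A := by
    exact num_pA hge hp0 hB2 hc' hA1 he1 hpc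
  have hpl : 1 / (B * (n : ℝ) ^ d) ≤ p := by
    rw [hp]
    apply div_le_div₀ <;> first | positivity | linarith | skip
    exact mul_le_mul_of_nonneg_left hle hB0.le
  refine ⟨hp0, hp1, hpA, hpl, ?_⟩
  have hcapV : c0 * e * (n : ℝ) ^ j ≤ (Finset.powersetCard j (Finset.univ \ R)).card := by
    rw [Finset.card_powersetCard, hV]
    refine le_trans ?_ hVc
    have h1 : (n.choose j : ℝ) * (1 / 2) ≤ (n.choose j : ℝ) * (1 - (s : ℝ) * j / n) :=
      mul_le_mul_of_nonneg_left (by linarith) (by positivity)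
    refine le_trans ?_ h1
    have h2 : c0 * e * (n : ℝ) ^ j ≤ c0 * 1 * (A * (n.choose j : ℝ)) := by
      gcongr
      linarith
    have h3 : (0 : ℝ) ≤ n.choose j := Nat.cast_nonneg _
    have h4 : 2 * A * c0 * (n.choose j : ℝ) ≤ 1 * (n.choose j : ℝ) := mul_le_mul_of_nonneg_right hc2 h3
    linarith
  exact H1_build hj hjk hC hB2 hA1 hΓ hc0 hc1 he0 he1 he2 hn hW2 hp0 hp1 hpA hc' hpc hge hM2 hMle
    (by rw [hVj]) hcapV


lemma Par_holds {k j n : ℕ} {p p' A B γ β : ℝ} {N : ℕ} (hj : 1 ≤ j) (hjk : j + 1 ≤ k)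
    (hA : A = ((k : ℝ) ^ k) ^ 2) (hA1 : 1 ≤ A) (hB2 : 2 ≤ B) (hN : 0 < N)
    (hγ : γ = 1 / (2 * A * B * N)) (hβ : β = γ / (k.choose j * (1 + A)) / 2)
    (hn1 : 16 * (k : ℝ) ^ 2 ≤ n) (hkn : k ≤ n)
    (hpA : p * (n : ℝ) ^ (k - j) ≤ A) (hpl : 1 / (B * (n : ℝ) ^ (k - j)) ≤ p)
    (h0 : 0 ≤ p') (h1 : p' ≤ 1) (hp' : p' ≤ p) (hpN : p ≤ N * p') :
    Par n k j p' A γ β := by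
  have hn : 0 < n := by omega
  have hn0 : (0 : ℝ) < n := by exact_mod_cast hn
  have hN0 : (0 : ℝ) < N := by exact_mod_cast hN
  obtain ⟨d, hd⟩ : ∃ d, k - j = d + 1 := ⟨k - j - 1, by omega⟩
  have hd1 : k - j - 1 = d := by omega
  have hge := choose_ge (n := n) (k := k) (r := d) (by omega) (by omega) hkn
  rw [← hA] at hge
  have hdrop := choose_drop n d (j + 1) (by omega) hn
  have hsm : ((j + 1 : ℕ) : ℝ) * d / n ≤ 1 / 2 := by
    rw [div_le_iff₀ hn0]
    have h2 : ((j + 1 : ℕ) : ℝ) ≤ k := by exact_mod_cast hjk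
    have h3 : (d : ℝ) ≤ k := by exact_mod_cast (by omega : d ≤ k)
    have h4 : ((j + 1 : ℕ) : ℝ) * d ≤ k * k := mul_le_mul h2 h3 (Nat.cast_nonneg _) (Nat.cast_nonneg _)
    nlinarith
  have hch : (n.choose d : ℝ) / 2 ≤ ((n - (j + 1)).choose d : ℝ) := by
    refine le_trans ?_ hdrop
    have : (n.choose d : ℝ) * (1 / 2) ≤ (n.choose d : ℝ) * (1 - ((j + 1 : ℕ) : ℝ) * d / n) :=
      mul_le_mul_of_nonneg_left (by linarith) (Nat.cast_nonneg _)
    linarith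
  have hB0 : 0 < B := by linarith
  have hA0 : 0 < A := by linarith
  have hγ0 : 0 < γ := by rw [hγ]; positivity
  have hC0 : (0 : ℝ) < k.choose j := by exact_mod_cast Nat.choose_pos (by omega)
  exact {
    hjk := hjk
    hj := hj
    hkn := hkn
    h0 := h0
    h1 := h1
    hΛ := le_trans (mul_le_mul_of_nonneg_right hp' (by positivity)) hpA
    hγ := by
      rw [hd1, show n - j - 1 = n - (j + 1) by omega]
      rw [hd] at hpl
      have h5 : 1 / (B * (n : ℝ) ^ (d + 1) * N) ≤ p' := by
        rw [← div_div, div_le_iff₀ hN0]; linarith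
      have h6 : (n : ℝ) ^ d / (2 * A) ≤ ((n - (j + 1)).choose d : ℝ) := by
        refine le_trans ?_ hch
        rw [div_le_iff₀ (by positivity)]
        linarith
      calc γ = 1 / (B * (n : ℝ) ^ (d + 1) * N) * n * ((n : ℝ) ^ d / (2 * A)) := by
            rw [hγ, pow_succ]; field_simp
        _ ≤ _ := by gcongr
    hβ := by rw [hβ]; ring
    hβ0 := by rw [hβ]; positivity }

lemma phase2_holds {k j n : ℕ} {e p A B β c0 c1 ρ X δ' : ℝ} (hj2 : 2 ≤ j) (hjk : j + 1 ≤ k)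
    (hA : A = ((k : ℝ) ^ k) ^ 2) (hA1 : 1 ≤ A) (hB2 : 2 ≤ B)
    (hβ : β = 1 / (2 * A * B * (k.choose j * (j + 1) : ℕ)) / (k.choose j * (1 + A)) / 2)
    (hc0 : 0 < c0) (hc1 : c1 = c0 * β ^ (j + 1) / (16 * k))
    (hn1 : 16 * (k : ℝ) ^ 2 ≤ n) (hkn : k ≤ n)
    (hp0 : 0 ≤ p) (hp1 : p ≤ 1)
    (hpA : p * (n : ℝ) ^ (k - j) ≤ A) (hpl : 1 / (B * (n : ℝ) ^ (k - j)) ≤ p)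
    (he0 : 0 < e) (he1 : e ≤ 1) (he3 : 2 * e ≤ c1) (R : Finset (Fin n))
    (hρ : ρ = e * n / (16 * k))
    (hR : ρ + k ≤ R.card) (hX : X = c0 * β ^ j * e ^ 2 * n / (32 * k)) (hδ : 0 ≤ δ' ∧ δ' ≤ 1)
    {D : Finset (Finset (Fin n))} (hD : c0 * e * (n : ℝ) ^ j / 2 ≤ D.card) (hDj : ∀ J ∈ D, J.card = j) :
    Ex (UR n k R) (fun _ => p) (fun H => ind (¬ Tgt j (e ^ 3 * n) (δ' + j / (e ^ 3 * n)) D H)) ≤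
      j * ((n : ℝ) ^ j * Real.exp (-(X / 5))) +
      (n : ℝ) ^ j * (2 * Real.exp (-(δ' ^ 2 * (c1 * e ^ 2 * (n - j + 1 : ℕ)) / 4))) := by
  have hC1 : 1 ≤ k.choose j := Nat.choose_pos (by omega)
  have hN : 0 < k.choose j * (j + 1) := by positivity
  obtain ⟨p', h0, h1, hpp, hpN, hpow⟩ := root_exists hp0 hp1 _ hN
  have P := Par_holds (by omega) hjk hA hA1 hB2 hN rfl hβ hn1 hkn hpA hpl h0 h1 hpp hpN
  have hn : 0 < n := by omega
  have hn0 : (0 : ℝ) < n := by exact_mod_cast hn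
  have hk0 : (0 : ℝ) < k := by exact_mod_cast (by omega : 0 < k)
  have hk1 : (1 : ℝ) ≤ k := by exact_mod_cast (by omega : 1 ≤ k)
  have hN1 : (1 : ℝ) ≤ (k.choose j * (j + 1) : ℕ) := by exact_mod_cast hN
  have hC1' : (1 : ℝ) ≤ k.choose j := by exact_mod_cast hC1
  have hβ0 : 0 < β := by
    rw [hβ]
    have : (0 : ℝ) < (k.choose j * (j + 1) : ℕ) := by linarith
    have : (0 : ℝ) < k.choose j := by linarith
    have hA0 : 0 < A := by linarith
    have hB0 : 0 < B := by linarith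
    positivity
  have hβ1 : β ≤ 1 := by
    rw [hβ, div_div, div_div]
    apply div_le_one_of_le₀ _ (by positivity)
    have a1 : 1 ≤ 2 * A * B := by nlinarith
    have a2 : 1 ≤ 2 * A * B * (k.choose j * (j + 1) : ℕ) := one_le_mul_of_one_le_of_one_le a1 hN1
    have a3 : 1 ≤ (k.choose j : ℝ) * (1 + A) * 2 := by nlinarith
    exact one_le_mul_of_one_le_of_one_le a2 (by linarith)
  have hπ : (fun _ : Finset (Fin n) => p) = fun _ => 1 - ((1 - p') ^ (k.choose j)) ^ (j + 1) := by
    funext _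
    rw [← pow_mul, hpow]; ring
  rw [hπ]
  have hρ0 : 0 ≤ ρ := by rw [hρ]; positivity
  have hX1 : c0 * e * (n : ℝ) ^ j / 2 * (β / n) ^ j * ρ = X := by
    rw [hX, hρ, div_pow]
    field_simp
    ring
  have hq : c1 * e ^ 2 = 2 * (c0 * e * (n : ℝ) ^ j / 2 * (β / n) ^ j * ρ * (β / n)) := by
    rw [hX1, hX, hc1, pow_succ]
    field_simp
    ring
  refine phase2 P R hj2 (x0 := c0 * e * (n : ℝ) ^ j / 2) (ρ := ρ) (X := X) (q := c1 * e ^ 2)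
    (by positivity) hρ0 ?_ ?_ hX1.ge hq (by positivity) ?_ hδ hD hDj
  · intro L hL
    rw [mem_jS] at hL
    have h2 : R.card ≤ (R \ L).card + L.card := by
      have := Finset.le_card_sdiff L R
      omega
    have h3 : (R.card : ℝ) ≤ (R \ L).card + L.card := by exact_mod_cast h2
    have h4 : (L.card : ℝ) ≤ k := by exact_mod_cast (by omega : L.card ≤ k)
    linarith
  · intro i hi hij
    have h2 : c0 * e * (n : ℝ) ^ j / 2 * (β / n) ^ i = c0 * e / 2 * β ^ i * (n : ℝ) ^ (j - i) := by
      have : (n : ℝ) ^ j = (n : ℝ) ^ (j - i) * (n : ℝ) ^ i := by rw [← pow_add]; congr 1; omega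
      rw [this, div_pow]
      field_simp
    rw [h2]
    have hnn : (n : ℝ) ≤ (n : ℝ) ^ (j - i) := by
      calc (n : ℝ) = (n : ℝ) ^ 1 := (pow_one _).symm
        _ ≤ _ := pow_le_pow_right₀ (by exact_mod_cast hn) (by omega)
    have hbb : β ^ j ≤ β ^ i := pow_le_pow_of_le_one hβ0.le hβ1 hij.le
    have h3 : X = c0 * e / 2 * β ^ j * n * (e / (16 * k)) := by rw [hX]; field_simp; ring
    have h4 : e / (16 * k) ≤ 1 := by rw [div_le_one (by positivity)]; linarith
    calc X = c0 * e / 2 * β ^ j * n * (e / (16 * k)) := h3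
      _ ≤ c0 * e / 2 * β ^ j * n * 1 := mul_le_mul_of_nonneg_left h4 (by positivity)
      _ = c0 * e / 2 * β ^ j * n := mul_one _
      _ ≤ _ := by gcongr
  · have h2 : (n : ℝ) / 2 ≤ (n - j + 1 : ℕ) := by
      have h5 : n ≤ (n - j + 1) + k := by omega
      have h6 : (n : ℝ) ≤ (n - j + 1 : ℕ) + k := by exact_mod_cast h5
      nlinarith
    have hc10 : 0 ≤ c1 := by linarith
    calc e ^ 3 * n = e * e ^ 2 * n := by ring
      _ ≤ c1 / 2 * e ^ 2 * n := by gcongr; linarith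
      _ = c1 * e ^ 2 * (n / 2) := by ring
      _ ≤ _ := mul_le_mul_of_nonneg_left h2 (by positivity)

lemma sm_one {n : ℕ} {m δ : ℝ} {D : Finset (Finset (Fin n))} (hm : 0 < m) (hδ : 1 / m ≤ δ)
    (hD : m ≤ D.card) : Sm 1 m δ D := by
  have h1 : ⌊m⌋₊ ≤ D.card := Nat.floor_le_of_le hD
  obtain ⟨S, hS, hc⟩ := Finset.exists_subset_card_eq h1
  refine ⟨S, hS, ?_⟩
  intro L hL
  have hL0 : L = ∅ := Finset.card_eq_zero.1 hL
  have h2 : dg S L = ⌊m⌋₊ := by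
    rw [← hc, dg, hL0]
    simp
  rw [h2]
  have h3 := Nat.floor_le hm.le
  have h4 := Nat.lt_floor_add_one m
  have h5 : 1 ≤ δ * m := by
    have := mul_le_mul_of_nonneg_right hδ hm.le
    rwa [one_div, inv_mul_cancel₀ hm.ne'] at this
  rw [abs_le]
  constructor <;> linarith


lemma choose_ge_three {k j : ℕ} (hk : 3 ≤ k) (hj : 1 ≤ j) (hjk : j + 1 ≤ k) : 3 ≤ k.choose j := by
  obtain ⟨a, rfl⟩ : ∃ a, k = a + 1 := ⟨k - 1, by omega⟩
  obtain ⟨b, rfl⟩ : ∃ b, j = b + 1 := ⟨j - 1, by omega⟩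
  rw [Nat.choose_succ_succ]
  rcases Nat.eq_zero_or_pos b with rfl | hb
  · simp; omega
  · have h1 : 2 ≤ a.choose b := by
      obtain ⟨a, rfl⟩ : ∃ a', a = a' + 1 := ⟨a - 1, by omega⟩
      obtain ⟨b, rfl⟩ : ∃ b', b = b' + 1 := ⟨b - 1, by omega⟩
      rw [Nat.choose_succ_succ]
      have := Nat.choose_pos (n := a) (k := b) (by omega)
      have := Nat.choose_pos (n := a) (k := b + 1) (by omega)
      simp only [Nat.succ_eq_add_one] at *
      omega
    have h2 : 1 ≤ a.choose (b + 1) := Nat.choose_pos (by omega)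
    simp only [Nat.succ_eq_add_one] at *
    omega

lemma exp_bound {x y c : ℝ} (hc : 0 ≤ c) (h : y ≤ x) : c * Real.exp (-x) ≤ c * Real.exp (-y) :=
  mul_le_mul_of_nonneg_left (Real.exp_le_exp.2 (by linarith)) hc

lemma fixed_n {k j : ℕ} (hk : 3 ≤ k) (hj : 1 ≤ j) (hjk : j + 1 ≤ k) :
    ∃ e0 : ℝ, 0 < e0 ∧ ∃ W a b : ℝ, 0 < a ∧ 0 < b ∧ ∀ (n : ℕ) (e p δ' : ℝ), 0 < e → e ≤ e0 →
      W ≤ e * n → p = (1 + e) / (((k.choose j : ℝ) - 1) * (n.choose (k - j) : ℝ)) →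
      0 ≤ δ' → δ' ≤ 1 →
      0 ≤ p ∧ p ≤ 1 ∧
      1 - (Real.exp (-(a * (e ^ 3 * n))) + (2 * j + 2) * ((n : ℝ) ^ j * Real.exp (-(b * (δ' ^ 2 * (e ^ 2 * n)))))) ≤
        binomProb n k p (fun H => Good j (e ^ 3 * n) (δ' + j / (e ^ 3 * n)) H) := by
  have hC3 : (3 : ℝ) ≤ k.choose j := by exact_mod_cast choose_ge_three hk hj hjk
  have hk3 : (3 : ℝ) ≤ k := by exact_mod_cast hk
  have hj1 : (1 : ℝ) ≤ j := by exact_mod_cast hj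
  obtain ⟨B, hB⟩ : ∃ B, B = (k.choose j : ℝ) - 1 := ⟨_, rfl⟩
  have hB2 : 2 ≤ B := by linarith
  have hB0 : 0 < B := by linarith
  obtain ⟨A, hA⟩ : ∃ A, A = ((k : ℝ) ^ k) ^ 2 := ⟨_, rfl⟩
  have hA1 : 1 ≤ A := by
    rw [hA]
    exact one_le_pow₀ (one_le_pow₀ (by linarith))
  have hA0 : 0 < A := by linarith
  obtain ⟨Γ, hΓ⟩ : ∃ Γ, Γ = (2 + 2 * (k.choose j : ℝ) * A * 2 ^ j) * (2 * B) := ⟨_, rfl⟩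
  have hΓ0 : 1 ≤ Γ := by rw [hΓ]; exact num_Gam (by positivity) hB2
  obtain ⟨c0, hc⟩ : ∃ c0, c0 = 1 / (16 * A * (2 * Γ) ^ j) := ⟨_, rfl⟩
  have hc0 : 0 < c0 := by rw [hc]; positivity
  have hc1' : c0 * (16 * A * (2 * Γ) ^ j) = 1 := by rw [hc]; field_simp
  have hc2 : 2 * A * c0 ≤ 1 := by
    rw [← hc1']
    have h1 : 1 ≤ (2 * Γ) ^ j := one_le_pow₀ (by linarith)
    have h2 : c0 * (16 * A) * 1 ≤ c0 * (16 * A) * (2 * Γ) ^ j := mul_le_mul_of_nonneg_left h1 (by positivity)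
    have h3 : 0 < A * c0 := by positivity
    linarith
  obtain ⟨β, hβ⟩ : ∃ β, β = 1 / (2 * A * B * (k.choose j * (j + 1) : ℕ)) / (k.choose j * (1 + A)) / 2 := ⟨_, rfl⟩
  have hβ0 : 0 < β := by
    rw [hβ]
    have h1 : (0 : ℝ) < (k.choose j * (j + 1) : ℕ) := by
      exact_mod_cast Nat.mul_pos (Nat.choose_pos (by omega)) (by omega)
    have h2 : (0 : ℝ) < k.choose j := by linarith
    positivity
  obtain ⟨c1, hc1⟩ : ∃ c1, c1 = c0 * β ^ (j + 1) / (16 * k) := ⟨_, rfl⟩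
  have hc10 : 0 < c1 := by rw [hc1]; positivity
  obtain ⟨lam, hlam⟩ : ∃ lam, lam = 1 / (6 * B) / (B + 1) := ⟨_, rfl⟩
  have hlam0 : 0 < lam := by rw [hlam]; positivity
  let b1 := c0 * β ^ j / (160 * k)
  have hb1 : 0 < b1 := by positivity
  refine ⟨min (1 / 16) (min (1 / (6 * B)) (min (c1 / 2) (c0 / 2))), by positivity,
    max (32 * (k : ℝ) ^ 2) (8 / c0), c0 / (128 * B), min (lam * c0) (min b1 (c1 / 8)), by positivity,
    by positivity, ?_⟩
  intro n e p δ' he0 he hW hp hδ0 hδ1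
  obtain ⟨he1, he⟩ := le_min_iff.1 he
  obtain ⟨he2, he⟩ := le_min_iff.1 he
  obtain ⟨he3, he4⟩ := le_min_iff.1 he
  obtain ⟨hW1, hW2⟩ := max_le_iff.1 hW
  have he2' : 6 * B * e ≤ 1 := by rw [le_div_iff₀ (by positivity)] at he2; linarith
  have hW2' : 8 ≤ c0 * e * n := by rw [div_le_iff₀ hc0] at hW2; linarith
  rw [← hB] at hp
  have hn00 : (0 : ℝ) ≤ n := Nat.cast_nonneg _
  have hen : e * n ≤ n := by
    have := mul_le_mul_of_nonneg_right he1 hn00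
    linarith
  have hkk : (0:ℝ) ≤ (k : ℝ) ^ 2 := by positivity
  have hn1 : 16 * (k : ℝ) ^ 2 ≤ n := by linarith
  have hkn' : (k : ℝ) ≤ n := by clear * - hk3 hn1; nlinarith
  have hkn : k ≤ n := by exact_mod_cast hkn'
  have hn : 0 < n := by omega
  have hn0 : (0 : ℝ) < n := by exact_mod_cast hn
  have hn1' : (1 : ℝ) ≤ n := by exact_mod_cast hn
  have hk0 : (0 : ℝ) < k := by linarith
  -- the reserved vertex set
  have hfl := Nat.floor_le (a := e * n / (8 * k)) (by positivity)
  have hfl2 := Nat.lt_floor_add_one (e * n / (8 * k))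
  generalize ⌊e * n / (8 * k)⌋₊ = s at hfl hfl2
  have hsR : (s : ℝ) * (8 * k) ≤ e * n := by rwa [le_div_iff₀ (by positivity)] at hfl
  have hsn : s ≤ n := by
    have h0 : (0 : ℝ) ≤ s := Nat.cast_nonneg _
    have h1 : (s : ℝ) * 1 ≤ s * (8 * k) := mul_le_mul_of_nonneg_left (by linarith) h0
    have : (s : ℝ) ≤ n := by linarith
    exact_mod_cast this
  obtain ⟨R, _, hRc⟩ := Finset.exists_subset_card_eq (s := (Finset.univ : Finset (Fin n))) (n := s) (by simpa using hsn)
  obtain ⟨hp0, hp1, hpA, hpl, hH⟩ := H1_holds hk hj hjk hB hB2 hA hA1 hΓ hc0 hc1'.le hc2 he0 he1 he2'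
    (by linarith) hW2' hp R (by rw [hRc]; exact hsR)
  refine ⟨hp0, hp1, ?_⟩
  have hph1 := phase1 hH (by linarith)
  have hm0 : 0 < e ^ 3 * n := by positivity
  have hRρ : e * n / (16 * k) + k ≤ R.card := by
    rw [hRc]
    have h1 : e * n / (8 * k) = e * n / (16 * k) + e * n / (16 * k) := by field_simp; norm_num
    have h2 : (k : ℝ) + 1 ≤ e * n / (16 * k) := by
      rw [le_div_iff₀ (by positivity)]
      clear * - hW1 hk3
      nlinarith
    linarith
  have hX0 : (0 : ℝ) ≤ c0 * β ^ j * e ^ 2 * n / (32 * k) := by positivity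
  have hph2 : ∀ D : Finset (Finset (Fin n)), c0 * e * (n : ℝ) ^ j / 2 ≤ (D.card : ℝ) → (∀ J ∈ D, J.card = j) →
      Ex (UR n k R) (fun _ => p) (fun H => ind (¬ Tgt j (e ^ 3 * n) (δ' + j / (e ^ 3 * n)) D H)) ≤
      j * ((n : ℝ) ^ j * Real.exp (-(c0 * β ^ j * e ^ 2 * n / (32 * k) / 5))) +
      (n : ℝ) ^ j * (2 * Real.exp (-(δ' ^ 2 * (c1 * e ^ 2 * (n - j + 1 : ℕ)) / 4))) := by
    intro D hD hDj
    rcases Nat.lt_or_ge j 2 with hj2 | hj2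
    · have hj1 : j = 1 := by omega
      subst hj1
      have hS : Sm 1 (e ^ 3 * n) (δ' + (1 : ℕ) / (e ^ 3 * n)) D := by
        apply sm_one hm0
        · push_cast; linarith
        · refine le_trans ?_ hD
          rw [pow_one]
          have h1 : e ^ 2 ≤ c0 / 2 := by
            have : e ^ 2 ≤ e := by rw [pow_two]; exact mul_le_of_le_one_left he0.le (by linarith)
            linarith
          calc e ^ 3 * n = e ^ 2 * (e * n) := by ring
            _ ≤ c0 / 2 * (e * n) := mul_le_mul_of_nonneg_right h1 (by positivity)
            _ = _ := by ring
      refine le_trans (b := 0) ?_ (by positivity)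
      refine le_trans (Ex_mono (g := fun _ => 0) (fun _ _ => ⟨hp0, hp1⟩) ?_) (by rw [Ex_const])
      intro H _
      rw [ind_false]
      exact fun h => h (Tgt.of_sm hS H)
    · exact phase2_holds hj2 hjk hA hA1 hB2 hβ hc0 hc1 hn1 hkn hp0 hp1 hpA hpl he0 (by linarith)
        (by linarith) R rfl hRρ rfl ⟨hδ0, hδ1⟩ hD hDj
  have hmain := combine R hp0 hp1 (by positivity) (by positivity) hph1 hph2
  refine le_trans ?_ hmain
  have hδ2 : δ' ^ 2 ≤ 1 := pow_le_one₀ hδ0 hδ1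
  set b := min (lam * c0) (min b1 (c1 / 8)) with hb
  have hbA : b ≤ lam * c0 := min_le_left _ _
  have hbB : b ≤ b1 := (min_le_right _ _).trans (min_le_left _ _)
  have hbC : b ≤ c1 / 8 := (min_le_right _ _).trans (min_le_right _ _)
  have hb0 : 0 < b := by positivity
  obtain ⟨t, ht⟩ : ∃ t, t = e ^ 2 * n := ⟨_, rfl⟩
  have ht0 : 0 < t := by rw [ht]; positivity
  have hdt : δ' ^ 2 * t ≤ t := mul_le_of_le_one_left ht0.le hδ2
  have hdt0 : 0 ≤ δ' ^ 2 * t := by positivity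
  have ht1 : t ≤ e * n := by
    rw [ht, pow_two, mul_assoc]
    exact mul_le_of_le_one_left (by positivity) (by linarith)
  have hnj0 : (0 : ℝ) ≤ (n : ℝ) ^ j := by positivity
  have hj0 : (0 : ℝ) ≤ j := by linarith
  have hE1 : e * (c0 / (16 * B) * e ^ 2 * n) / 8 = c0 / (128 * B) * (e ^ 3 * n) := by
    field_simp
    norm_num
  have hE2 : b * (δ' ^ 2 * t) ≤ 1 / (6 * B) / (B + 1) * (c0 * e * (n : ℝ) ^ j / (n : ℝ) ^ (j - 1)) := by
    have h1 : c0 * e * (n : ℝ) ^ j / (n : ℝ) ^ (j - 1) = c0 * (e * n) := by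
      obtain ⟨i, rfl⟩ : ∃ i, j = i + 1 := ⟨j - 1, by omega⟩
      rw [Nat.add_sub_cancel, pow_succ]
      field_simp
    rw [h1, ← hlam, ← mul_assoc lam c0]
    exact mul_le_mul hbA (hdt.trans ht1) hdt0 (by positivity)
  have hE3 : b * (δ' ^ 2 * t) ≤ c0 * β ^ j * e ^ 2 * n / (32 * k) / 5 := by
    have h1 : c0 * β ^ j * e ^ 2 * n / (32 * k) / 5 = b1 * t := by
      rw [ht]; simp only [b1]; field_simp; norm_num
    rw [h1]
    exact mul_le_mul hbB hdt hdt0 hb1.le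
  have hE4 : b * (δ' ^ 2 * t) ≤ δ' ^ 2 * (c1 * e ^ 2 * (n - j + 1 : ℕ)) / 4 := by
    have h2 : (n : ℝ) / 2 ≤ (n - j + 1 : ℕ) := by
      have h5 : n ≤ (n - j + 1) + k := by omega
      have h6 : (n : ℝ) ≤ (n - j + 1 : ℕ) + k := by exact_mod_cast h5
      clear * - h6 hn1 hk3
      nlinarith
    have h3 : δ' ^ 2 * (c1 * e ^ 2 * (n / 2)) / 4 ≤ δ' ^ 2 * (c1 * e ^ 2 * (n - j + 1 : ℕ)) / 4 := by
      gcongr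
    refine le_trans ?_ h3
    calc b * (δ' ^ 2 * t) ≤ c1 / 8 * (δ' ^ 2 * t) := mul_le_mul_of_nonneg_right hbC hdt0
      _ = _ := by rw [ht]; ring
  have hF2 := exp_bound (mul_nonneg hj0 hnj0) hE2
  have hF3 := exp_bound (mul_nonneg hj0 hnj0) hE3
  have hF4 := exp_bound (mul_nonneg (zero_le_two (α := ℝ)) hnj0) hE4
  rw [hE1, ← ht]
  linarith


lemma decay (j : ℕ) {b : ℝ} (hb : 0 < b) :
    Tendsto (fun n : ℕ => (n : ℝ) ^ j * Real.exp (-(b * (n : ℝ) ^ ((2 : ℝ) / 15)))) atTop (nhds 0) := by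
  have h1 : Tendsto (fun n : ℕ => (n : ℝ) ^ ((2 : ℝ) / 15)) atTop atTop :=
    (tendsto_rpow_atTop (by norm_num)).comp tendsto_natCast_atTop_atTop
  have h2 := (tendsto_rpow_mul_exp_neg_mul_atTop_nhds_zero ((15 : ℝ) / 2 * j) b hb).comp h1
  refine h2.congr ?_
  intro n
  simp only [Function.comp]
  rw [← Real.rpow_mul (Nat.cast_nonneg n), ← Real.rpow_natCast (n : ℝ) j]
  congr 2
  · ring
  · ring

/-- **Lemma 5 (smooth subset).** For `k ≥ 3`, `1 ≤ j ≤ k-1`, `n^{-1/3} ≪ ε ≪ 1` and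
`p* = (1+ε)/((C(k,j)-1)·C(n,k-j))`, with high probability `H^k(n,p*)` has a `j`-component
containing a subset `S` of `j`-sets such that every `(j-1)`-set of vertices is contained in
`(1 ± o(1))·ε³·n` of the `j`-sets of `S`. -/
theorem smooth_subset_lemma (k j : ℕ) (hk : 3 ≤ k) (hj : 1 ≤ j) (hjk : j ≤ k - 1)
    (ε : ℕ → ℝ)
    (hε1 : Tendsto (fun n : ℕ => ε n * (n : ℝ) ^ ((1 : ℝ) / 3)) atTop atTop)
    (hε2 : Tendsto ε atTop (nhds 0))
    (pstar : ℕ → ℝ)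
    (hp : ∀ n : ℕ, pstar n = (1 + ε n) / (((k.choose j : ℝ) - 1) * (n.choose (k - j) : ℝ))) :
    ∃ δ : ℕ → ℝ, Tendsto δ atTop (nhds 0) ∧
      Tendsto (fun n : ℕ => binomProb n k (pstar n) (fun H =>
          ∃ Comp S : Finset (Finset (Fin n)), IsJComponent n j H Comp ∧ S ⊆ Comp ∧
            ∀ L : Finset (Fin n), L.card = j - 1 →
              |((S.filter (fun J => L ⊆ J)).card : ℝ) - ε n ^ 3 * n| ≤
                δ n * (ε n ^ 3 * n)))
        atTop (nhds 1) := by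
  obtain ⟨e0, he0, W, a, b, ha, hb, hfix⟩ := fixed_n hk hj (by omega : j + 1 ≤ k)
  have hm : Tendsto (fun n : ℕ => ε n ^ 3 * n) atTop atTop := by
    have h1 := (tendsto_pow_atTop (n := 3) (by norm_num)).comp hε1
    refine h1.congr ?_
    intro n
    simp only [Function.comp]
    rw [mul_pow, ← Real.rpow_natCast ((n : ℝ) ^ ((1 : ℝ) / 3)) 3, ← Real.rpow_mul (Nat.cast_nonneg n)]
    norm_num
  have hδ' : Tendsto (fun n : ℕ => (n : ℝ) ^ (-((1 : ℝ) / 10))) atTop (nhds 0) :=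
    (tendsto_rpow_neg_atTop (by norm_num)).comp tendsto_natCast_atTop_atTop
  refine ⟨fun n => (n : ℝ) ^ (-((1 : ℝ) / 10)) + j / (ε n ^ 3 * n), ?_, ?_⟩
  · have h2 : Tendsto (fun n : ℕ => (j : ℝ) / (ε n ^ 3 * n)) atTop (nhds 0) := hm.const_div_atTop _
    simpa using hδ'.add h2
  have hev1 : ∀ᶠ n : ℕ in atTop, 1 ≤ ε n * (n : ℝ) ^ ((1 : ℝ) / 3) := hε1.eventually_ge_atTop 1
  have hev2 : ∀ᶠ n : ℕ in atTop, ε n ≤ e0 := (hε2.eventually_lt_const he0).mono fun _ h => h.le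
  have hn23 : Tendsto (fun n : ℕ => (n : ℝ) ^ ((2 : ℝ) / 3)) atTop atTop :=
    (tendsto_rpow_atTop (by norm_num)).comp tendsto_natCast_atTop_atTop
  have hev3 := hn23.eventually_ge_atTop W
  have hlim : Tendsto (fun n : ℕ => 1 - (Real.exp (-(a * (ε n ^ 3 * n))) + (2 * j + 2) *
      ((n : ℝ) ^ j * Real.exp (-(b * (n : ℝ) ^ ((2 : ℝ) / 15)))))) atTop (nhds 1) := by
    have h1 : Tendsto (fun n : ℕ => Real.exp (-(a * (ε n ^ 3 * n)))) atTop (nhds 0) :=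
      Real.tendsto_exp_neg_atTop_nhds_zero.comp (hm.const_mul_atTop ha)
    have h2 := (decay j hb).const_mul (2 * (j : ℝ) + 2)
    have h3 := (h1.add h2).const_sub 1
    simpa using h3
  have hall : ∀ᶠ n : ℕ in atTop, (0 ≤ pstar n ∧ pstar n ≤ 1) ∧
      1 - (Real.exp (-(a * (ε n ^ 3 * n))) + (2 * j + 2) *
      ((n : ℝ) ^ j * Real.exp (-(b * (n : ℝ) ^ ((2 : ℝ) / 15))))) ≤
      binomProb n k (pstar n) (fun H =>
        Good j (ε n ^ 3 * n) ((n : ℝ) ^ (-((1 : ℝ) / 10)) + j / (ε n ^ 3 * n)) H) := by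
    filter_upwards [hev1, hev2, hev3, eventually_ge_atTop 1] with n h1 h2 h3 h4
    have hn1 : (1 : ℝ) ≤ n := by exact_mod_cast h4
    have hn0 : (0 : ℝ) < n := by linarith
    have hr0 : 0 < (n : ℝ) ^ ((1 : ℝ) / 3) := Real.rpow_pos_of_pos hn0 _
    have hε0 : 0 < ε n := by
      by_contra hneg
      have := mul_nonpos_of_nonpos_of_nonneg (not_lt.1 hneg) hr0.le
      linarith
    have hsplit : (n : ℝ) ^ ((1 : ℝ) / 3) * (n : ℝ) ^ ((2 : ℝ) / 3) = n := by
      rw [← Real.rpow_add hn0]; norm_num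
    have hr20 : 0 < (n : ℝ) ^ ((2 : ℝ) / 3) := Real.rpow_pos_of_pos hn0 _
    have hen : (n : ℝ) ^ ((2 : ℝ) / 3) ≤ ε n * n := by
      calc (n : ℝ) ^ ((2 : ℝ) / 3) = 1 * (n : ℝ) ^ ((2 : ℝ) / 3) := (one_mul _).symm
        _ ≤ (ε n * (n : ℝ) ^ ((1 : ℝ) / 3)) * (n : ℝ) ^ ((2 : ℝ) / 3) := mul_le_mul_of_nonneg_right h1 hr20.le
        _ = _ := by rw [mul_assoc, hsplit]
    have hen2 : (n : ℝ) ^ ((1 : ℝ) / 3) ≤ ε n ^ 2 * n := by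
      have hs : (n : ℝ) ^ ((1 : ℝ) / 3) * (n : ℝ) ^ ((1 : ℝ) / 3) = (n : ℝ) ^ ((2 : ℝ) / 3) := by
        rw [← Real.rpow_add hn0]; norm_num
      have h5 : ε n ^ 2 * n = (ε n * (n : ℝ) ^ ((1 : ℝ) / 3)) ^ 2 * (n : ℝ) ^ ((1 : ℝ) / 3) := by
        rw [mul_pow, pow_two ((n : ℝ) ^ ((1 : ℝ) / 3)), hs, mul_assoc, mul_comm ((n : ℝ) ^ ((2 : ℝ) / 3)), hsplit]
      rw [h5]
      exact le_mul_of_one_le_left hr0.le (one_le_pow₀ h1)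
    have hd0 : 0 ≤ (n : ℝ) ^ (-((1 : ℝ) / 10)) := Real.rpow_nonneg hn0.le _
    obtain ⟨q0, q1, q2⟩ := hfix n (ε n) (pstar n) ((n : ℝ) ^ (-((1 : ℝ) / 10))) hε0 h2 (h3.trans hen) (hp n)
      hd0 (Real.rpow_le_one_of_one_le_of_nonpos hn1 (by norm_num))
    refine ⟨⟨q0, q1⟩, le_trans ?_ q2⟩
    have hx : (n : ℝ) ^ ((2 : ℝ) / 15) ≤ ((n : ℝ) ^ (-((1 : ℝ) / 10))) ^ 2 * (ε n ^ 2 * n) := by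
      have h6 : (n : ℝ) ^ ((2 : ℝ) / 15) = ((n : ℝ) ^ (-((1 : ℝ) / 10))) ^ 2 * (n : ℝ) ^ ((1 : ℝ) / 3) := by
        rw [← Real.rpow_natCast _ 2, ← Real.rpow_mul hn0.le, ← Real.rpow_add hn0]
        norm_num
      rw [h6]
      exact mul_le_mul_of_nonneg_left hen2 (by positivity)
    have hy := exp_bound (c := (2 * (j : ℝ) + 2) * (n : ℝ) ^ j) (by positivity)
      (mul_le_mul_of_nonneg_left hx hb.le)
    linarith
  refine tendsto_of_tendsto_of_tendsto_of_le_of_le' hlim tendsto_const_nhds ?_ ?_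
  · filter_upwards [hall] with n h
    exact h.2
  · filter_upwards [hall] with n h
    exact binomProb_le_one h.1.1 h.1.2 _

end
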